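/- Let d ≥ 2 be an integer, α ∈ (0,1), β > (2α−1)/(d−1), and set δ_* := min{1−α, (d−1)β+1−2α} > 0. Let b_L : (0,∞) → (0,∞) and b_N : (0,∞) → ℝ be bounded and differentiable with, as r → 0⁺: b_L(r)/r^{2α} → 1, b_N(r)/r^{2α} → β, b_L'(r)/r^{2α−1} → 2α, and b_N'(r)/r^{2α−1} → 2αβ. Then for every δ ∈ (0,δ_*) and every ε̄ > 0 there exist ε ∈ (0,ε̄), l > 0 and C > 0 with the following property. Let κ ∈ (0,1/2) and let f : (0,∞) × [0,∞) → ℝ be bounded and continuous, differentiable in its first (time) variable on (0,∞) × (0,∞), such that for every t > 0 the map r ↦ f(t,r) is twice continuously differentiable on [0,∞) with ∂_r f(t,0) = 0, and such that for all t > 0, r > 0: ∂_t f(t,r) = (1−κ) b_L(r) ∂_r² f(t,r) + (1−κ) ((d−1)/r) b_N(r) ∂_r f(t,r) + 2κ ( ∂_r² f(t,r) + ((d−1)/r) ∂_r f(t,r) ). Then for every t > 0: ∫₀^t ( sup_{0<r<l} |f(s,r) − f(s,0)| / r^{2−2α−δ} )^{1−ε} ds ≤ C (1+t) ( sup_{s>0,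 r≥0} |f(s,r)| )^{1−ε}. -/

import Mathlib

open MeasureTheory Set Filter
open scoped ENNReal

/-! Write `D = d - 1` and `w r = r ^ (2α - 2) + κ r⁻²`, so that the diffusivity is comparable to
`r² w` uniformly in `κ`. As `|f r - f 0| / r ^ γ ≤ ∫ s ^ (-γ) |∂ᵣf| ds` and `r ^ (-γ) ≤ r ^ δ w` for
`γ = 2 - 2α - δ`, it suffices to bound `∂ᵣf` in space-time in `L¹` with weight `r ^ δ w`.
Differentiate the equation in `r` and test it with `r ^ δ sgn ∂ᵣf` times cutoffs in space and time:
since `δ < Dβ + 1 - 2α`, the adjoint operator maps `r ^ δ` below `-c r ^ δ w`. With the time cutoff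
`t w / (1 + t w)` all errors carry the damped weight `N = w / (1 + t w)`. The integral of
`r ^ δ N |∂ᵣf|` is controlled by an energy estimate for bounded solutions and Cauchy-Schwarz,
because `∂ₜN = -N²` has a good sign and `∫ N dt = log (1 + w)` is integrable against `r ^ (δ - 1)`.
For `κ > 0` one has `|∂ᵣf| ≤ K r` near the origin, so the boundary terms there vanish in the limit.

The derivatives that these computations need exist after averaging `f` twice in time; Fatou's lemma
removes the averaging, and `[0, t]` is covered by unit intervals. -/

open Function Topology

namespace DegenerateParabolic

section Rectangle

variable {t₀ t₁ x₀ x₁ : ℝ} {E : ℝ → ℝ → ℝ}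

theorem integrableOn_rectangle (hE : ContinuousOn (uncurry E) (Icc t₀ t₁ ×ˢ Icc x₀ x₁)) :
    IntegrableOn (uncurry E) (Icc t₀ t₁ ×ˢ Icc x₀ x₁) :=
  hE.integrableOn_compact (isCompact_Icc.prod isCompact_Icc)

theorem continuousOn_intervalIntegral_of_uncurry {X : Type*} [TopologicalSpace X] {S : Set X}
    {F : X → ℝ → ℝ} (hx : x₀ ≤ x₁) (hF : ContinuousOn (uncurry F) (S ×ˢ Icc x₀ x₁)) :
    ContinuousOn (fun y => ∫ r in x₀..x₁, F y r) S := by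
  have extended : Continuous (uncurry fun (y : S) r => F y (projIcc x₀ x₁ hx r)) :=
    hF.comp_continuous (f := fun q : S × ℝ => ((q.1 : X), (projIcc x₀ x₁ hx q.2 : ℝ)))
      (by fun_prop) fun q => ⟨q.1.2, (projIcc x₀ x₁ hx q.2).2⟩
  rw [continuousOn_iff_continuous_domRestrict]
  refine (intervalIntegral.continuous_parametric_intervalIntegral_of_continuous'
    (μ := volume) extended x₀ x₁).congr fun y => intervalIntegral.integral_congr fun r hr => ?_
  rw [uIcc_of_le hx] at hr
  simp only [projIcc_of_mem hx hr]

theorem setIntegral_rectangle (ht : t₀ ≤ t₁) (hx : x₀ ≤ x₁)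
    (hE : ContinuousOn (uncurry E) (Icc t₀ t₁ ×ˢ Icc x₀ x₁)) :
    ∫ p in Icc t₀ t₁ ×ˢ Icc x₀ x₁, uncurry E p = ∫ t in t₀..t₁, ∫ r in x₀..x₁, E t r := by
  rw [Measure.volume_eq_prod, setIntegral_prod _ (integrableOn_rectangle hE),
    intervalIntegral.integral_of_le ht, integral_Icc_eq_integral_Ioc]
  simp only [intervalIntegral.integral_of_le hx, integral_Icc_eq_integral_Ioc, uncurry_apply_pair]

theorem setIntegral_rectangle_swap (ht : t₀ ≤ t₁) (hx : x₀ ≤ x₁)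
    (hE : ContinuousOn (uncurry E) (Icc t₀ t₁ ×ˢ Icc x₀ x₁)) :
    ∫ p in Icc t₀ t₁ ×ˢ Icc x₀ x₁, uncurry E p = ∫ r in x₀..x₁, ∫ t in t₀..t₁, E t r := by
  rw [setIntegral_rectangle ht hx hE]
  refine intervalIntegral_intervalIntegral_swap ((integrableOn_rectangle hE).mono_set ?_)
  rw [uIoc_of_le ht, uIoc_of_le hx]
  exact prod_mono Ioc_subset_Icc_self Ioc_subset_Icc_self

theorem setIntegral_const_mul_sub_const_mul {G M : ℝ → ℝ → ℝ}
    (cG : ContinuousOn (uncurry G) (Icc t₀ t₁ ×ˢ Icc x₀ x₁))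
    (cM : ContinuousOn (uncurry M) (Icc t₀ t₁ ×ˢ Icc x₀ x₁)) (k k' : ℝ) :
    ∫ p in Icc t₀ t₁ ×ˢ Icc x₀ x₁, uncurry (fun t r => k * G t r - k' * M t r) p
      = k * (∫ p in Icc t₀ t₁ ×ˢ Icc x₀ x₁, uncurry G p)
        - k' * ∫ p in Icc t₀ t₁ ×ˢ Icc x₀ x₁, uncurry M p := by
  rw [← integral_const_mul, ← integral_const_mul]
  exact integral_sub ((integrableOn_rectangle cG).const_mul k)
    ((integrableOn_rectangle cM).const_mul k')

theorem setIntegral_le_of_add_deriv_le_deriv {H Ht Q Qr : ℝ → ℝ → ℝ} {b : ℝ}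
    (ht : t₀ ≤ t₁) (hx : x₀ ≤ x₁)
    (hH : ∀ t ∈ Icc t₀ t₁, ∀ r ∈ Icc x₀ x₁, HasDerivAt (fun τ => H τ r) (Ht t r) t)
    (hQ : ∀ t ∈ Icc t₀ t₁, ∀ r ∈ Icc x₀ x₁, HasDerivAt (Q t) (Qr t r) r)
    (cHt : ContinuousOn (uncurry Ht) (Icc t₀ t₁ ×ˢ Icc x₀ x₁))
    (cE : ContinuousOn (uncurry E) (Icc t₀ t₁ ×ˢ Icc x₀ x₁))
    (hle : ∀ t ∈ Icc t₀ t₁, ∀ r ∈ Icc x₀ x₁, E t r + Ht t r ≤ Qr t r)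
    (hb : ∀ t ∈ Icc t₀ t₁, Q t x₁ - Q t x₀ ≤ b) :
    ∫ p in Icc t₀ t₁ ×ˢ Icc x₀ x₁, uncurry E p
      ≤ (t₁ - t₀) * b + ∫ r in x₀..x₁, (H t₀ r - H t₁ r) := by
  have cSum : ContinuousOn (uncurry fun t r => E t r + Ht t r) (Icc t₀ t₁ ×ˢ Icc x₀ x₁) := by
    fun_prop
  have in_space : ∫ p in Icc t₀ t₁ ×ˢ Icc x₀ x₁, uncurry (fun t r => E t r + Ht t r) p
      ≤ (t₁ - t₀) * b := by
    rw [setIntegral_rectangle ht hx cSum, ← smul_eq_mul, ← intervalIntegral.integral_const]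
    refine intervalIntegral.integral_mono_on ht
      ((continuousOn_intervalIntegral_of_uncurry hx cSum).intervalIntegrable_of_Icc ht)
      intervalIntegrable_const fun t htI => (hb t htI).trans' ?_
    exact intervalIntegral.integral_le_sub_of_hasDeriv_right_of_le hx
      (fun r hr => (hQ t htI r hr).continuousAt.continuousWithinAt)
      (fun r hr => (hQ t htI r (Ioo_subset_Icc_self hr)).hasDerivWithinAt)
      ((cSum.uncurry_left t htI).integrableOn_compact isCompact_Icc)
      fun r hr => hle t htI r (Ioo_subset_Icc_self hr)
  have in_time : ∫ p in Icc t₀ t₁ ×ˢ Icc x₀ x₁, uncurry Ht p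
      = ∫ r in x₀..x₁, (H t₁ r - H t₀ r) := by
    rw [setIntegral_rectangle_swap ht hx cHt]
    refine intervalIntegral.integral_congr fun r hr => ?_
    rw [uIcc_of_le hx] at hr
    refine intervalIntegral.integral_eq_sub_of_hasDerivAt (f := fun t => H t r) (fun t htI => ?_)
      ((cHt.uncurry_right r hr).intervalIntegrable_of_Icc ht)
    rw [uIcc_of_le ht] at htI
    exact hH t htI r hr
  have split : ∫ p in Icc t₀ t₁ ×ˢ Icc x₀ x₁, uncurry (fun t r => E t r + Ht t r) p
      = (∫ p in Icc t₀ t₁ ×ˢ Icc x₀ x₁, uncurry E p)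
        + ∫ p in Icc t₀ t₁ ×ˢ Icc x₀ x₁, uncurry Ht p :=
    integral_add (integrableOn_rectangle cE) (integrableOn_rectangle cHt)
  have reverse : ∫ r in x₀..x₁, (H t₀ r - H t₁ r) = -∫ r in x₀..x₁, (H t₁ r - H t₀ r) := by
    simp only [← intervalIntegral.integral_neg, neg_sub]
  linarith

end Rectangle

section Estimates

/-- `u` solves `∂ₜu = a ∂ᵣ²u + c ∂ᵣu` on `I × J`, with `g = ∂ᵣu`, `gr = ∂ᵣ²u`, `ut = ∂ₜu` and
`gt = ∂ₜ∂ᵣu = ∂ᵣ∂ₜu`, where `u`, `g`, `ut` and `gt` are jointly continuous. -/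
structure IsRegularSolution (a c : ℝ → ℝ) (I J : Set ℝ) (u g gr ut gt : ℝ → ℝ → ℝ) : Prop where
  hasDerivAt_time : ∀ t ∈ I, ∀ r ∈ J, HasDerivAt (fun τ => u τ r) (ut t r) t
  hasDerivAt_space : ∀ t ∈ I, ∀ r ∈ J, HasDerivAt (u t) (g t r) r
  slope_hasDerivAt_time : ∀ t ∈ I, ∀ r ∈ J, HasDerivAt (fun τ => g τ r) (gt t r) t
  slope_hasDerivAt_space : ∀ t ∈ I, ∀ r ∈ J, HasDerivAt (g t) (gr t r) r
  speed_hasDerivAt_space : ∀ t ∈ I, ∀ r ∈ J, HasDerivAt (ut t) (gt t r) r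
  equation : ∀ t ∈ I, ∀ r ∈ J, ut t r = a r * gr t r + c r * g t r
  continuousOn : ContinuousOn (uncurry u) (I ×ˢ J)
  continuousOn_slope : ContinuousOn (uncurry g) (I ×ˢ J)
  continuousOn_speed : ContinuousOn (uncurry ut) (I ×ˢ J)
  continuousOn_mixed : ContinuousOn (uncurry gt) (I ×ˢ J)

theorem IsRegularSolution.mono {a c : ℝ → ℝ} {I J I' J' : Set ℝ} {u g gr ut gt : ℝ → ℝ → ℝ}
    (hu : IsRegularSolution a c I J u g gr ut gt) (hI : I' ⊆ I) (hJ : J' ⊆ J) :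
    IsRegularSolution a c I' J' u g gr ut gt where
  hasDerivAt_time t ht r hr := hu.hasDerivAt_time t (hI ht) r (hJ hr)
  hasDerivAt_space t ht r hr := hu.hasDerivAt_space t (hI ht) r (hJ hr)
  slope_hasDerivAt_time t ht r hr := hu.slope_hasDerivAt_time t (hI ht) r (hJ hr)
  slope_hasDerivAt_space t ht r hr := hu.slope_hasDerivAt_space t (hI ht) r (hJ hr)
  speed_hasDerivAt_space t ht r hr := hu.speed_hasDerivAt_space t (hI ht) r (hJ hr)
  equation t ht r hr := hu.equation t (hI ht) r (hJ hr)
  continuousOn := hu.continuousOn.mono (prod_mono hI hJ)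
  continuousOn_slope := hu.continuousOn_slope.mono (prod_mono hI hJ)
  continuousOn_speed := hu.continuousOn_speed.mono (prod_mono hI hJ)
  continuousOn_mixed := hu.continuousOn_mixed.mono (prod_mono hI hJ)

theorem mapsTo_snd_prod (I J : Set ℝ) : MapsTo (fun p : ℝ × ℝ => p.2) (I ×ˢ J) J :=
  fun _ hp => hp.2

theorem abs_mul_le_half_add_of_sq_le {e W P u g B : ℝ} (hW : 0 ≤ W) (hP : 0 ≤ P)
    (he : e ^ 2 ≤ W * P) (hu : |u| ≤ B) :
    |e * u * g| ≤ W * g ^ 2 / 2 + P * B ^ 2 / 2 := by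
  have u_sq : u ^ 2 ≤ B ^ 2 := sq_le_sq.2 (hu.trans (le_abs_self B))
  have young : |e * u * g| ≤ (W * g ^ 2 + P * u ^ 2) / 2 := by
    refine abs_le_of_sq_le_sq ?_ (by positivity)
    calc (e * u * g) ^ 2 = e ^ 2 * (u * g) ^ 2 := by ring
      _ ≤ W * P * (u * g) ^ 2 := by gcongr
      _ ≤ ((W * g ^ 2 + P * u ^ 2) / 2) ^ 2 := by
        linarith [sq_nonneg (W * g ^ 2 - P * u ^ 2)]
  linarith [mul_le_mul_of_nonneg_left u_sq hP]

theorem energy_density_le {a c W Wt Wr P B u ut g gr : ℝ} (ha : 0 < a) (hW : 0 ≤ W)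
    (hWt : Wt ≤ 0) (hP : 0 ≤ P) (hsq : (Wr - W * c / a) ^ 2 ≤ W * P) (hu : |u| ≤ B)
    (equation : ut = a * gr + c * g) :
    1 / 2 * (W * g ^ 2) - B ^ 2 / 2 * P + (Wt / a * u ^ 2 / 2 + W / a * u * ut)
      ≤ (Wr * u + W * g) * g + W * u * gr := by
  have young := abs_mul_le_half_add_of_sq_le (g := g) hW hP hsq hu
  have decay : Wt / a * u ^ 2 ≤ 0 := mul_nonpos_of_nonpos_of_nonneg
    (div_nonpos_of_nonpos_of_nonneg hWt ha.le) (sq_nonneg u)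
  have identity : W / a * u * ut = W * u * gr + W * c / a * u * g := by
    rw [equation]
    field_simp
  rw [identity]
  linarith [neg_abs_le ((Wr - W * c / a) * u * g)]

theorem neg_mul_mul_le {W u g B b : ℝ} (hW : 0 ≤ W) (hu : |u| ≤ B) (hg : W * |g| ≤ b) :
    -(W * u * g) ≤ B * b := by
  calc -(W * u * g) ≤ |W * u * g| := neg_le_abs _
    _ = |u| * (W * |g|) := by rw [abs_mul, abs_mul, abs_of_nonneg hW]; ring
    _ ≤ B * b := mul_le_mul hu hg (by positivity) ((abs_nonneg u).trans hu)

theorem intervalIntegral_mul_sq_sub_le {x₀ x₁ B : ℝ} {w₀ w₁ u₀ u₁ : ℝ → ℝ} (hx : x₀ ≤ x₁)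
    (cw₀ : ContinuousOn w₀ (Icc x₀ x₁)) (cw₁ : ContinuousOn w₁ (Icc x₀ x₁))
    (cu₀ : ContinuousOn u₀ (Icc x₀ x₁)) (cu₁ : ContinuousOn u₁ (Icc x₀ x₁))
    (w₀_nonneg : ∀ r ∈ Icc x₀ x₁, 0 ≤ w₀ r) (w₁_nonneg : ∀ r ∈ Icc x₀ x₁, 0 ≤ w₁ r)
    (hB : ∀ r ∈ Icc x₀ x₁, |u₀ r| ≤ B) :
    ∫ r in x₀..x₁, (w₀ r * u₀ r ^ 2 / 2 - w₁ r * u₁ r ^ 2 / 2)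
      ≤ B ^ 2 / 2 * ∫ r in x₀..x₁, w₀ r := by
  rw [← intervalIntegral.integral_const_mul]
  refine intervalIntegral.integral_mono_on hx
    (ContinuousOn.intervalIntegrable_of_Icc hx (by fun_prop))
    (ContinuousOn.intervalIntegrable_of_Icc hx (by fun_prop)) fun r hr => ?_
  have final_nonneg := mul_nonneg (w₁_nonneg r hr) (sq_nonneg (u₁ r))
  have initial_le := mul_le_mul_of_nonneg_left
    (sq_le_sq.2 ((hB r hr).trans (le_abs_self B))) (w₀_nonneg r hr)
  linarith

variable {t₀ t₁ x₀ x₁ : ℝ} {a c : ℝ → ℝ} {u g gr ut gt : ℝ → ℝ → ℝ}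

/-- A weight for the energy estimate: `W ≥ 0` on `[t₀, t₁] × [x₀, x₁]` is nonincreasing in time,
vanishes at `x₁`, and its drift `∂ᵣW - W c / a` is dominated by the geometric mean of `W` and `P`.
Here `Wt = ∂ₜW` and `Wr = ∂ᵣW`. -/
structure IsEnergyWeight (a c : ℝ → ℝ) (t₀ t₁ x₀ x₁ : ℝ) (W Wt Wr P : ℝ → ℝ → ℝ) : Prop where
  hasDerivAt_time : ∀ t ∈ Icc t₀ t₁, ∀ r ∈ Icc x₀ x₁, HasDerivAt (fun τ => W τ r) (Wt t r) t
  hasDerivAt_space : ∀ t ∈ Icc t₀ t₁, ∀ r ∈ Icc x₀ x₁, HasDerivAt (W t) (Wr t r) r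
  continuousOn : ContinuousOn (uncurry W) (Icc t₀ t₁ ×ˢ Icc x₀ x₁)
  continuousOn_speed : ContinuousOn (uncurry Wt) (Icc t₀ t₁ ×ˢ Icc x₀ x₁)
  continuousOn_bound : ContinuousOn (uncurry P) (Icc t₀ t₁ ×ˢ Icc x₀ x₁)
  nonneg : ∀ t ∈ Icc t₀ t₁, ∀ r ∈ Icc x₀ x₁, 0 ≤ W t r
  speed_nonpos : ∀ t ∈ Icc t₀ t₁, ∀ r ∈ Icc x₀ x₁, Wt t r ≤ 0
  bound_nonneg : ∀ t ∈ Icc t₀ t₁, ∀ r ∈ Icc x₀ x₁, 0 ≤ P t r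
  drift_sq_le : ∀ t ∈ Icc t₀ t₁, ∀ r ∈ Icc x₀ x₁,
    (Wr t r - W t r * c r / a r) ^ 2 ≤ W t r * P t r
  right_eq_zero : ∀ t ∈ Icc t₀ t₁, W t x₁ = 0

/-- Test the equation with `(W / a) u`. -/
theorem setIntegral_weight_mul_slope_sq_le {W Wt Wr P : ℝ → ℝ → ℝ} {B b : ℝ}
    (hu : IsRegularSolution a c (Icc t₀ t₁) (Icc x₀ x₁) u g gr ut gt)
    (hW : IsEnergyWeight a c t₀ t₁ x₀ x₁ W Wt Wr P)
    (ht : t₀ ≤ t₁) (hx : x₀ ≤ x₁) (ca : ContinuousOn a (Icc x₀ x₁))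
    (a_pos : ∀ r ∈ Icc x₀ x₁, 0 < a r)
    (hB : ∀ t ∈ Icc t₀ t₁, ∀ r ∈ Icc x₀ x₁, |u t r| ≤ B)
    (hb : ∀ t ∈ Icc t₀ t₁, W t x₀ * |g t x₀| ≤ b) :
    ∫ p in Icc t₀ t₁ ×ˢ Icc x₀ x₁, uncurry (fun t r => W t r * g t r ^ 2) p
      ≤ 2 * (t₁ - t₀) * (B * b) + B ^ 2 * ((∫ r in x₀..x₁, W t₀ r / a r)
        + ∫ p in Icc t₀ t₁ ×ˢ Icc x₀ x₁, uncurry P p) := by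
  have ht₀ := left_mem_Icc.2 ht
  have ht₁ := right_mem_Icc.2 ht
  have hx₀ := left_mem_Icc.2 hx
  have cu := hu.continuousOn
  have cg := hu.continuousOn_slope
  have cut := hu.continuousOn_speed
  have cW := hW.continuousOn
  have cWt := hW.continuousOn_speed
  have cP := hW.continuousOn_bound
  have a_ne : ∀ p ∈ Icc t₀ t₁ ×ˢ Icc x₀ x₁, a p.2 ≠ 0 := fun p hp => (a_pos _ hp.2).ne'
  have a_ne' : ∀ r ∈ Icc x₀ x₁, a r ≠ 0 := fun r hr => (a_pos r hr).ne'
  have snd_mem := mapsTo_snd_prod (Icc t₀ t₁) (Icc x₀ x₁)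
  have green := setIntegral_le_of_add_deriv_le_deriv
    (E := fun t r => 1 / 2 * (W t r * g t r ^ 2) - B ^ 2 / 2 * P t r)
    (H := fun t r => W t r / a r * u t r ^ 2 / 2)
    (Ht := fun t r => Wt t r / a r * u t r ^ 2 / 2 + W t r / a r * u t r * ut t r)
    (Q := fun t r => W t r * u t r * g t r)
    (Qr := fun t r => (Wr t r * u t r + W t r * g t r) * g t r + W t r * u t r * gr t r)
    (b := B * b) ht hx
    (fun t ht r hr => ((((hW.hasDerivAt_time t ht r hr).div_const (a r)).fun_mul
      ((hu.hasDerivAt_time t ht r hr).fun_pow 2)).div_const 2).congr_deriv (by simp; ring))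
    (fun t ht r hr => ((hW.hasDerivAt_space t ht r hr).fun_mul
      (hu.hasDerivAt_space t ht r hr)).fun_mul (hu.slope_hasDerivAt_space t ht r hr))
    (by fun_prop (disch := assumption)) (by fun_prop) ?_ ?_
  · have split := setIntegral_const_mul_sub_const_mul (G := fun t r => W t r * g t r ^ 2)
      (by fun_prop) cP (1 / 2) (B ^ 2 / 2)
    have initial := intervalIntegral_mul_sq_sub_le
      (w₀ := fun r => W t₀ r / a r) (w₁ := fun r => W t₁ r / a r) hx
      ((cW.uncurry_left t₀ ht₀).div ca a_ne') ((cW.uncurry_left t₁ ht₁).div ca a_ne')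
      (cu.uncurry_left t₀ ht₀) (cu.uncurry_left t₁ ht₁)
      (fun r hr => div_nonneg (hW.nonneg t₀ ht₀ r hr) (a_pos r hr).le)
      (fun r hr => div_nonneg (hW.nonneg t₁ ht₁ r hr) (a_pos r hr).le) (hB t₀ ht₀)
    linarith
  · exact fun t ht r hr => energy_density_le (a_pos r hr) (hW.nonneg t ht r hr)
      (hW.speed_nonpos t ht r hr) (hW.bound_nonneg t ht r hr) (hW.drift_sq_le t ht r hr)
      (hB t ht r hr) (hu.equation t ht r hr)
  · intro t ht
    rw [hW.right_eq_zero t ht, zero_mul, zero_mul, zero_sub]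
    exact neg_mul_mul_le (hW.nonneg t ht x₀ hx₀) (hB t ht x₀ hx₀) (hb t ht)

end Estimates

theorem le_of_forall_pos_le_add_mul {x y k : ℝ} (h : ∀ e > 0, x ≤ y + e * k) : x ≤ y := by
  have limit : Tendsto (fun e : ℝ => y + e * k) (𝓝[>] 0) (𝓝 y) :=
    ((by fun_prop : Continuous fun e : ℝ => y + e * k).tendsto' 0 y (by simp)).mono_left
      nhdsWithin_le_nhds
  exact ge_of_tendsto limit (eventually_mem_nhdsWithin.mono h)

section Kato

/-- The smooth approximation `√(x² + e²)` of the absolute value `|x|`. -/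
noncomputable def softAbs (e x : ℝ) : ℝ := √(x ^ 2 + e ^ 2)

variable {e x : ℝ}

theorem softAbs_sq (e x : ℝ) : softAbs e x ^ 2 = x ^ 2 + e ^ 2 := Real.sq_sqrt (by positivity)

theorem softAbs_pos (he : 0 < e) (x : ℝ) : 0 < softAbs e x := Real.sqrt_pos.2 (by positivity)

theorem abs_le_softAbs (e x : ℝ) : |x| ≤ softAbs e x :=
  Real.abs_le_sqrt (by linarith [sq_nonneg e])

theorem le_softAbs (e x : ℝ) : e ≤ softAbs e x := Real.le_sqrt_of_sq_le (by linarith [sq_nonneg x])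

theorem softAbs_le (he : 0 ≤ e) (x : ℝ) : softAbs e x ≤ |x| + e :=
  Real.sqrt_le_left (by positivity) |>.2 <| by
    nlinarith [sq_abs x, mul_nonneg (abs_nonneg x) he]

theorem continuous_softAbs (e : ℝ) : Continuous (softAbs e) := by
  unfold softAbs
  fun_prop

theorem hasDerivAt_softAbs {f : ℝ → ℝ} {f' s : ℝ} (hf : HasDerivAt f f' s) (he : 0 < e) :
    HasDerivAt (fun s => softAbs e (f s)) (f s * f' / softAbs e (f s)) s :=
  (((hf.fun_pow 2).add_const (e ^ 2)).sqrt (by positivity)).congr_deriv (by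
    simp only [softAbs]
    field_simp
    ring)

theorem hasDerivAt_div_softAbs {f : ℝ → ℝ} {f' s : ℝ} (hf : HasDerivAt f f' s) (he : 0 < e) :
    HasDerivAt (fun s => f s / softAbs e (f s))
      (f' * e ^ 2 / softAbs e (f s) ^ 3) s :=
  (hf.fun_div (hasDerivAt_softAbs hf he) (softAbs_pos he _).ne').congr_deriv (by
    have := softAbs_pos he (f s)
    field_simp
    rw [softAbs_sq]
    ring)

theorem neg_mul_le_quadratic_mul {a c φ g gr : ℝ} (ha : 0 < a) (hφ : 0 ≤ φ) (he : 0 < e) :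
    -(e * (φ * c ^ 2 / (4 * a)))
      ≤ φ * (e ^ 2 / softAbs e g ^ 3) * (a * gr ^ 2 + c * g * gr) := by
  have j_pos := softAbs_pos he g
  have j_sq := softAbs_sq e g
  have e_le := le_softAbs e g
  set j := softAbs e g
  have square : -(c ^ 2 * g ^ 2 / (4 * a)) ≤ a * gr ^ 2 + c * g * gr := by
    have complete : a * gr ^ 2 + c * g * gr + c ^ 2 * g ^ 2 / (4 * a)
        = (2 * a * gr + c * g) ^ 2 / (4 * a) := by
      field_simp
      ring
    rw [neg_le_iff_add_nonneg, complete]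
    positivity
  have ratio : e ^ 2 / j ^ 3 * g ^ 2 ≤ e := by
    rw [div_mul_eq_mul_div, div_le_iff₀ (by positivity)]
    nlinarith [mul_le_mul_of_nonneg_left e_le (by positivity : 0 ≤ e * j ^ 2),
      mul_nonneg he.le (mul_nonneg he.le (sq_nonneg e))]
  calc -(e * (φ * c ^ 2 / (4 * a)))
      ≤ -(e ^ 2 / j ^ 3 * g ^ 2 * (φ * c ^ 2 / (4 * a))) := by gcongr
    _ = φ * (e ^ 2 / j ^ 3) * -(c ^ 2 * g ^ 2 / (4 * a)) := by ring
    _ ≤ φ * (e ^ 2 / j ^ 3) * (a * gr ^ 2 + c * g * gr) := by gcongr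

theorem kato_density_le {a a' c φ φt φ₁ φ₂ Γ g gr gt ut : ℝ} (ha : 0 < a) (hφ : 0 ≤ φ)
    (he : 0 < e) (hΓ : φt + (a' * φ₁ + a * φ₂) - c * φ₁ ≤ Γ) (equation : ut = a * gr + c * g) :
    -Γ * |g| - e * (|Γ| + |c * φ₁| + φ * c ^ 2 / (4 * a))
        + (φt * softAbs e g + φ * (g * gt / softAbs e g))
      ≤ (φ₁ * (g / softAbs e g) + φ * (gr * e ^ 2 / softAbs e g ^ 3)) * ut
        + φ * (g / softAbs e g) * gt
        - ((a' * φ₁ + a * φ₂) * softAbs e g + a * φ₁ * (g * gr / softAbs e g)) := by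
  have diffusion := neg_mul_le_quadratic_mul (c := c) (g := g) (gr := gr) ha hφ he
  have j_pos := softAbs_pos he g
  have j_sq := softAbs_sq e g
  have e_le := le_softAbs e g
  have abs_le := abs_le_softAbs e g
  have le_abs := softAbs_le he.le g
  set j := softAbs e g
  have transport : c * φ₁ * (e ^ 2 / j) ≤ e * |c * φ₁| := by
    have ratio : e ^ 2 / j ≤ e := by rw [div_le_iff₀ j_pos]; nlinarith
    calc c * φ₁ * (e ^ 2 / j) ≤ |c * φ₁| * (e ^ 2 / j) := by gcongr; exact le_abs_self _
      _ ≤ |c * φ₁| * e := by gcongr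
      _ = e * |c * φ₁| := mul_comm _ _
  have reaction : j * (φt + (a' * φ₁ + a * φ₂) - c * φ₁) ≤ Γ * |g| + e * |Γ| := by
    calc j * (φt + (a' * φ₁ + a * φ₂) - c * φ₁) ≤ j * Γ := by gcongr
      _ ≤ Γ * |g| + e * |Γ| := by
        nlinarith [mul_le_mul_of_nonneg_left le_abs (abs_nonneg Γ), le_abs_self Γ, neg_abs_le Γ]
  have identity : (φ₁ * (g / j) + φ * (gr * e ^ 2 / j ^ 3)) * ut
        + φ * (g / j) * gt - ((a' * φ₁ + a * φ₂) * j + a * φ₁ * (g * gr / j))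
      = φt * j + φ * (g * gt / j) - j * (φt + (a' * φ₁ + a * φ₂) - c * φ₁) - c * φ₁ * (e ^ 2 / j)
        + φ * (e ^ 2 / j ^ 3) * (a * gr ^ 2 + c * g * gr) := by
    rw [equation, show e ^ 2 = j ^ 2 - g ^ 2 by linarith]
    field_simp
    ring
  linarith

variable {t₀ t₁ x₀ x₁ : ℝ} {a a' c : ℝ → ℝ} {u g gr ut gt : ℝ → ℝ → ℝ}

/-- A test function for the adjoint equation: `φ ≥ 0` on `[t₀, t₁] × [x₀, x₁]` satisfies
`∂ₜφ + ∂ᵣ(a ∂ᵣφ) - c ∂ᵣφ ≤ Γ` and vanishes at `t₀` and, together with `∂ᵣφ`, at `x₁`.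
Here `φt = ∂ₜφ`, `φ₁ = ∂ᵣφ` and `φ₂ = ∂ᵣ²φ`. -/
structure IsAdjointTest (a a' c : ℝ → ℝ) (t₀ t₁ x₀ x₁ : ℝ) (φ φt φ₁ φ₂ Γ : ℝ → ℝ → ℝ) : Prop where
  hasDerivAt_time : ∀ t ∈ Icc t₀ t₁, ∀ r ∈ Icc x₀ x₁, HasDerivAt (fun τ => φ τ r) (φt t r) t
  hasDerivAt_space : ∀ t ∈ Icc t₀ t₁, ∀ r ∈ Icc x₀ x₁, HasDerivAt (φ t) (φ₁ t r) r
  slope_hasDerivAt : ∀ t ∈ Icc t₀ t₁, ∀ r ∈ Icc x₀ x₁, HasDerivAt (φ₁ t) (φ₂ t r) r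
  continuousOn : ContinuousOn (uncurry φ) (Icc t₀ t₁ ×ˢ Icc x₀ x₁)
  continuousOn_speed : ContinuousOn (uncurry φt) (Icc t₀ t₁ ×ˢ Icc x₀ x₁)
  continuousOn_slope : ContinuousOn (uncurry φ₁) (Icc t₀ t₁ ×ˢ Icc x₀ x₁)
  continuousOn_bound : ContinuousOn (uncurry Γ) (Icc t₀ t₁ ×ˢ Icc x₀ x₁)
  nonneg : ∀ t ∈ Icc t₀ t₁, ∀ r ∈ Icc x₀ x₁, 0 ≤ φ t r
  adjoint_le : ∀ t ∈ Icc t₀ t₁, ∀ r ∈ Icc x₀ x₁,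
    φt t r + (a' r * φ₁ t r + a r * φ₂ t r) - c r * φ₁ t r ≤ Γ t r
  initial_eq_zero : ∀ r ∈ Icc x₀ x₁, φ t₀ r = 0
  right_eq_zero : ∀ t ∈ Icc t₀ t₁, φ t x₁ = 0
  right_slope_eq_zero : ∀ t ∈ Icc t₀ t₁, φ₁ t x₁ = 0

variable {φ φt φ₁ φ₂ Γ : ℝ → ℝ → ℝ} {b m : ℝ}

theorem neg_flux_le {a φ φ₁ ut g b m : ℝ} (ha : 0 ≤ a) (hφ : 0 ≤ φ) (he : 0 < e)
    (hm : |φ₁| ≤ m) (hb : φ * |ut| + a * |φ₁| * |g| ≤ b) :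
    -(φ * (g / softAbs e g) * ut - a * φ₁ * softAbs e g) ≤ b + e * (a * m) := by
  have j_pos := softAbs_pos he g
  have sign_le : |g / softAbs e g| ≤ 1 := by
    rw [abs_div, abs_of_pos j_pos, div_le_one j_pos]
    exact abs_le_softAbs e g
  have transport : -(φ * (g / softAbs e g) * ut) ≤ φ * |ut| := by
    calc -(φ * (g / softAbs e g) * ut) ≤ |φ * (g / softAbs e g) * ut| := neg_le_abs _
      _ = φ * |g / softAbs e g| * |ut| := by rw [abs_mul, abs_mul, abs_of_nonneg hφ]
      _ ≤ φ * 1 * |ut| := by gcongr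
      _ = φ * |ut| := by ring
  have diffusion : a * φ₁ * softAbs e g ≤ a * |φ₁| * |g| + e * (a * m) := by
    calc a * φ₁ * softAbs e g ≤ a * |φ₁| * (|g| + e) := by
          gcongr
          · exact le_abs_self φ₁
          · exact softAbs_le he.le g
      _ = a * |φ₁| * |g| + e * (a * |φ₁|) := by ring
      _ ≤ a * |φ₁| * |g| + e * (a * m) := by gcongr
  linarith

theorem setIntegral_neg_adjoint_mul_abs_slope_sub_le
    (hu : IsRegularSolution a c (Icc t₀ t₁) (Icc x₀ x₁) u g gr ut gt)
    (hφ : IsAdjointTest a a' c t₀ t₁ x₀ x₁ φ φt φ₁ φ₂ Γ)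
    (ht : t₀ ≤ t₁) (hx : x₀ ≤ x₁) (ha : ∀ r ∈ Icc x₀ x₁, HasDerivAt a (a' r) r)
    (a_pos : ∀ r ∈ Icc x₀ x₁, 0 < a r) (cc : ContinuousOn c (Icc x₀ x₁)) (he : 0 < e)
    (hm : ∀ t ∈ Icc t₀ t₁, |φ₁ t x₀| ≤ m)
    (hb : ∀ t ∈ Icc t₀ t₁, φ t x₀ * |ut t x₀| + a x₀ * |φ₁ t x₀| * |g t x₀| ≤ b) :
    ∫ p in Icc t₀ t₁ ×ˢ Icc x₀ x₁, uncurry (fun t r => -Γ t r * |g t r|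
        - e * (|Γ t r| + |c r * φ₁ t r| + φ t r * c r ^ 2 / (4 * a r))) p
      ≤ (t₁ - t₀) * (b + e * (a x₀ * m)) := by
  have hx₀ := left_mem_Icc.2 hx
  have ca : ContinuousOn a (Icc x₀ x₁) := fun r hr => (ha r hr).continuousAt.continuousWithinAt
  have a_ne : ∀ p ∈ Icc t₀ t₁ ×ˢ Icc x₀ x₁, 4 * a p.2 ≠ 0 :=
    fun p hp => mul_ne_zero four_ne_zero (a_pos _ hp.2).ne'
  have soft_ne : ∀ p ∈ Icc t₀ t₁ ×ˢ Icc x₀ x₁, softAbs e (g p.1 p.2) ≠ 0 :=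
    fun p _ => (softAbs_pos he _).ne'
  have snd_mem := mapsTo_snd_prod (Icc t₀ t₁) (Icc x₀ x₁)
  have := hu.continuousOn_slope
  have := hu.continuousOn_mixed
  have := hφ.continuousOn
  have := hφ.continuousOn_speed
  have := hφ.continuousOn_slope
  have := hφ.continuousOn_bound
  have := continuous_softAbs e
  refine (setIntegral_le_of_add_deriv_le_deriv
    (H := fun t r => φ t r * softAbs e (g t r))
    (Ht := fun t r => φt t r * softAbs e (g t r) + φ t r * (g t r * gt t r / softAbs e (g t r)))
    (Q := fun t r => φ t r * (g t r / softAbs e (g t r)) * ut t r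
      - a r * φ₁ t r * softAbs e (g t r)) ht hx
    (fun t ht r hr => (hφ.hasDerivAt_time t ht r hr).fun_mul
      (hasDerivAt_softAbs (hu.slope_hasDerivAt_time t ht r hr) he))
    (fun t ht r hr => (((hφ.hasDerivAt_space t ht r hr).fun_mul
      (hasDerivAt_div_softAbs (hu.slope_hasDerivAt_space t ht r hr) he)).fun_mul
        (hu.speed_hasDerivAt_space t ht r hr)).fun_sub
        (((ha r hr).fun_mul (hφ.slope_hasDerivAt t ht r hr)).fun_mul
          (hasDerivAt_softAbs (hu.slope_hasDerivAt_space t ht r hr) he)))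
    (by fun_prop (disch := assumption)) (by fun_prop (disch := assumption))
    (fun t ht r hr => kato_density_le (a_pos r hr) (hφ.nonneg t ht r hr) he
      (hφ.adjoint_le t ht r hr) (hu.equation t ht r hr))
    fun t ht => ?_).trans (add_le_of_nonpos_right ?_)
  · rw [hφ.right_eq_zero t ht, hφ.right_slope_eq_zero t ht]
    simpa using neg_flux_le (a_pos x₀ hx₀).le (hφ.nonneg t ht x₀ hx₀) he (hm t ht) (hb t ht)
  · rw [intervalIntegral.integral_of_le hx]
    refine setIntegral_nonpos measurableSet_Ioc fun r hr => ?_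
    have hr := Ioc_subset_Icc_self hr
    rw [hφ.initial_eq_zero r hr, zero_mul, zero_sub]
    exact neg_nonpos.2
      (mul_nonneg (hφ.nonneg t₁ (right_mem_Icc.2 ht) r hr) (softAbs_pos he _).le)

/-- Kato's inequality: differentiate the equation in space and test it with `φ sgn g`. -/
theorem setIntegral_neg_adjoint_mul_abs_slope_le
    (hu : IsRegularSolution a c (Icc t₀ t₁) (Icc x₀ x₁) u g gr ut gt)
    (hφ : IsAdjointTest a a' c t₀ t₁ x₀ x₁ φ φt φ₁ φ₂ Γ)
    (ht : t₀ ≤ t₁) (hx : x₀ ≤ x₁) (ha : ∀ r ∈ Icc x₀ x₁, HasDerivAt a (a' r) r)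
    (a_pos : ∀ r ∈ Icc x₀ x₁, 0 < a r) (cc : ContinuousOn c (Icc x₀ x₁))
    (hb : ∀ t ∈ Icc t₀ t₁, φ t x₀ * |ut t x₀| + a x₀ * |φ₁ t x₀| * |g t x₀| ≤ b) :
    ∫ p in Icc t₀ t₁ ×ˢ Icc x₀ x₁, uncurry (fun t r => -Γ t r * |g t r|) p ≤ (t₁ - t₀) * b := by
  have ca : ContinuousOn a (Icc x₀ x₁) := fun r hr => (ha r hr).continuousAt.continuousWithinAt
  have a_ne : ∀ p ∈ Icc t₀ t₁ ×ˢ Icc x₀ x₁, 4 * a p.2 ≠ 0 :=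
    fun p hp => mul_ne_zero four_ne_zero (a_pos _ hp.2).ne'
  have snd_mem := mapsTo_snd_prod (Icc t₀ t₁) (Icc x₀ x₁)
  have := hu.continuousOn_slope
  have := hφ.continuousOn
  have cφ₁ := hφ.continuousOn_slope
  have := hφ.continuousOn_bound
  obtain ⟨m, hm⟩ := isCompact_Icc.exists_bound_of_continuousOn
    (cφ₁.uncurry_right x₀ (left_mem_Icc.2 hx))
  set R := fun t r => |Γ t r| + |c r * φ₁ t r| + φ t r * c r ^ 2 / (4 * a r)
  have cR : ContinuousOn (uncurry R) (Icc t₀ t₁ ×ˢ Icc x₀ x₁) := by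
    fun_prop (disch := assumption)
  refine le_of_forall_pos_le_add_mul (k := (t₁ - t₀) * (a x₀ * m)
    + ∫ p in Icc t₀ t₁ ×ˢ Icc x₀ x₁, uncurry R p) fun e he => ?_
  have softened := setIntegral_neg_adjoint_mul_abs_slope_sub_le hu hφ ht hx ha a_pos cc he hm hb
  have split := setIntegral_const_mul_sub_const_mul (G := fun t r => -Γ t r * |g t r|)
    (by fun_prop) cR 1 e
  simp only [one_mul] at split
  linarith

end Kato

section Damping

/-- The damped weight `w / (1 + t w)`, which solves `∂ₜN = -N²` with `N = w` at time zero. -/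
noncomputable def damped (w : ℝ → ℝ) (t r : ℝ) : ℝ := w r / (1 + t * w r)

/-- The space derivative of `damped w`, in terms of `w` and its derivative `w'`. -/
noncomputable def dampedSlope (w w' : ℝ → ℝ) (t r : ℝ) : ℝ := w' r / (1 + t * w r) ^ 2

/-- The second space derivative of `damped w`, in terms of `w` and its derivatives. -/
noncomputable def dampedCurvature (w w' w'' : ℝ → ℝ) (t r : ℝ) : ℝ :=
  w'' r / (1 + t * w r) ^ 2 - 2 * t * w' r ^ 2 / (1 + t * w r) ^ 3

variable {w w' w'' : ℝ → ℝ} {t r k k' : ℝ}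

theorem one_le_one_add_mul_weight (hw : 0 ≤ w r) (ht : 0 ≤ t) : 1 ≤ 1 + t * w r :=
  le_add_of_nonneg_right (mul_nonneg ht hw)

theorem damped_eq_mul_inv (w : ℝ → ℝ) (t r : ℝ) : damped w t r = w r * (1 + t * w r)⁻¹ :=
  div_eq_mul_inv _ _

theorem damped_nonneg (hw : 0 ≤ w r) (ht : 0 ≤ t) : 0 ≤ damped w t r :=
  div_nonneg hw (by positivity)

theorem damped_le (hw : 0 ≤ w r) (ht : 0 ≤ t) : damped w t r ≤ w r :=
  div_le_self hw (one_le_one_add_mul_weight hw ht)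

theorem mul_damped_eq (hw : 0 ≤ w r) (ht : 0 ≤ t) :
    t * damped w t r = 1 - (1 + t * w r)⁻¹ := by
  have := one_le_one_add_mul_weight hw ht
  rw [damped]
  field_simp
  ring

theorem mul_damped_le_one (hw : 0 ≤ w r) (ht : 0 ≤ t) : t * damped w t r ≤ 1 := by
  rw [mul_damped_eq hw ht]
  linarith [inv_nonneg.2 (zero_le_one.trans (one_le_one_add_mul_weight hw ht))]

theorem hasDerivAt_damped_time (hw : 0 ≤ w r) (ht : 0 ≤ t) :
    HasDerivAt (fun τ => damped w τ r) (-damped w t r ^ 2) t := by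
  have := one_le_one_add_mul_weight hw ht
  refine (((hasDerivAt_const t (w r)).fun_div (((hasDerivAt_id t).mul_const (w r)).const_add 1)
    (by simp only [id]; positivity))).congr_deriv ?_
  simp only [damped, id]
  field_simp
  ring

theorem hasDerivAt_damped_space (hw : 0 ≤ w r) (ht : 0 ≤ t) (hw' : HasDerivAt w (w' r) r) :
    HasDerivAt (damped w t) (dampedSlope w w' t r) r := by
  have := one_le_one_add_mul_weight hw ht
  refine (hw'.fun_div ((hw'.const_mul t).const_add 1) (by positivity)).congr_deriv ?_
  rw [dampedSlope]
  field_simp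
  ring

theorem hasDerivAt_dampedSlope (hw : 0 ≤ w r) (ht : 0 ≤ t) (hw' : HasDerivAt w (w' r) r)
    (hw'' : HasDerivAt w' (w'' r) r) :
    HasDerivAt (dampedSlope w w' t) (dampedCurvature w w' w'' t r) r := by
  have := one_le_one_add_mul_weight hw ht
  refine (hw''.fun_div (((hw'.const_mul t).const_add 1).fun_pow 2) (by positivity)).congr_deriv ?_
  rw [dampedCurvature]
  field_simp
  simp
  ring

theorem abs_mul_dampedSlope_le (hw : 0 ≤ w r) (ht : 0 ≤ t) (h : |r * w' r| ≤ k * w r) :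
    |r * dampedSlope w w' t r| ≤ k * damped w t r * (1 + t * w r)⁻¹ := by
  have := one_le_one_add_mul_weight hw ht
  calc |r * dampedSlope w w' t r| = |r * w' r| / (1 + t * w r) ^ 2 := by
        rw [dampedSlope, ← mul_div_assoc, abs_div, abs_of_nonneg (sq_nonneg (1 + t * w r))]
    _ ≤ k * w r / (1 + t * w r) ^ 2 := by gcongr
    _ = k * damped w t r * (1 + t * w r)⁻¹ := by rw [damped]; field_simp

theorem abs_sq_mul_dampedCurvature_le (hw : 0 ≤ w r) (ht : 0 ≤ t) (h : |r * w' r| ≤ k * w r)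
    (h' : |r ^ 2 * w'' r| ≤ k' * w r) :
    |r ^ 2 * dampedCurvature w w' w'' t r|
      ≤ (k' + 2 * k ^ 2) * damped w t r * (1 + t * w r)⁻¹ := by
  have := one_le_one_add_mul_weight hw ht
  have slope_sq : (r * w' r) ^ 2 ≤ (k * w r) ^ 2 := sq_le_sq.2 (h.trans (le_abs_self _))
  have split : r ^ 2 * dampedCurvature w w' w'' t r
      = r ^ 2 * w'' r / (1 + t * w r) ^ 2 - 2 * t * (r * w' r) ^ 2 / (1 + t * w r) ^ 3 := by
    rw [dampedCurvature]
    ring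
  calc |r ^ 2 * dampedCurvature w w' w'' t r|
      ≤ |r ^ 2 * w'' r| / (1 + t * w r) ^ 2 + 2 * t * (r * w' r) ^ 2 / (1 + t * w r) ^ 3 := by
        rw [split]
        refine (abs_sub _ _).trans_eq ?_
        rw [abs_div, abs_of_nonneg (sq_nonneg (1 + t * w r)),
          abs_of_nonneg (by positivity : 0 ≤ 2 * t * (r * w' r) ^ 2 / (1 + t * w r) ^ 3)]
    _ ≤ k' * w r / (1 + t * w r) ^ 2 + 2 * t * (k * w r) ^ 2 / (1 + t * w r) ^ 3 := by gcongr
    _ = (k' + 2 * k ^ 2 * (t * damped w t r)) * damped w t r * (1 + t * w r)⁻¹ := by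
        rw [damped]
        field_simp
    _ ≤ (k' + 2 * k ^ 2) * damped w t r * (1 + t * w r)⁻¹ := by
        have := damped_nonneg hw ht
        gcongr ?_ * damped w t r * (1 + t * w r)⁻¹
        linarith [mul_le_of_le_one_right (by positivity : 0 ≤ 2 * k ^ 2) (mul_damped_le_one hw ht)]

theorem intervalIntegral_damped (hw : 0 ≤ w r) :
    ∫ t in (0 : ℝ)..1, damped w t r = Real.log (1 + w r) := by
  have one_le : ∀ t ∈ uIcc (0 : ℝ) 1, 1 ≤ 1 + t * w r := fun t ht =>
    one_le_one_add_mul_weight hw (by rw [uIcc_of_le zero_le_one] at ht; exact ht.1)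
  rw [intervalIntegral.integral_eq_sub_of_hasDerivAt (f := fun t => Real.log (1 + t * w r))]
  · simp
  · intro t ht
    have := one_le t ht
    simpa [damped] using (((hasDerivAt_id t).mul_const (w r)).const_add 1).log (by simp; linarith)
  · refine ContinuousOn.intervalIntegrable fun t ht => ?_
    have := one_le t ht
    exact ContinuousAt.continuousWithinAt (by unfold damped; fun_prop (disch := positivity))

theorem continuousOn_damped {J : Set ℝ} (hw : ContinuousOn w J) (hw₀ : ∀ r ∈ J, 0 ≤ w r) :
    ContinuousOn (uncurry (damped w)) (Ici 0 ×ˢ J) := by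
  have snd_mem := mapsTo_snd_prod (Ici (0 : ℝ)) J
  have denominator_ne : ∀ p ∈ Ici (0 : ℝ) ×ˢ J, 1 + p.1 * w p.2 ≠ 0 := fun p hp =>
    (one_pos.trans_le (one_le_one_add_mul_weight (hw₀ _ hp.2) hp.1)).ne'
  unfold damped
  fun_prop (disch := assumption)

theorem continuousOn_dampedSlope {J : Set ℝ} (hw : ContinuousOn w J) (hw' : ContinuousOn w' J)
    (hw₀ : ∀ r ∈ J, 0 ≤ w r) : ContinuousOn (uncurry (dampedSlope w w')) (Ici 0 ×ˢ J) := by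
  have snd_mem := mapsTo_snd_prod (Ici (0 : ℝ)) J
  have denominator_ne : ∀ p ∈ Ici (0 : ℝ) ×ˢ J, (1 + p.1 * w p.2) ^ 2 ≠ 0 := fun p hp =>
    pow_ne_zero 2 (one_pos.trans_le (one_le_one_add_mul_weight (hw₀ _ hp.2) hp.1)).ne'
  unfold dampedSlope
  fun_prop (disch := assumption)

end Damping

section Weights

variable {x₀ x₁ δ : ℝ} {w : ℝ → ℝ}

theorem continuousOn_rpow_of_pos (q : ℝ) {J : Set ℝ} (hJ : ∀ r ∈ J, 0 < r) :
    ContinuousOn (fun r : ℝ => r ^ q) J :=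
  fun r hr => (Real.continuousAt_rpow_const r q (.inl (hJ r hr).ne')).continuousWithinAt

theorem intervalIntegral_rpow_sub_one_le {q : ℝ} (hq : 0 < q) (hx₀ : 0 < x₀) (hx : x₀ ≤ x₁)
    (hx₁ : x₁ ≤ 1) : ∫ r in x₀..x₁, r ^ (q - 1) ≤ 1 / q := by
  rw [integral_rpow (.inl (by linarith)), sub_add_cancel]
  gcongr
  have := Real.rpow_le_one (hx₀.le.trans hx) hx₁ hq.le
  have := Real.rpow_nonneg hx₀.le q
  linarith

theorem log_one_add_le {r y : ℝ} (hδ : 0 < δ) (hδ₁ : δ ≤ 4) (hr : 0 < r) (hr₁ : r ≤ 1) (hy : 0 ≤ y)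
    (hry : r ^ 2 * y ≤ 2) : Real.log (1 + y) ≤ 12 / δ * r ^ (-(δ / 2)) := by
  have one_add_le : 1 + y ≤ 3 * (r ^ 2)⁻¹ := by
    rw [← div_eq_mul_inv, le_div_iff₀ (by positivity)]
    nlinarith
  calc Real.log (1 + y) ≤ (1 + y) ^ (δ / 4) / (δ / 4) :=
        Real.log_le_rpow_div (by positivity) (by positivity)
    _ ≤ (3 * (r ^ 2)⁻¹) ^ (δ / 4) / (δ / 4) := by gcongr
    _ = 3 ^ (δ / 4) * r ^ (-(δ / 2)) / (δ / 4) := by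
        rw [Real.mul_rpow (by norm_num) (by positivity), ← Real.rpow_natCast, ← Real.rpow_neg hr.le,
          ← Real.rpow_mul hr.le]
        congr 3
        push_cast
        ring
    _ ≤ 3 ^ (1 : ℝ) * r ^ (-(δ / 2)) / (δ / 4) := by
        gcongr
        · norm_num
        · linarith
    _ = 12 / δ * r ^ (-(δ / 2)) := by
        rw [Real.rpow_one]
        field_simp
        ring

theorem setIntegral_rpow_mul_damped_le (hδ : 0 < δ) (hδ₁ : δ ≤ 4) (hx₀ : 0 < x₀) (hx : x₀ ≤ x₁)
    (hx₁ : x₁ ≤ 1) (cw : ContinuousOn w (Icc x₀ x₁)) (hw : ∀ r ∈ Icc x₀ x₁, 0 ≤ w r)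
    (hrw : ∀ r ∈ Icc x₀ x₁, r ^ 2 * w r ≤ 2) :
    ∫ p in Icc 0 1 ×ˢ Icc x₀ x₁, uncurry (fun t r => r ^ (δ - 1) * damped w t r) p
      ≤ 24 / δ ^ 2 := by
  have pos : ∀ r ∈ Icc x₀ x₁, 0 < r := fun r hr => hx₀.trans_le hr.1
  have cN := (continuousOn_damped cw hw).mono
    (prod_mono_left (Icc_subset_Ici_self : Icc (0 : ℝ) 1 ⊆ _))
  have snd_mem := mapsTo_snd_prod (Icc (0 : ℝ) 1) (Icc x₀ x₁)
  have c_rpow := continuousOn_rpow_of_pos (δ - 1) pos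
  have c_rpow' := continuousOn_rpow_of_pos (δ / 2 - 1) pos
  have cE : ContinuousOn (uncurry fun t r => r ^ (δ - 1) * damped w t r)
      (Icc 0 1 ×ˢ Icc x₀ x₁) :=
    ContinuousOn.mul (c_rpow.comp continuousOn_snd snd_mem) cN
  rw [setIntegral_rectangle_swap zero_le_one hx cE]
  calc ∫ r in x₀..x₁, ∫ t in (0 : ℝ)..1, r ^ (δ - 1) * damped w t r
      = ∫ r in x₀..x₁, r ^ (δ - 1) * Real.log (1 + w r) := by
        refine intervalIntegral.integral_congr fun r hr => ?_
        rw [uIcc_of_le hx] at hr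
        simp only [intervalIntegral.integral_const_mul, intervalIntegral_damped (hw r hr)]
    _ ≤ ∫ r in x₀..x₁, 12 / δ * r ^ (δ / 2 - 1) := by
        refine intervalIntegral.integral_mono_on hx ?_ ?_ fun r hr => ?_
        · have : ∀ r ∈ Icc x₀ x₁, 1 + w r ≠ 0 := fun r hr => by linarith [hw r hr]
          exact ContinuousOn.intervalIntegrable_of_Icc hx (by fun_prop (disch := assumption))
        · exact ContinuousOn.intervalIntegrable_of_Icc hx (by fun_prop)
        · have r_pos := pos r hr
          calc r ^ (δ - 1) * Real.log (1 + w r) ≤ r ^ (δ - 1) * (12 / δ * r ^ (-(δ / 2))) := by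
                gcongr
                exact log_one_add_le hδ hδ₁ r_pos (hr.2.trans hx₁) (hw r hr) (hrw r hr)
            _ = 12 / δ * r ^ (δ / 2 - 1) := by
                rw [mul_left_comm, ← Real.rpow_add r_pos]
                ring_nf
    _ ≤ 12 / δ * (1 / (δ / 2)) := by
        rw [intervalIntegral.integral_const_mul]
        gcongr
        exact intervalIntegral_rpow_sub_one_le (by positivity) hx₀ hx hx₁
    _ = 24 / δ ^ 2 := by field_simp; ring

end Weights

section Cutoff

/-- The spatial cutoff `r ^ q (L - r)²`. -/
noncomputable def cutoff (q L r : ℝ) : ℝ := r ^ q * (L - r) ^ 2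

/-- The derivative of `cutoff q L`. -/
noncomputable def cutoffSlope (q L r : ℝ) : ℝ :=
  q * r ^ (q - 1) * (L - r) ^ 2 - 2 * r ^ q * (L - r)

/-- The second derivative of `cutoff q L`. -/
noncomputable def cutoffCurvature (q L r : ℝ) : ℝ :=
  q * (q - 1) * r ^ (q - 2) * (L - r) ^ 2 - 4 * q * r ^ (q - 1) * (L - r) + 2 * r ^ q

variable {q L r : ℝ}

theorem hasDerivAt_cutoff (hr : 0 < r) : HasDerivAt (cutoff q L) (cutoffSlope q L r) r := by
  refine ((Real.hasDerivAt_rpow_const (p := q) (.inl hr.ne')).fun_mul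
    (((hasDerivAt_id r).const_sub L).fun_pow 2)).congr_deriv ?_
  simp only [cutoffSlope, id]
  ring

theorem hasDerivAt_cutoffSlope (hr : 0 < r) :
    HasDerivAt (cutoffSlope q L) (cutoffCurvature q L r) r := by
  have linear := (hasDerivAt_id r).const_sub L
  refine ((((Real.hasDerivAt_rpow_const (p := q - 1) (.inl hr.ne')).const_mul q).fun_mul
    (linear.fun_pow 2)).fun_sub (((Real.hasDerivAt_rpow_const (p := q) (.inl hr.ne')).const_mul
      2).fun_mul linear)).congr_deriv ?_
  simp only [cutoffCurvature, id, show q - 1 - 1 = q - 2 by ring]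
  ring

theorem mul_cutoffSlope (hr : 0 < r) :
    r * cutoffSlope q L r = r ^ q * (q * (L - r) ^ 2 - 2 * r * (L - r)) := by
  rw [cutoffSlope, Real.rpow_sub_one hr.ne']
  field_simp

theorem sq_mul_cutoffCurvature (hr : 0 < r) :
    r ^ 2 * cutoffCurvature q L r
      = r ^ q * (q * (q - 1) * (L - r) ^ 2 - 4 * q * r * (L - r) + 2 * r ^ 2) := by
  rw [cutoffCurvature, Real.rpow_sub_one hr.ne', Real.rpow_sub hr, Real.rpow_two]
  field_simp

theorem cutoff_nonneg (hr : 0 ≤ r) : 0 ≤ cutoff q L r :=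
  mul_nonneg (Real.rpow_nonneg hr q) (sq_nonneg _)

theorem cutoff_le (hr : 0 ≤ r) (hrL : r ≤ L) (hL : L ≤ 1) : cutoff q L r ≤ r ^ q :=
  mul_le_of_le_one_right (Real.rpow_nonneg hr q) (pow_le_one₀ (by linarith) (by linarith))

theorem cutoff_self (q L : ℝ) : cutoff q L L = 0 := by simp [cutoff]

theorem cutoffSlope_self (q L : ℝ) : cutoffSlope q L L = 0 := by simp [cutoffSlope]

end Cutoff

/-- The coefficients of `∂ₜu = a ∂ᵣ²u + c ∂ᵣu` near the origin, where `a` is comparable to `r² w`.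
The last field is the dissipation behind the whole estimate: `r ^ δ` is a strict supersolution of
the adjoint of the equation for `∂ᵣu`. -/
structure HasCoefficientBounds (δ c₀ C₀ L : ℝ) (a a' c w w' w'' : ℝ → ℝ) : Prop where
  weight_pos : ∀ r ∈ Ioc 0 L, 0 < w r
  hasDerivAt_weight : ∀ r ∈ Ioc 0 L, HasDerivAt w (w' r) r
  hasDerivAt_weight_slope : ∀ r ∈ Ioc 0 L, HasDerivAt w' (w'' r) r
  abs_mul_weight_slope_le : ∀ r ∈ Ioc 0 L, |r * w' r| ≤ 2 * w r
  abs_sq_mul_weight_curvature_le : ∀ r ∈ Ioc 0 L, |r ^ 2 * w'' r| ≤ 6 * w r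
  sq_mul_weight_le : ∀ r ∈ Ioc 0 L, r ^ 2 * w r ≤ 2
  hasDerivAt : ∀ r ∈ Ioc 0 L, HasDerivAt a (a' r) r
  pos : ∀ r ∈ Ioc 0 L, 0 < a r
  continuousOn : ContinuousOn c (Ioc 0 L)
  weight_le : ∀ r ∈ Ioc 0 L, r ^ 2 * w r ≤ C₀ * a r
  le_weight : ∀ r ∈ Ioc 0 L, a r ≤ C₀ * (r ^ 2 * w r)
  abs_mul_slope_le : ∀ r ∈ Ioc 0 L, |r * a' r| ≤ C₀ * (r ^ 2 * w r)
  abs_mul_drift_le : ∀ r ∈ Ioc 0 L, |r * c r| ≤ C₀ * (r ^ 2 * w r)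
  dissipation : ∀ r ∈ Ioc 0 L,
    (δ - 1) * a r + r * a' r - r * c r ≤ -(c₀ * (r ^ 2 * w r))

namespace HasCoefficientBounds

variable {δ c₀ C₀ L : ℝ} {a a' c w w' w'' : ℝ → ℝ} {r t l σ : ℝ}

section
variable (h : HasCoefficientBounds δ c₀ C₀ L a a' c w w' w'')
include h

theorem sq_mul_weight_pos (hr : r ∈ Ioc 0 L) : 0 < r ^ 2 * w r :=
  mul_pos (pow_pos hr.1 2) (h.weight_pos r hr)

theorem const_pos (hr : r ∈ Ioc 0 L) : 0 < C₀ :=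
  pos_of_mul_pos_left ((h.pos r hr).trans_le (h.le_weight r hr)) (h.sq_mul_weight_pos hr).le

theorem abs_mul_drift_div_le (hr : r ∈ Ioc 0 L) : |r * c r / a r| ≤ C₀ ^ 2 := by
  have a_pos := h.pos r hr
  have := h.const_pos hr
  rw [abs_div, abs_of_pos a_pos, div_le_iff₀ a_pos]
  calc |r * c r| ≤ C₀ * (r ^ 2 * w r) := h.abs_mul_drift_le r hr
    _ ≤ C₀ * (C₀ * a r) := mul_le_mul_of_nonneg_left (h.weight_le r hr) this.le
    _ = C₀ ^ 2 * a r := by ring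

theorem continuousOn_weight : ContinuousOn w (Ioc 0 L) :=
  fun r hr => (h.hasDerivAt_weight r hr).continuousAt.continuousWithinAt

theorem continuousOn_weight_slope : ContinuousOn w' (Ioc 0 L) :=
  fun r hr => (h.hasDerivAt_weight_slope r hr).continuousAt.continuousWithinAt

theorem continuousOn_diffusion : ContinuousOn a (Ioc 0 L) :=
  fun r hr => (h.hasDerivAt r hr).continuousAt.continuousWithinAt

theorem abs_mul_dampedSlope_le (ht : 0 ≤ t) (hr : r ∈ Ioc 0 L) :
    |r * dampedSlope w w' t r| ≤ 2 * damped w t r := by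
  have hw := (h.weight_pos r hr).le
  refine (DegenerateParabolic.abs_mul_dampedSlope_le hw ht (h.abs_mul_weight_slope_le r hr)).trans
    (mul_le_of_le_one_right (mul_nonneg two_pos.le (damped_nonneg hw ht)) ?_)
  exact inv_le_one_of_one_le₀ (one_le_one_add_mul_weight hw ht)

theorem energy_drift_sq_le (hδ : 0 < δ) (hδ₁ : δ ≤ 1) (hL : L ≤ 1) (ht : 0 ≤ t)
    (hr : r ∈ Ioc 0 L) :
    (cutoffSlope (1 + δ) L r * damped w t r + cutoff (1 + δ) L r * dampedSlope w w' t r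
        - cutoff (1 + δ) L r * damped w t r * c r / a r) ^ 2
      ≤ cutoff (1 + δ) L r * damped w t r
        * ((4 + C₀ ^ 2) ^ 2 * (r ^ (δ - 1) * damped w t r)) := by
  have r_pos := hr.1
  have N_nonneg := damped_nonneg (h.weight_pos r hr).le ht
  have n_le := h.abs_mul_dampedSlope_le ht hr
  have d_le := h.abs_mul_drift_div_le hr
  have z_nonneg : 0 ≤ L - r := sub_nonneg.2 hr.2
  set N := damped w t r
  set n := r * dampedSlope w w' t r with n_eq
  set d := r * c r / a r with d_eq
  set z := L - r
  have bracket : |((1 + δ) * z - 2 * r) * N + z * n - z * N * d| ≤ (4 + C₀ ^ 2) * N := by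
    have first : |(1 + δ) * z - 2 * r| ≤ 2 := abs_le.2 ⟨by nlinarith, by nlinarith⟩
    calc |((1 + δ) * z - 2 * r) * N + z * n - z * N * d|
        ≤ |(1 + δ) * z - 2 * r| * N + z * |n| + z * N * |d| := by
          refine (abs_sub _ _).trans ((add_le_add_left (abs_add_le _ _) _).trans_eq ?_)
          simp only [abs_mul, abs_of_nonneg N_nonneg, abs_of_nonneg z_nonneg]
      _ ≤ 2 * N + 1 * (2 * N) + 1 * N * C₀ ^ 2 := by gcongr <;> linarith
      _ = (4 + C₀ ^ 2) * N := by ring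
  have expand : r * (cutoffSlope (1 + δ) L r * N + cutoff (1 + δ) L r * dampedSlope w w' t r
      - cutoff (1 + δ) L r * N * c r / a r)
      = r ^ (1 + δ) * z * (((1 + δ) * z - 2 * r) * N + z * n - z * N * d) := by
    rw [mul_sub, mul_add, ← mul_assoc, mul_cutoffSlope r_pos, n_eq, d_eq, cutoff]
    ring
  have power : r ^ (1 + δ) = r ^ 2 * r ^ (δ - 1) := by
    rw [← Real.rpow_two, ← Real.rpow_add r_pos]
    ring_nf
  refine le_of_mul_le_mul_left ?_ (pow_pos r_pos 2)
  rw [← mul_pow, expand, mul_pow]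
  calc (r ^ (1 + δ) * z) ^ 2 * (((1 + δ) * z - 2 * r) * N + z * n - z * N * d) ^ 2
      ≤ (r ^ (1 + δ) * z) ^ 2 * ((4 + C₀ ^ 2) * N) ^ 2 :=
        mul_le_mul_of_nonneg_left (sq_le_sq.2 (bracket.trans (le_abs_self _))) (sq_nonneg _)
    _ = r ^ 2 * (cutoff (1 + δ) L r * N * ((4 + C₀ ^ 2) ^ 2 * (r ^ (δ - 1) * N))) := by
        rw [cutoff, power]
        ring

theorem isEnergyWeight (hδ : 0 < δ) (hδ₁ : δ ≤ 1) (hL : L ≤ 1) (hσ : 0 < σ) :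
    IsEnergyWeight a c 0 1 σ L (fun t r => cutoff (1 + δ) L r * damped w t r)
      (fun t r => cutoff (1 + δ) L r * -damped w t r ^ 2)
      (fun t r => cutoffSlope (1 + δ) L r * damped w t r
        + cutoff (1 + δ) L r * dampedSlope w w' t r)
      (fun t r => (4 + C₀ ^ 2) ^ 2 * (r ^ (δ - 1) * damped w t r)) := by
  have mem : ∀ r ∈ Icc σ L, r ∈ Ioc 0 L := fun r hr => ⟨hσ.trans_le hr.1, hr.2⟩
  have w_nonneg : ∀ r ∈ Icc σ L, 0 ≤ w r := fun r hr => (h.weight_pos r (mem r hr)).le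
  have cut_nonneg : ∀ r ∈ Icc σ L, 0 ≤ cutoff (1 + δ) L r := fun r hr =>
    cutoff_nonneg (mem r hr).1.le
  have cN := (continuousOn_damped (h.continuousOn_weight.mono mem) w_nonneg).mono
    (prod_mono_left (Icc_subset_Ici_self : Icc (0 : ℝ) 1 ⊆ _))
  have c_cut : ContinuousOn (uncurry fun _ r => cutoff (1 + δ) L r) (Icc (0 : ℝ) 1 ×ˢ Icc σ L) :=
    fun p hp => (ContinuousAt.comp (f := Prod.snd)
      (hasDerivAt_cutoff (mem _ hp.2).1).continuousAt continuousAt_snd).continuousWithinAt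
  have c_rpow : ContinuousOn (uncurry fun _ r => r ^ (δ - 1)) (Icc (0 : ℝ) 1 ×ˢ Icc σ L) :=
    (continuousOn_rpow_of_pos (δ - 1) fun r hr => (mem r hr).1).comp continuousOn_snd
      (mapsTo_snd_prod _ _)
  exact {
    hasDerivAt_time := fun t ht r hr =>
      (hasDerivAt_damped_time (w_nonneg r hr) ht.1).const_mul _
    hasDerivAt_space := fun t ht r hr => (hasDerivAt_cutoff (mem r hr).1).fun_mul
      (hasDerivAt_damped_space (w_nonneg r hr) ht.1 (h.hasDerivAt_weight r (mem r hr)))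
    continuousOn := c_cut.mul cN
    continuousOn_speed := c_cut.mul (cN.pow 2).neg
    continuousOn_bound := continuousOn_const.mul (c_rpow.mul cN)
    nonneg := fun t ht r hr => mul_nonneg (cut_nonneg r hr) (damped_nonneg (w_nonneg r hr) ht.1)
    speed_nonpos := fun t _ r hr =>
      mul_nonpos_of_nonneg_of_nonpos (cut_nonneg r hr) (neg_nonpos.2 (sq_nonneg _))
    bound_nonneg := fun t ht r hr => mul_nonneg (by positivity)
      (mul_nonneg (Real.rpow_nonneg (mem r hr).1.le _) (damped_nonneg (w_nonneg r hr) ht.1))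
    drift_sq_le := fun t ht r hr => h.energy_drift_sq_le hδ hδ₁ hL ht.1 (mem r hr)
    right_eq_zero := fun t _ => by rw [cutoff_self, zero_mul] }

end

end HasCoefficientBounds

section AdjointTest

theorem adjoint_cutoff_le {δ c₀ C₀ m A b r z l : ℝ} (hδ : 0 ≤ δ) (hδ₁ : δ ≤ 1) (hc₀ : 0 ≤ c₀)
    (hC₀ : 0 ≤ C₀) (hm : 0 ≤ m) (hA : 0 ≤ A) (hAm : A ≤ C₀ * m) (hb : |b| ≤ 2 * C₀ * m)
    (hdiss : (δ - 1) * A + b ≤ -(c₀ * m)) (hr : 0 ≤ r) (hz : 0 ≤ z) (hl : r + z = l)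
    (hl_le : l ≤ 1 / 2) :
    b * (δ * z ^ 2 - 2 * r * z) + A * (δ * (δ - 1) * z ^ 2 - 4 * δ * r * z + 2 * r ^ 2)
      ≤ m * (-(δ * c₀ * l ^ 2) + (c₀ + 3 * C₀) * r) := by
  have rz_le : r * z ≤ r / 2 := by nlinarith
  have r_sq_le : r ^ 2 ≤ r / 2 := by nlinarith
  have z_sq_ge : l ^ 2 - r ≤ z ^ 2 := by subst hl; nlinarith
  have transport : -(2 * (r * z) * b) ≤ 2 * C₀ * m * r := by
    calc -(2 * (r * z) * b) ≤ 2 * (r * z) * (2 * C₀ * m) := by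
          nlinarith [neg_abs_le b, mul_nonneg hr hz]
      _ ≤ 2 * (r / 2) * (2 * C₀ * m) := by gcongr
      _ = 2 * C₀ * m * r := by ring
  have curvature : 2 * r ^ 2 * A ≤ C₀ * m * r := by
    calc 2 * r ^ 2 * A ≤ 2 * (r / 2) * (C₀ * m) := by gcongr
      _ = C₀ * m * r := by ring
  have dissipated : δ * z ^ 2 * ((δ - 1) * A + b) ≤ δ * (c₀ * m) * (r - l ^ 2) := by
    calc δ * z ^ 2 * ((δ - 1) * A + b) ≤ δ * z ^ 2 * -(c₀ * m) := by gcongr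
      _ = δ * (c₀ * m) * -z ^ 2 := by ring
      _ ≤ δ * (c₀ * m) * (r - l ^ 2) := by gcongr; linarith
  have δ_r_le : δ * (c₀ * m) * r ≤ c₀ * m * r :=
    mul_le_mul_of_nonneg_right (mul_le_of_le_one_left (by positivity) hδ₁) hr
  have sign : 0 ≤ 4 * δ * (r * z) * A := by positivity
  linarith

theorem adjoint_cross_le {δ C₀ m A b r z S n₁ n₂ : ℝ} (hδ : 0 ≤ δ) (hδ₁ : δ ≤ 1)
    (hC₀ : 0 ≤ C₀) (hm : 0 ≤ m) (hA : 0 ≤ A) (hAm : A ≤ C₀ * m) (hb : |b| ≤ 2 * C₀ * m)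
    (hr : 0 ≤ r) (hz : 0 ≤ z) (hrz : r + z ≤ 1)
    (hn₁ : |n₁| ≤ 2 * S) (hn₂ : |n₂| ≤ 14 * S) :
    b * z ^ 2 * n₁ + A * (2 * (δ * z ^ 2 - 2 * r * z) * n₁ + z ^ 2 * n₂)
      ≤ 22 * C₀ * m * S := by
  have : 0 ≤ S := by linarith [abs_nonneg n₁]
  have z_sq_le : z ^ 2 ≤ 1 := pow_le_one₀ hz (by linarith)
  have slope_le : |δ * z ^ 2 - 2 * r * z| ≤ 1 :=
    abs_le.2 ⟨by nlinarith [mul_nonneg hδ (sq_nonneg z), sq_nonneg (r - z)],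
      by nlinarith [mul_nonneg hr hz, sq_nonneg z]⟩
  calc b * z ^ 2 * n₁ + A * (2 * (δ * z ^ 2 - 2 * r * z) * n₁ + z ^ 2 * n₂)
      ≤ |b| * z ^ 2 * |n₁| + A * (2 * |δ * z ^ 2 - 2 * r * z| * |n₁| + z ^ 2 * |n₂|) := by
        gcongr ?_ + A * (?_ + z ^ 2 * ?_)
        · exact (le_abs_self _).trans_eq (by rw [abs_mul, abs_mul, abs_of_nonneg (sq_nonneg z)])
        · exact (le_abs_self _).trans_eq (by rw [abs_mul, abs_mul, abs_two])
        · exact le_abs_self _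
    _ ≤ 2 * C₀ * m * 1 * (2 * S) + C₀ * m * (2 * 1 * (2 * S) + 1 * (14 * S)) := by gcongr
    _ = 22 * C₀ * m * S := by ring

theorem mul_le_add_mul_inv_one_add {A c₂ r t y : ℝ} (hA : 0 < A) (hc₂ : 0 < c₂) (hr₁ : r ≤ 1)
    (ht : t ∈ Icc (0 : ℝ) 1) (hy : 0 ≤ y) (hry : r ^ 2 * y ≤ 2) :
    A * r ≤ c₂ + A * (1 + 2 / (c₂ / A) ^ 2) * (1 + t * y)⁻¹ := by
  have one_add_pos : 0 < 1 + t * y := by nlinarith [mul_nonneg ht.1 hy]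
  rcases le_total r (c₂ / A) with r_le | le_r
  · have : A * r ≤ c₂ := by rwa [mul_comm, ← le_div_iff₀ hA]
    exact this.trans (le_add_of_nonneg_right (by positivity))
  · have : 0 < c₂ / A := by positivity
    have y_le : y ≤ 2 / (c₂ / A) ^ 2 := by
      rw [le_div_iff₀ (by positivity)]
      calc y * (c₂ / A) ^ 2 ≤ y * r ^ 2 := by gcongr
        _ ≤ 2 := by linarith
    have ty_le : t * y ≤ 2 / (c₂ / A) ^ 2 := (mul_le_of_le_one_left hy ht.2).trans y_le
    have one_le : 1 ≤ (1 + 2 / (c₂ / A) ^ 2) * (1 + t * y)⁻¹ := by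
      rw [← div_eq_mul_inv, one_le_div one_add_pos]
      gcongr
    nlinarith

variable {δ c₀ C₀ L : ℝ} {a a' c w w' w'' : ℝ → ℝ} {r t l σ : ℝ}

/-- The test function `r ^ δ (l - r)² t w / (1 + t w)` for the adjoint equation. -/
noncomputable def adjointTest (δ l : ℝ) (w : ℝ → ℝ) (t r : ℝ) : ℝ :=
  cutoff δ l r * (t * damped w t r)

/-- The space derivative of `adjointTest`. -/
noncomputable def adjointTestSlope (δ l : ℝ) (w w' : ℝ → ℝ) (t r : ℝ) : ℝ :=
  cutoffSlope δ l r * (t * damped w t r) + cutoff δ l r * (t * dampedSlope w w' t r)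

/-- The second space derivative of `adjointTest`. -/
noncomputable def adjointTestCurvature (δ l : ℝ) (w w' w'' : ℝ → ℝ) (t r : ℝ) : ℝ :=
  cutoffCurvature δ l r * (t * damped w t r) + cutoffSlope δ l r * (t * dampedSlope w w' t r)
    + (cutoffSlope δ l r * (t * dampedSlope w w' t r)
      + cutoff δ l r * (t * dampedCurvature w w' w'' t r))

/-- The factor `C₂` in the bound `r ^ δ (C₂ N - c₂ w)`, with `c₂ = δ c₀ l² / 2`, for the adjoint
operator applied to `adjointTest`. -/
noncomputable def adjointConst (δ c₀ C₀ l : ℝ) : ℝ :=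
  δ * c₀ * l ^ 2 + 1 + 22 * C₀
    + (c₀ + 3 * C₀) * (1 + 2 / (δ * c₀ * l ^ 2 / 2 / (c₀ + 3 * C₀)) ^ 2)

theorem sq_mul_adjoint_space_eq {A B C : ℝ} (hr : 0 < r) :
    r ^ 2 * ((B - C) * adjointTestSlope δ l w w' t r + A * adjointTestCurvature δ l w w' w'' t r)
      = r ^ δ * (t * damped w t r * ((r * B - r * C) * (δ * (l - r) ^ 2 - 2 * r * (l - r))
          + A * (δ * (δ - 1) * (l - r) ^ 2 - 4 * δ * r * (l - r) + 2 * r ^ 2))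
        + ((r * B - r * C) * (l - r) ^ 2 * (t * (r * dampedSlope w w' t r))
          + A * (2 * (δ * (l - r) ^ 2 - 2 * r * (l - r)) * (t * (r * dampedSlope w w' t r))
            + (l - r) ^ 2 * (t * (r ^ 2 * dampedCurvature w w' w'' t r))))) := by
  rw [adjointTestSlope, adjointTestCurvature, cutoff]
  linear_combination ((r * B - r * C) * (t * damped w t r)
      + 2 * A * (t * (r * dampedSlope w w' t r))) * mul_cutoffSlope (q := δ) (L := l) hr
    + A * (t * damped w t r) * sq_mul_cutoffCurvature (q := δ) (L := l) hr

theorem mul_add_le_adjointConst_mul {y : ℝ} (hδ : 0 < δ * c₀ * l ^ 2) (hA : 0 < c₀ + 3 * C₀)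
    (hr : 0 ≤ r) (hr₁ : r ≤ 1) (ht : t ∈ Icc (0 : ℝ) 1) (hy : 0 ≤ y) (hry : r ^ 2 * y ≤ 2) :
    (1 - (1 + t * y)⁻¹) * (-(δ * c₀ * l ^ 2) + (c₀ + 3 * C₀) * r) + 22 * C₀ * (1 + t * y)⁻¹
      ≤ -(δ * c₀ * l ^ 2 / 2) + (adjointConst δ c₀ C₀ l - 1) * (1 + t * y)⁻¹ := by
  have inv_nonneg : 0 ≤ (1 + t * y)⁻¹ := inv_nonneg.2 (by nlinarith [mul_nonneg ht.1 hy])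
  have := mul_le_add_mul_inv_one_add hA (half_pos hδ) hr₁ ht hy hry
  have := mul_nonneg inv_nonneg (mul_nonneg hA.le hr)
  rw [adjointConst]
  linarith

namespace HasCoefficientBounds
variable (h : HasCoefficientBounds δ c₀ C₀ L a a' c w w' w'')
include h

theorem abs_mul_sub_le (hr : r ∈ Ioc 0 L) : |r * a' r - r * c r| ≤ 2 * C₀ * (r ^ 2 * w r) := by
  linarith [abs_sub (r * a' r) (r * c r), h.abs_mul_slope_le r hr, h.abs_mul_drift_le r hr]

theorem abs_mul_mul_dampedSlope_le (ht : 0 ≤ t) (hr : r ∈ Ioc 0 L) :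
    |t * (r * dampedSlope w w' t r)| ≤ 2 * (1 + t * w r)⁻¹ := by
  have hw := (h.weight_pos r hr).le
  have := zero_le_one.trans (one_le_one_add_mul_weight hw ht)
  rw [abs_mul, abs_of_nonneg ht]
  calc t * |r * dampedSlope w w' t r| ≤ t * (2 * damped w t r * (1 + t * w r)⁻¹) := by
        gcongr
        exact DegenerateParabolic.abs_mul_dampedSlope_le hw ht (h.abs_mul_weight_slope_le r hr)
    _ = t * damped w t r * (2 * (1 + t * w r)⁻¹) := by ring
    _ ≤ 2 * (1 + t * w r)⁻¹ := mul_le_of_le_one_left (by positivity) (mul_damped_le_one hw ht)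

theorem abs_mul_sq_mul_dampedCurvature_le (ht : 0 ≤ t) (hr : r ∈ Ioc 0 L) :
    |t * (r ^ 2 * dampedCurvature w w' w'' t r)| ≤ 14 * (1 + t * w r)⁻¹ := by
  have hw := (h.weight_pos r hr).le
  have := zero_le_one.trans (one_le_one_add_mul_weight hw ht)
  rw [abs_mul, abs_of_nonneg ht]
  calc t * |r ^ 2 * dampedCurvature w w' w'' t r|
      ≤ t * ((6 + 2 * 2 ^ 2) * damped w t r * (1 + t * w r)⁻¹) := by
        gcongr
        exact abs_sq_mul_dampedCurvature_le hw ht (h.abs_mul_weight_slope_le r hr)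
          (h.abs_sq_mul_weight_curvature_le r hr)
    _ = t * damped w t r * (14 * (1 + t * w r)⁻¹) := by ring
    _ ≤ 14 * (1 + t * w r)⁻¹ := mul_le_of_le_one_left (by positivity) (mul_damped_le_one hw ht)

theorem adjoint_space_le (hδ : 0 < δ) (hδ₁ : δ ≤ 1) (hc₀ : 0 < c₀) (hlL : l ≤ L) (hl : l ≤ 1 / 2)
    (ht : t ∈ Icc (0 : ℝ) 1) (hr : r ∈ Ioc 0 l) :
    (a' r - c r) * adjointTestSlope δ l w w' t r + a r * adjointTestCurvature δ l w w' w'' t r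
      ≤ r ^ δ * w r * (-(δ * c₀ * l ^ 2 / 2) + (adjointConst δ c₀ C₀ l - 1) * (1 + t * w r)⁻¹) := by
  have hrL : r ∈ Ioc 0 L := ⟨hr.1, hr.2.trans hlL⟩
  have r_pos := hr.1
  have hw := h.weight_pos r hrL
  have C₀_pos := h.const_pos hrL
  have m_pos := h.sq_mul_weight_pos hrL
  have A_pos := h.pos r hrL
  have main := adjoint_cutoff_le hδ.le hδ₁ hc₀.le C₀_pos.le m_pos.le A_pos.le (h.le_weight r hrL)
    (h.abs_mul_sub_le hrL) (by linarith [h.dissipation r hrL]) hr.1.le (sub_nonneg.2 hr.2)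
    (add_sub_cancel r l) hl
  have cross := adjoint_cross_le hδ.le hδ₁ C₀_pos.le m_pos.le A_pos.le
    (h.le_weight r hrL) (h.abs_mul_sub_le hrL) hr.1.le (sub_nonneg.2 hr.2) (by linarith)
    (h.abs_mul_mul_dampedSlope_le ht.1 hrL) (h.abs_mul_sq_mul_dampedCurvature_le ht.1 hrL)
  have q_nonneg := mul_nonneg ht.1 (damped_nonneg hw.le ht.1)
  have q_eq := mul_damped_eq hw.le ht.1
  refine le_of_mul_le_mul_left ?_ (pow_pos r_pos 2)
  rw [sq_mul_adjoint_space_eq r_pos]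
  refine (mul_le_mul_of_nonneg_left (add_le_add (mul_le_mul_of_nonneg_left main q_nonneg) cross)
    (Real.rpow_nonneg r_pos.le δ)).trans ?_
  rw [q_eq]
  have scalar := mul_add_le_adjointConst_mul (δ := δ) (c₀ := c₀) (C₀ := C₀) (l := l)
    (by have := hr.1.trans_le hr.2; positivity) (by positivity) r_pos.le (by linarith [hr.2])
    ht hw.le (h.sq_mul_weight_le r hrL)
  calc r ^ δ * ((1 - (1 + t * w r)⁻¹)
          * (r ^ 2 * w r * (-(δ * c₀ * l ^ 2) + (c₀ + 3 * C₀) * r))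
        + 22 * C₀ * (r ^ 2 * w r) * (1 + t * w r)⁻¹)
      = r ^ 2 * (r ^ δ * w r) * ((1 - (1 + t * w r)⁻¹)
          * (-(δ * c₀ * l ^ 2) + (c₀ + 3 * C₀) * r) + 22 * C₀ * (1 + t * w r)⁻¹) := by ring
    _ ≤ r ^ 2 * (r ^ δ * w r) * _ := mul_le_mul_of_nonneg_left scalar (by positivity)
    _ = _ := by ring

theorem adjoint_le (hδ : 0 < δ) (hδ₁ : δ ≤ 1) (hc₀ : 0 < c₀) (hlL : l ≤ L) (hl : l ≤ 1 / 2)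
    (ht : t ∈ Icc (0 : ℝ) 1) (hr : r ∈ Ioc 0 l) :
    cutoff δ l r * (1 * damped w t r + t * -damped w t r ^ 2)
        + (a' r * adjointTestSlope δ l w w' t r + a r * adjointTestCurvature δ l w w' w'' t r)
        - c r * adjointTestSlope δ l w w' t r
      ≤ r ^ δ * (adjointConst δ c₀ C₀ l * damped w t r - δ * c₀ * l ^ 2 / 2 * w r) := by
  have hw := (h.weight_pos r ⟨hr.1, hr.2.trans hlL⟩).le
  have N_nonneg := damped_nonneg hw ht.1
  have speed_le : cutoff δ l r * (1 * damped w t r + t * -damped w t r ^ 2)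
      ≤ r ^ δ * damped w t r := by
    have := mul_nonneg ht.1 (sq_nonneg (damped w t r))
    exact mul_le_mul (cutoff_le hr.1.le hr.2 (by linarith)) (by linarith)
      (by linarith [mul_le_of_le_one_left N_nonneg (mul_damped_le_one hw ht.1)])
      (Real.rpow_nonneg hr.1.le δ)
  have space_le := h.adjoint_space_le hδ hδ₁ hc₀ hlL hl ht hr
  rw [damped_eq_mul_inv] at speed_le ⊢
  linarith

theorem isAdjointTest (hδ : 0 < δ) (hδ₁ : δ ≤ 1) (hc₀ : 0 < c₀) (hlL : l ≤ L) (hl : l ≤ 1 / 2)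
    (hσ : 0 < σ) :
    IsAdjointTest a a' c 0 1 σ l (adjointTest δ l w)
      (fun t r => cutoff δ l r * (1 * damped w t r + t * -damped w t r ^ 2))
      (adjointTestSlope δ l w w') (adjointTestCurvature δ l w w' w'')
      (fun t r => r ^ δ * (adjointConst δ c₀ C₀ l * damped w t r - δ * c₀ * l ^ 2 / 2 * w r)) := by
  have mem : ∀ r ∈ Icc σ l, r ∈ Ioc 0 L := fun r hr => ⟨hσ.trans_le hr.1, hr.2.trans hlL⟩
  have w_nonneg : ∀ r ∈ Icc σ l, 0 ≤ w r := fun r hr => (h.weight_pos r (mem r hr)).le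
  have snd_mem := mapsTo_snd_prod (Icc (0 : ℝ) 1) (Icc σ l)
  have time_mono : Icc (0 : ℝ) 1 ×ˢ Icc σ l ⊆ Ici 0 ×ˢ Icc σ l :=
    prod_mono_left Icc_subset_Ici_self
  have cw := h.continuousOn_weight.mono mem
  have cN := (continuousOn_damped cw w_nonneg).mono time_mono
  have cN₁ := (continuousOn_dampedSlope cw (h.continuousOn_weight_slope.mono mem) w_nonneg).mono
    time_mono
  have c_cut : ContinuousOn (cutoff δ l) (Icc σ l) := fun r hr =>
    (hasDerivAt_cutoff (mem r hr).1).continuousAt.continuousWithinAt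
  have c_cut₁ : ContinuousOn (cutoffSlope δ l) (Icc σ l) := fun r hr =>
    (hasDerivAt_cutoffSlope (mem r hr).1).continuousAt.continuousWithinAt
  have c_rpow := continuousOn_rpow_of_pos δ fun r (hr : r ∈ Icc σ l) => (mem r hr).1
  have slope_deriv : ∀ t ∈ Icc (0 : ℝ) 1, ∀ r ∈ Icc σ l,
      HasDerivAt (fun r => t * damped w t r) (t * dampedSlope w w' t r) r := fun t ht r hr =>
    (hasDerivAt_damped_space (w_nonneg r hr) ht.1 (h.hasDerivAt_weight r (mem r hr))).const_mul t
  exact {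
    hasDerivAt_time := fun t ht r hr =>
      ((hasDerivAt_id t).fun_mul (hasDerivAt_damped_time (w_nonneg r hr) ht.1)).const_mul _
    hasDerivAt_space := fun t ht r hr =>
      (hasDerivAt_cutoff (mem r hr).1).fun_mul (slope_deriv t ht r hr)
    slope_hasDerivAt := fun t ht r hr =>
      ((hasDerivAt_cutoffSlope (mem r hr).1).fun_mul (slope_deriv t ht r hr)).fun_add
        ((hasDerivAt_cutoff (mem r hr).1).fun_mul ((hasDerivAt_dampedSlope (w_nonneg r hr) ht.1
          (h.hasDerivAt_weight r (mem r hr)) (h.hasDerivAt_weight_slope r (mem r hr))).const_mul t))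
    continuousOn := by unfold adjointTest; fun_prop (disch := assumption)
    continuousOn_speed := by fun_prop (disch := assumption)
    continuousOn_slope := by unfold adjointTestSlope; fun_prop (disch := assumption)
    continuousOn_bound := by fun_prop (disch := assumption)
    nonneg := fun t ht r hr => mul_nonneg (cutoff_nonneg (mem r hr).1.le)
      (mul_nonneg ht.1 (damped_nonneg (w_nonneg r hr) ht.1))
    adjoint_le := fun t ht r hr =>
      h.adjoint_le hδ hδ₁ hc₀ hlL hl ht ⟨(mem r hr).1, hr.2⟩
    initial_eq_zero := fun r _ => by rw [adjointTest, zero_mul, mul_zero]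
    right_eq_zero := fun t _ => by rw [adjointTest, cutoff_self, zero_mul]
    right_slope_eq_zero := fun t _ => by
      rw [adjointTestSlope, cutoff_self, cutoffSlope_self, zero_mul, zero_mul, add_zero] }

end HasCoefficientBounds
end AdjointTest

section SlopeEstimate

/-- The constant `E` in the energy estimate `∫ W g² ≤ 4 B K σ ^ δ + B² E`. -/
noncomputable def energyConst (δ C₀ : ℝ) : ℝ := C₀ / δ + (4 + C₀ ^ 2) ^ 2 * (24 / δ ^ 2)

/-- The constant in the weighted `L¹` bound for the slope of a regular solution. -/
noncomputable def slopeConst (δ c₀ C₀ L : ℝ) : ℝ :=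
  (1 + 6 * C₀ + |adjointConst δ c₀ C₀ (L / 2)|
    * ((4 + energyConst δ C₀) / (L / 2) ^ 2 + 24 / δ ^ 2)) / (δ * c₀ * (L / 2) ^ 2 / 2)

theorem setIntegral_le_mul_add_mul {t₀ t₁ x₀ x₁ x₂ k k' : ℝ} {E G M : ℝ → ℝ → ℝ} (hx : x₁ ≤ x₂)
    (cE : ContinuousOn (uncurry E) (Icc t₀ t₁ ×ˢ Icc x₀ x₂))
    (cG : ContinuousOn (uncurry G) (Icc t₀ t₁ ×ˢ Icc x₀ x₂))
    (cM : ContinuousOn (uncurry M) (Icc t₀ t₁ ×ˢ Icc x₀ x₂))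
    (hle : ∀ t ∈ Icc t₀ t₁, ∀ r ∈ Icc x₀ x₁, E t r ≤ k * G t r + k' * M t r)
    (nonneg : ∀ t ∈ Icc t₀ t₁, ∀ r ∈ Icc x₀ x₂, 0 ≤ k * G t r + k' * M t r) :
    ∫ p in Icc t₀ t₁ ×ˢ Icc x₀ x₁, uncurry E p
      ≤ k * (∫ p in Icc t₀ t₁ ×ˢ Icc x₀ x₂, uncurry G p)
        + k' * ∫ p in Icc t₀ t₁ ×ˢ Icc x₀ x₂, uncurry M p := by
  have sub : Icc t₀ t₁ ×ˢ Icc x₀ x₁ ⊆ Icc t₀ t₁ ×ˢ Icc x₀ x₂ :=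
    prod_mono_right (Icc_subset_Icc_right hx)
  have iG := (integrableOn_rectangle cG).const_mul k
  have iM := (integrableOn_rectangle cM).const_mul k'
  have iF : IntegrableOn (fun p => k * uncurry G p + k' * uncurry M p)
      (Icc t₀ t₁ ×ˢ Icc x₀ x₂) := iG.add iM
  rw [← integral_const_mul, ← integral_const_mul, ← integral_add iG iM]
  refine (setIntegral_mono_on ((integrableOn_rectangle cE).mono_set sub) (iF.mono_set sub)
    (measurableSet_Icc.prod measurableSet_Icc) fun p hp => hle _ hp.1 _ hp.2).trans
    (setIntegral_mono_set iF ?_ (ae_of_all _ sub))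
  filter_upwards [ae_restrict_mem (measurableSet_Icc.prod measurableSet_Icc)] with p hp
  exact nonneg _ hp.1 _ hp.2

theorem energyConst_nonneg {δ C₀ : ℝ} (hδ : 0 ≤ δ) (hC₀ : 0 ≤ C₀) : 0 ≤ energyConst δ C₀ := by
  unfold energyConst
  positivity

theorem abs_le_inv_mul_sq_add {x B : ℝ} (hB : 0 < B) : |x| ≤ B⁻¹ * x ^ 2 + B := by
  have : B⁻¹ * x ^ 2 + B = (|x| ^ 2 + B ^ 2) / B := by
    rw [sq_abs]
    field_simp
  rw [this, le_div_iff₀ hB]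
  nlinarith [sq_nonneg (|x| - B), sq_nonneg (|x| + B)]

theorem inv_mul_add_mul_le {B E b m y : ℝ} (hB : 0 < B) (hE : 0 ≤ E) (hb : 0 ≤ b) (hm : 0 < m)
    (hy : 0 ≤ y) :
    (B * m)⁻¹ * (B * (4 * y) + B ^ 2 * E) + B * b ≤ ((4 + E) / m + b) * (B + y) :=
  calc (B * m)⁻¹ * (B * (4 * y) + B ^ 2 * E) + B * b = (4 * y + E * B) / m + b * B := by
        field_simp
    _ ≤ (4 + E) * (B + y) / m + b * (B + y) := by
        gcongr
        · linarith [mul_nonneg hE hy]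
        · exact le_add_of_nonneg_right hy
    _ = ((4 + E) / m + b) * (B + y) := by ring

namespace HasCoefficientBounds

variable {δ c₀ C₀ L : ℝ} {a a' c w w' w'' : ℝ → ℝ} {t σ B K : ℝ} {u g gr ut gt : ℝ → ℝ → ℝ}
  (h : HasCoefficientBounds δ c₀ C₀ L a a' c w w' w'')
include h

theorem cutoff_mul_damped_mul_abs_le (hL : L ≤ 1) (ht : 0 ≤ t) (hσ : σ ∈ Ioc 0 L) {y : ℝ}
    (hy : |y| ≤ K * σ) : cutoff (1 + δ) L σ * damped w t σ * |y| ≤ 2 * K * σ ^ δ := by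
  have σ_pos := hσ.1
  have hw := (h.weight_pos σ hσ).le
  have K_nonneg : 0 ≤ K := nonneg_of_mul_nonneg_left ((abs_nonneg y).trans hy) σ_pos
  calc cutoff (1 + δ) L σ * damped w t σ * |y| ≤ σ ^ (1 + δ) * w σ * (K * σ) := by
        gcongr
        · exact damped_nonneg hw ht
        · exact cutoff_le σ_pos.le hσ.2 hL
        · exact damped_le hw ht
    _ = σ ^ 2 * w σ * (K * σ ^ δ) := by
        rw [Real.rpow_add σ_pos, Real.rpow_one]
        ring
    _ ≤ 2 * (K * σ ^ δ) := by
        gcongr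
        exact h.sq_mul_weight_le σ hσ
    _ = 2 * K * σ ^ δ := by ring

theorem intervalIntegral_initial_energy_le (hδ : 0 < δ) (hL : L ≤ 1) (hσ : 0 < σ) (hσL : σ ≤ L) :
    ∫ r in σ..L, cutoff (1 + δ) L r * damped w 0 r / a r ≤ C₀ / δ := by
  have mem : ∀ r ∈ Icc σ L, r ∈ Ioc 0 L := fun r hr => ⟨hσ.trans_le hr.1, hr.2⟩
  have c_rpow := continuousOn_rpow_of_pos (δ - 1) fun r hr => (mem r hr).1
  have pointwise : ∀ r ∈ Icc σ L,
      cutoff (1 + δ) L r * damped w 0 r / a r ≤ C₀ * r ^ (δ - 1) := fun r hr => by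
    have r_pos := (mem r hr).1
    have hw := (h.weight_pos r (mem r hr)).le
    have power : r ^ (1 + δ) = r ^ 2 * r ^ (δ - 1) := by
      rw [← Real.rpow_two, ← Real.rpow_add r_pos]
      ring_nf
    rw [div_le_iff₀ (h.pos r (mem r hr))]
    calc cutoff (1 + δ) L r * damped w 0 r ≤ r ^ (1 + δ) * w r :=
          mul_le_mul (cutoff_le r_pos.le hr.2 hL) (damped_le hw le_rfl) (damped_nonneg hw le_rfl)
            (Real.rpow_nonneg r_pos.le _)
      _ = r ^ (δ - 1) * (r ^ 2 * w r) := by rw [power]; ring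
      _ ≤ r ^ (δ - 1) * (C₀ * a r) :=
          mul_le_mul_of_nonneg_left (h.weight_le r (mem r hr)) (Real.rpow_nonneg r_pos.le _)
      _ = C₀ * r ^ (δ - 1) * a r := by ring
  have cont : ContinuousOn (fun r => cutoff (1 + δ) L r * damped w 0 r / a r) (Icc σ L) :=
    ((ContinuousOn.mul (fun r hr => (hasDerivAt_cutoff
      (mem r hr).1).continuousAt.continuousWithinAt) ((continuousOn_damped
      (h.continuousOn_weight.mono mem) fun r hr => (h.weight_pos r (mem r hr)).le).uncurry_left 0
      self_mem_Ici)).div (h.continuousOn_diffusion.mono mem) fun r hr => (h.pos r (mem r hr)).ne')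
  calc ∫ r in σ..L, cutoff (1 + δ) L r * damped w 0 r / a r ≤ ∫ r in σ..L, C₀ * r ^ (δ - 1) :=
        intervalIntegral.integral_mono_on hσL (cont.intervalIntegrable_of_Icc hσL)
          ((c_rpow.const_mul C₀).intervalIntegrable_of_Icc hσL) pointwise
    _ ≤ C₀ * (1 / δ) := by
        rw [intervalIntegral.integral_const_mul]
        exact mul_le_mul_of_nonneg_left (intervalIntegral_rpow_sub_one_le hδ hσ hσL hL)
          (h.const_pos (mem L ⟨hσL, le_rfl⟩)).le
    _ = C₀ / δ := mul_one_div _ _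

variable (hu : IsRegularSolution a c (Icc 0 1) (Icc σ L) u g gr ut gt)
include hu

theorem setIntegral_cutoff_mul_damped_mul_slope_sq_le (hδ : 0 < δ) (hδ₁ : δ ≤ 1) (hL : L ≤ 1)
    (hσ : 0 < σ) (hσL : σ ≤ L) (hB : ∀ t ∈ Icc (0 : ℝ) 1, ∀ r ∈ Icc σ L, |u t r| ≤ B)
    (hg : ∀ t ∈ Icc (0 : ℝ) 1, |g t σ| ≤ K * σ) :
    ∫ p in Icc 0 1 ×ˢ Icc σ L,
        uncurry (fun t r => cutoff (1 + δ) L r * damped w t r * g t r ^ 2) p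
      ≤ B * (4 * K * σ ^ δ) + B ^ 2 * energyConst δ C₀ := by
  have mem : ∀ r ∈ Icc σ L, r ∈ Ioc 0 L := fun r hr => ⟨hσ.trans_le hr.1, hr.2⟩
  refine (setIntegral_weight_mul_slope_sq_le hu (h.isEnergyWeight hδ hδ₁ hL hσ) zero_le_one hσL
    (h.continuousOn_diffusion.mono mem) (fun r hr => h.pos r (mem r hr)) hB
    fun t ht => h.cutoff_mul_damped_mul_abs_le hL ht.1 ⟨hσ, hσL⟩ (hg t ht)).trans ?_
  have initial := h.intervalIntegral_initial_energy_le hδ hL hσ hσL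
  have bulk : ∫ p in Icc 0 1 ×ˢ Icc σ L,
      uncurry (fun t r => (4 + C₀ ^ 2) ^ 2 * (r ^ (δ - 1) * damped w t r)) p
      ≤ (4 + C₀ ^ 2) ^ 2 * (24 / δ ^ 2) := by
    refine (integral_const_mul _ (uncurry fun t r => r ^ (δ - 1) * damped w t r)).trans_le ?_
    exact mul_le_mul_of_nonneg_left (setIntegral_rpow_mul_damped_le hδ (by linarith) hσ hσL hL
      (h.continuousOn_weight.mono mem) (fun r hr => (h.weight_pos r (mem r hr)).le)
      fun r hr => h.sq_mul_weight_le r (mem r hr)) (by positivity)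
  have := mul_le_mul_of_nonneg_left (add_le_add initial bulk) (sq_nonneg B)
  rw [energyConst]
  linarith

omit hu in
theorem rpow_mul_damped_mul_abs_le {r y : ℝ} (hB : 0 < B) (ht : 0 ≤ t) (hr : r ∈ Ioc 0 (L / 2)) :
    r ^ δ * damped w t r * |y|
      ≤ (B * (L / 2) ^ 2)⁻¹ * (cutoff (1 + δ) L r * damped w t r * y ^ 2)
        + B * (r ^ (δ - 1) * damped w t r) := by
  have r_pos := hr.1
  have hL : 0 < L / 2 := hr.1.trans_le hr.2
  have N_nonneg := damped_nonneg (h.weight_pos r ⟨hr.1, hr.2.trans (by linarith)⟩).le ht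
  have power : r ^ δ = r * r ^ (δ - 1) := by
    rw [Real.rpow_sub_one r_pos.ne', mul_div_cancel₀ _ r_pos.ne']
  have power' : r ^ (1 + δ) = r ^ 2 * r ^ (δ - 1) := by
    rw [← Real.rpow_two, ← Real.rpow_add r_pos]
    ring_nf
  have young : r * |y| ≤ B⁻¹ * (r * y) ^ 2 + B := by
    simpa only [abs_mul, abs_of_pos r_pos] using abs_le_inv_mul_sq_add (x := r * y) hB
  have cut_ge : 1 ≤ ((L / 2) ^ 2)⁻¹ * (L - r) ^ 2 := by
    rw [← div_eq_inv_mul, one_le_div (by positivity)]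
    exact pow_le_pow_left₀ hL.le (by linarith [hr.2]) 2
  calc r ^ δ * damped w t r * |y| = r ^ (δ - 1) * damped w t r * (r * |y|) := by
        rw [power]
        ring
    _ ≤ r ^ (δ - 1) * damped w t r
          * (((L / 2) ^ 2)⁻¹ * (L - r) ^ 2 * (B⁻¹ * (r * y) ^ 2) + B) := by
        gcongr
        exact young.trans (add_le_add_left (le_mul_of_one_le_left (by positivity) cut_ge) B)
    _ = _ := by
        rw [cutoff, power', mul_inv]
        ring

theorem setIntegral_rpow_mul_damped_mul_abs_slope_le (hδ : 0 < δ) (hδ₁ : δ ≤ 1) (hL : L ≤ 1)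
    (hσ : 0 < σ) (hσL : σ ≤ L / 2) (hB₀ : 0 < B)
    (hB : ∀ t ∈ Icc (0 : ℝ) 1, ∀ r ∈ Icc σ L, |u t r| ≤ B)
    (hg : ∀ t ∈ Icc (0 : ℝ) 1, |g t σ| ≤ K * σ) :
    ∫ p in Icc 0 1 ×ˢ Icc σ (L / 2), uncurry (fun t r => r ^ δ * damped w t r * |g t r|) p
      ≤ ((4 + energyConst δ C₀) / (L / 2) ^ 2 + 24 / δ ^ 2) * (B + K * σ ^ δ) := by
  have L_pos : 0 < L := by linarith
  have mem : ∀ r ∈ Icc σ L, r ∈ Ioc 0 L := fun r hr => ⟨hσ.trans_le hr.1, hr.2⟩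
  have w_nonneg : ∀ r ∈ Icc σ L, 0 ≤ w r := fun r hr => (h.weight_pos r (mem r hr)).le
  have cN := (continuousOn_damped (h.continuousOn_weight.mono mem) w_nonneg).mono
    (prod_mono_left (Icc_subset_Ici_self : Icc (0 : ℝ) 1 ⊆ _))
  have c_cut : ContinuousOn (cutoff (1 + δ) L) (Icc σ L) := fun r hr =>
    (hasDerivAt_cutoff (mem r hr).1).continuousAt.continuousWithinAt
  have c_rpow := continuousOn_rpow_of_pos δ fun r hr => (mem r hr).1
  have c_rpow' := continuousOn_rpow_of_pos (δ - 1) fun r hr => (mem r hr).1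
  have snd_mem := mapsTo_snd_prod (Icc (0 : ℝ) 1) (Icc σ L)
  have cg := hu.continuousOn_slope
  set G := fun t r => cutoff (1 + δ) L r * damped w t r * g t r ^ 2
  set M := fun t r => r ^ (δ - 1) * damped w t r
  have E_nonneg := energyConst_nonneg hδ.le (h.const_pos (mem L (right_mem_Icc.2 (by linarith)))).le
  have y_nonneg : 0 ≤ K * σ ^ δ :=
    mul_nonneg (nonneg_of_mul_nonneg_left
      ((abs_nonneg _).trans (hg 0 (left_mem_Icc.2 zero_le_one))) hσ) (Real.rpow_nonneg hσ.le _)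
  have energy := h.setIntegral_cutoff_mul_damped_mul_slope_sq_le hu hδ hδ₁ hL hσ (by linarith)
    hB hg
  have bulk : ∫ p in Icc 0 1 ×ˢ Icc σ L, uncurry M p ≤ 24 / δ ^ 2 :=
    setIntegral_rpow_mul_damped_le hδ (by linarith) hσ (by linarith) hL
      (h.continuousOn_weight.mono mem) w_nonneg fun r hr => h.sq_mul_weight_le r (mem r hr)
  calc ∫ p in Icc 0 1 ×ˢ Icc σ (L / 2), uncurry (fun t r => r ^ δ * damped w t r * |g t r|) p
      ≤ (B * (L / 2) ^ 2)⁻¹ * (∫ p in Icc 0 1 ×ˢ Icc σ L, uncurry G p)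
          + B * ∫ p in Icc 0 1 ×ˢ Icc σ L, uncurry M p := by
        refine setIntegral_le_mul_add_mul (by linarith) (by fun_prop (disch := assumption))
          (by fun_prop (disch := assumption)) (by fun_prop (disch := assumption))
          (fun t ht r hr => h.rpow_mul_damped_mul_abs_le hB₀ ht.1 ⟨hσ.trans_le hr.1, hr.2⟩)
          fun t ht r hr => ?_
        have r_nonneg := (mem r hr).1.le
        have N_nonneg := damped_nonneg (w_nonneg r hr) ht.1
        have := cutoff_nonneg (q := 1 + δ) (L := L) r_nonneg
        have := Real.rpow_nonneg r_nonneg (δ - 1)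
        simp only [G, M]
        positivity
    _ ≤ (B * (L / 2) ^ 2)⁻¹ * (B * (4 * K * σ ^ δ) + B ^ 2 * energyConst δ C₀)
          + B * (24 / δ ^ 2) := by gcongr
    _ ≤ _ := by
        rw [mul_assoc 4 K]
        exact inv_mul_add_mul_le hB₀ E_nonneg (by positivity) (by positivity) y_nonneg

omit hu in
theorem abs_mul_adjointTestSlope_le (hδ : 0 < δ) (hδ₁ : δ ≤ 1) (ht : t ∈ Icc (0 : ℝ) 1) {l : ℝ}
    (hσ : σ ∈ Ioc 0 l) (hlL : l ≤ L) (hl : l ≤ 1 / 2) :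
    |σ * adjointTestSlope δ l w w' t σ| ≤ 3 * σ ^ δ := by
  have hσL : σ ∈ Ioc 0 L := ⟨hσ.1, hσ.2.trans hlL⟩
  have σ_pos := hσ.1
  have hw := (h.weight_pos σ hσL).le
  have tN_nonneg := mul_nonneg ht.1 (damped_nonneg hw ht.1)
  have tN_le := mul_damped_le_one hw ht.1
  have cut_nonneg := cutoff_nonneg (q := δ) (L := l) σ_pos.le
  have cut_le := cutoff_le (q := δ) σ_pos.le hσ.2 (by linarith)
  have rpow_nonneg := Real.rpow_nonneg σ_pos.le δ
  have cutSlope_le : |σ * cutoffSlope δ l σ| ≤ σ ^ δ := by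
    rw [mul_cutoffSlope σ_pos, abs_mul, abs_of_nonneg rpow_nonneg]
    refine mul_le_of_le_one_right rpow_nonneg (abs_le.2 ⟨?_, ?_⟩)
    · nlinarith [mul_nonneg hδ.le (sq_nonneg (l - σ)), hσ.2]
    · nlinarith [mul_nonneg σ_pos.le (sub_nonneg.2 hσ.2), hσ.2]
  have dampedSlope_le : |t * (σ * dampedSlope w w' t σ)| ≤ 2 :=
    (h.abs_mul_mul_dampedSlope_le ht.1 hσL).trans
      (by linarith [inv_le_one_of_one_le₀ (one_le_one_add_mul_weight hw ht.1)])
  calc |σ * adjointTestSlope δ l w w' t σ|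
      = |σ * cutoffSlope δ l σ * (t * damped w t σ)
          + cutoff δ l σ * (t * (σ * dampedSlope w w' t σ))| := by
        rw [adjointTestSlope]
        ring_nf
    _ ≤ |σ * cutoffSlope δ l σ| * (t * damped w t σ)
          + cutoff δ l σ * |t * (σ * dampedSlope w w' t σ)| := by
        refine (abs_add_le _ _).trans_eq ?_
        rw [abs_mul _ (t * _), abs_mul (cutoff δ l σ), abs_of_nonneg tN_nonneg,
          abs_of_nonneg cut_nonneg]
    _ ≤ σ ^ δ * 1 + σ ^ δ * 2 := by gcongr
    _ = 3 * σ ^ δ := by ring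

omit hu in
theorem adjointTest_mul_abs_add_le (hδ : 0 < δ) (hδ₁ : δ ≤ 1) (ht : t ∈ Icc (0 : ℝ) 1) {l : ℝ}
    (hσ : σ ∈ Ioc 0 l) (hlL : l ≤ L) (hl : l ≤ 1 / 2) {x y : ℝ} (hx : |x| ≤ K)
    (hy : |y| ≤ K * σ) :
    adjointTest δ l w t σ * |x| + a σ * |adjointTestSlope δ l w w' t σ| * |y|
      ≤ (1 + 6 * C₀) * (K * σ ^ δ) := by
  have hσL : σ ∈ Ioc 0 L := ⟨hσ.1, hσ.2.trans hlL⟩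
  have σ_pos := hσ.1
  have K_nonneg := (abs_nonneg x).trans hx
  have C₀_pos := h.const_pos hσL
  have := Real.rpow_nonneg σ_pos.le δ
  have test_le : adjointTest δ l w t σ ≤ σ ^ δ :=
    (mul_le_of_le_one_right (cutoff_nonneg σ_pos.le)
      (mul_damped_le_one (h.weight_pos σ hσL).le ht.1)).trans
      (cutoff_le σ_pos.le hσ.2 (by linarith))
  have slope_le := h.abs_mul_adjointTestSlope_le hδ hδ₁ ht hσ hlL hl
  have a_le : a σ ≤ C₀ * 2 := (h.le_weight σ hσL).trans
    (mul_le_mul_of_nonneg_left (h.sq_mul_weight_le σ hσL) C₀_pos.le)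
  calc adjointTest δ l w t σ * |x| + a σ * |adjointTestSlope δ l w w' t σ| * |y|
      ≤ σ ^ δ * K + a σ * |adjointTestSlope δ l w w' t σ| * (K * σ) := by
        have := (h.pos σ hσL).le
        gcongr
    _ = σ ^ δ * K + a σ * |σ * adjointTestSlope δ l w w' t σ| * K := by
        rw [abs_mul, abs_of_pos σ_pos]
        ring
    _ ≤ σ ^ δ * K + C₀ * 2 * (3 * σ ^ δ) * K := by gcongr
    _ = _ := by ring

theorem setIntegral_rpow_mul_weight_mul_abs_slope_le (hδ : 0 < δ) (hδ₁ : δ ≤ 1) (hc₀ : 0 < c₀)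
    (hL : L ≤ 1) (hσ : 0 < σ) (hσL : σ ≤ L / 2) (hB₀ : 0 < B)
    (hB : ∀ t ∈ Icc (0 : ℝ) 1, ∀ r ∈ Icc σ L, |u t r| ≤ B)
    (hK : ∀ t ∈ Icc (0 : ℝ) 1, |ut t σ| ≤ K)
    (hg : ∀ t ∈ Icc (0 : ℝ) 1, |g t σ| ≤ K * σ) :
    ∫ p in Icc 0 1 ×ˢ Icc σ (L / 2), uncurry (fun t r => r ^ δ * w r * |g t r|) p
      ≤ slopeConst δ c₀ C₀ L * (B + K * σ ^ δ) := by
  have L_pos : 0 < L := by linarith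
  have mem : ∀ r ∈ Icc σ (L / 2), r ∈ Ioc 0 L := fun r hr =>
    ⟨hσ.trans_le hr.1, hr.2.trans (by linarith)⟩
  have C₀_pos := h.const_pos (mem σ ⟨le_rfl, hσL⟩)
  have hu' := hu.mono Subset.rfl (Icc_subset_Icc_right (by linarith : L / 2 ≤ L))
  have cw := h.continuousOn_weight.mono mem
  have cN := (continuousOn_damped cw fun r hr => (h.weight_pos r (mem r hr)).le).mono
    (prod_mono_left (Icc_subset_Ici_self : Icc (0 : ℝ) 1 ⊆ _))
  have c_rpow := continuousOn_rpow_of_pos δ fun r hr => (mem r hr).1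
  have snd_mem := mapsTo_snd_prod (Icc (0 : ℝ) 1) (Icc σ (L / 2))
  have cg := hu'.continuousOn_slope
  set C₂ := adjointConst δ c₀ C₀ (L / 2)
  set c₂ := δ * c₀ * (L / 2) ^ 2 / 2
  have c₂_pos : 0 < c₂ := by positivity
  have kato := setIntegral_neg_adjoint_mul_abs_slope_le hu'
    (h.isAdjointTest hδ hδ₁ hc₀ (by linarith) (by linarith) hσ) zero_le_one hσL
    (fun r hr => h.hasDerivAt r (mem r hr)) (fun r hr => h.pos r (mem r hr))
    (h.continuousOn.mono mem) fun t ht => h.adjointTest_mul_abs_add_le hδ hδ₁ ht ⟨hσ, hσL⟩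
      (by linarith) (by linarith) (hK t ht) (hg t ht)
  have damped_le := h.setIntegral_rpow_mul_damped_mul_abs_slope_le hu hδ hδ₁ hL hσ hσL hB₀ hB hg
  set G := fun t r => r ^ δ * w r * |g t r| with G_eq
  set M := fun t r => r ^ δ * damped w t r * |g t r| with M_eq
  have split : ∫ p in Icc 0 1 ×ˢ Icc σ (L / 2),
      uncurry (fun t r => -(r ^ δ * (C₂ * damped w t r - c₂ * w r)) * |g t r|) p
      = c₂ * (∫ p in Icc 0 1 ×ˢ Icc σ (L / 2), uncurry G p)
        - C₂ * ∫ p in Icc 0 1 ×ˢ Icc σ (L / 2), uncurry M p := by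
    rw [← setIntegral_const_mul_sub_const_mul (by fun_prop (disch := assumption))
      (by fun_prop (disch := assumption))]
    congr! 3
    ext
    simp only [G_eq, M_eq]
    ring
  have M_nonneg : 0 ≤ ∫ p in Icc 0 1 ×ˢ Icc σ (L / 2), uncurry M p :=
    setIntegral_nonneg (measurableSet_Icc.prod measurableSet_Icc) fun p hp =>
      mul_nonneg (mul_nonneg (Real.rpow_nonneg (mem _ hp.2).1.le _)
        (damped_nonneg (h.weight_pos _ (mem _ hp.2)).le hp.1.1)) (abs_nonneg _)
  rw [slopeConst, div_mul_eq_mul_div, le_div_iff₀ c₂_pos]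
  have := mul_le_mul (le_abs_self C₂) damped_le M_nonneg (abs_nonneg C₂)
  have : 0 ≤ (1 + 6 * C₀) * B := by positivity
  linarith

end HasCoefficientBounds
end SlopeEstimate

section SlidingIntegral

/-- The integral `∫ₜ^{t+h} f(s, r) ds`, that is, `h` times the forward average of `f` in time. -/
noncomputable def slidingIntegral (h : ℝ) (f : ℝ → ℝ → ℝ) (t r : ℝ) : ℝ :=
  ∫ s in t..t + h, f s r

variable {f g : ℝ → ℝ → ℝ} {J : Set ℝ} {h t r : ℝ}

theorem Icc_add_subset_Ioi (ht : 0 < t) : Icc t (t + h) ⊆ Ioi 0 :=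
  fun _ hs => ht.trans_le hs.1

theorem intervalIntegrable_of_continuousOn_Ioi {k : ℝ → ℝ} {x y : ℝ}
    (hk : ContinuousOn k (Ioi 0)) (hx : 0 < x) (hy : 0 < y) : IntervalIntegrable k volume x y :=
  (hk.mono (ordConnected_Ioi.uIcc_subset hx hy)).intervalIntegrable

theorem hasDerivAt_integral_of_continuousOn_Ioi {k : ℝ → ℝ} {x y : ℝ}
    (hk : ContinuousOn k (Ioi 0)) (hx : 0 < x) (hy : 0 < y) :
    HasDerivAt (fun z => ∫ s in x..z, k s) (k y) y :=
  intervalIntegral.integral_hasDerivAt_right (intervalIntegrable_of_continuousOn_Ioi hk hx hy)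
    (hk.stronglyMeasurableAtFilter isOpen_Ioi y hy) (hk.continuousAt (Ioi_mem_nhds hy))

theorem slidingIntegral_eq_integral_add :
    slidingIntegral h f t r = ∫ θ in 0..h, f (t + θ) r := by
  rw [intervalIntegral.integral_comp_add_left (fun s => f s r), add_zero, slidingIntegral]

theorem continuousOn_slidingIntegral (hh : 0 ≤ h)
    (hf : ContinuousOn (uncurry f) (Ioi 0 ×ˢ J)) :
    ContinuousOn (uncurry (slidingIntegral h f)) (Ioi 0 ×ˢ J) := by
  refine (continuousOn_intervalIntegral_of_uncurry (F := fun (p : ℝ × ℝ) θ => f (p.1 + θ) p.2)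
    hh ?_).congr fun p _ => slidingIntegral_eq_integral_add
  exact hf.comp (f := fun q : (ℝ × ℝ) × ℝ => (q.1.1 + q.2, q.1.2)) (by fun_prop)
    fun q hq => ⟨add_pos_of_pos_of_nonneg hq.1.1 hq.2.1, hq.1.2⟩

theorem hasDerivAt_slidingIntegral_time (hh : 0 ≤ h) (hf : ContinuousOn (fun τ => f τ r) (Ioi 0))
    (ht : 0 < t) : HasDerivAt (fun τ => slidingIntegral h f τ r) (f (t + h) r - f t r) t := by
  have upper := (hasDerivAt_integral_of_continuousOn_Ioi hf ht
    (add_pos_of_pos_of_nonneg ht hh)).comp_add_const t h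
  refine (upper.sub (hasDerivAt_integral_of_continuousOn_Ioi hf ht ht)).congr_of_eventuallyEq ?_
  filter_upwards [Ioi_mem_nhds ht] with τ hτ
  exact (intervalIntegral.integral_interval_sub_left
    (intervalIntegrable_of_continuousOn_Ioi hf ht (add_pos_of_pos_of_nonneg hτ hh))
    (intervalIntegrable_of_continuousOn_Ioi hf ht hτ)).symm

theorem hasDerivAt_slidingIntegral_space (hh : 0 ≤ h) (hJ : IsOpen J)
    (hf : ContinuousOn (uncurry f) (Ioi 0 ×ˢ J)) (hg : ContinuousOn (uncurry g) (Ioi 0 ×ˢ J))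
    (hderiv : ∀ t, 0 < t → ∀ r ∈ J, HasDerivAt (f t) (g t r) r) (ht : 0 < t) (hr : r ∈ J) :
    HasDerivAt (slidingIntegral h f t) (slidingIntegral h g t r) r := by
  obtain ⟨ρ, hρ, ball_subset⟩ := Metric.nhds_basis_closedBall.mem_iff.1 (hJ.mem_nhds hr)
  have times := Icc_add_subset_Ioi (h := h) ht
  have integrable_slice (k : ℝ → ℝ → ℝ) (hk : ContinuousOn (uncurry k) (Ioi 0 ×ˢ J)) (y : ℝ)
      (hy : y ∈ J) : IntervalIntegrable (fun s => k s y) volume t (t + h) :=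
    ((hk.uncurry_right y hy).mono times).intervalIntegrable_of_Icc (by linarith)
  obtain ⟨C, hC⟩ := (isCompact_Icc.prod (isCompact_closedBall r ρ)).exists_bound_of_continuousOn
    (hg.mono (prod_mono times ball_subset))
  have mem_times {s : ℝ} (hs : s ∈ uIoc t (t + h)) : s ∈ Icc t (t + h) := by
    rw [uIoc_of_le (by linarith)] at hs
    exact Ioc_subset_Icc_self hs
  refine (intervalIntegral.hasDerivAt_integral_of_dominated_loc_of_deriv_le
    (F := fun y s => f s y) (F' := fun y s => g s y) (bound := fun _ => C)
    (Metric.closedBall_mem_nhds r hρ) ?_ (integrable_slice f hf r hr)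
    (integrable_slice g hg r hr).def'.aestronglyMeasurable (ae_of_all _ fun s hs y hy => ?_)
    intervalIntegrable_const (ae_of_all _ fun s hs y hy => ?_)).2
  · filter_upwards [hJ.mem_nhds hr] with y hy
    exact (integrable_slice f hf y hy).def'.aestronglyMeasurable
  · exact hC (s, y) ⟨mem_times hs, hy⟩
  · exact hderiv s (times (mem_times hs)) y (ball_subset hy)

theorem abs_slidingIntegral_sub_mul_le {y ε : ℝ} (hh : 0 ≤ h)
    (hf : ContinuousOn (fun s => f s r) (Icc t (t + h)))
    (hε : ∀ s ∈ Icc t (t + h), |f s r - y| ≤ ε) : |slidingIntegral h f t r - h * y| ≤ ε * h := by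
  have le_add : t ≤ t + h := by linarith
  have as_integral : slidingIntegral h f t r - h * y = ∫ s in t..t + h, (f s r - y) := by
    rw [intervalIntegral.integral_sub (hf.intervalIntegrable_of_Icc le_add)
      (intervalIntegrable_const (c := y)), intervalIntegral.integral_const, add_sub_cancel_left,
      smul_eq_mul, slidingIntegral]
  have bound : ‖∫ s in t..t + h, (f s r - y)‖ ≤ ε * |t + h - t| := by
    refine intervalIntegral.norm_integral_le_of_norm_le_const fun s hs => ?_
    rw [uIoc_of_le le_add] at hs
    exact hε s (Ioc_subset_Icc_self hs)
  rwa [add_sub_cancel_left, abs_of_nonneg hh, ← as_integral] at bound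

theorem abs_slidingIntegral_le {B : ℝ} (hh : 0 ≤ h)
    (hf : ContinuousOn (fun s => f s r) (Icc t (t + h)))
    (hB : ∀ s ∈ Icc t (t + h), |f s r| ≤ B) : |slidingIntegral h f t r| ≤ B * h := by
  simpa using abs_slidingIntegral_sub_mul_le (y := 0) hh hf (by simpa using hB)

/-- The left Riemann sum with `n` nodes for `slidingIntegral h f`, a combination of time
translates of `f`. -/
noncomputable def translateSum (n : ℕ) (h : ℝ) (f : ℝ → ℝ → ℝ) (t r : ℝ) : ℝ :=
  ∑ i ∈ Finset.range n, h / n * f (t + i * (h / n)) r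

theorem sum_slidingIntegral (n : ℕ) (hh : 0 ≤ h) (hf : ContinuousOn (fun s => f s r) (Ioi 0))
    (ht : 0 < t) :
    ∑ i ∈ Finset.range n, slidingIntegral h f (t + i * h) r = slidingIntegral (n * h) f t r := by
  have node_pos (i : ℕ) : 0 < t + i * h := by positivity
  simpa [slidingIntegral, add_mul, add_assoc] using
    intervalIntegral.sum_integral_adjacent_intervals (a := fun i : ℕ => t + i * h) (n := n)
      fun i _ => intervalIntegrable_of_continuousOn_Ioi hf (node_pos i) (node_pos (i + 1))

theorem abs_translateSum_sub_slidingIntegral_le {n : ℕ} {ε : ℝ} (hn : n ≠ 0) (hh : 0 ≤ h)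
    (hf : ContinuousOn (fun s => f s r) (Ioi 0)) (ht : 0 < t)
    (hε : ∀ s ∈ Icc t (t + h), ∀ s' ∈ Icc t (t + h), |s - s'| ≤ h / n → |f s r - f s' r| ≤ ε) :
    |translateSum n h f t r - slidingIntegral h f t r| ≤ ε * h := by
  have step_nonneg : 0 ≤ h / n := by positivity
  have total : n * (h / n) = h := mul_div_cancel₀ h (Nat.cast_ne_zero.2 hn)
  have cell (i : ℕ) (hi : i ∈ Finset.range n) :
      |h / n * f (t + i * (h / n)) r - slidingIntegral (h / n) f (t + i * (h / n)) r|
        ≤ ε * (h / n) := by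
    have node_pos : 0 < t + i * (h / n) := by positivity
    have next_le : i * (h / n) + h / n ≤ h := by
      calc i * (h / n) + h / n = ((i + 1 : ℕ) : ℝ) * (h / n) := by push_cast; ring
        _ ≤ n * (h / n) := by gcongr; exact Finset.mem_range.1 hi
        _ = h := total
    have start_nonneg : 0 ≤ i * (h / n) := by positivity
    rw [abs_sub_comm]
    refine abs_slidingIntegral_sub_mul_le step_nonneg (hf.mono (Icc_add_subset_Ioi node_pos))
      fun s hs => hε s ⟨by linarith [hs.1], by linarith [hs.2]⟩ _
        ⟨by linarith, by linarith⟩ ?_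
    rw [abs_of_nonneg (by linarith [hs.1])]
    linarith [hs.2]
  have split := sum_slidingIntegral n step_nonneg hf ht
  rw [total] at split
  rw [translateSum, ← split, ← Finset.sum_sub_distrib]
  refine (Finset.abs_sum_le_sum_abs _ _).trans ((Finset.sum_le_sum cell).trans_eq ?_)
  rw [Finset.sum_const, Finset.card_range, nsmul_eq_mul, mul_left_comm, total]

theorem tendstoUniformlyOn_translateSum {t₀ t₁ : ℝ} {K : Set ℝ} (hh : 0 < h) (ht₀ : 0 < t₀)
    (hK : IsCompact K) (hf : ContinuousOn (uncurry f) (Ioi 0 ×ˢ K)) :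
    TendstoUniformlyOn (fun n => uncurry (translateSum n h f)) (uncurry (slidingIntegral h f))
      atTop (Icc t₀ t₁ ×ˢ K) := by
  rw [Metric.tendstoUniformlyOn_iff]
  intro ε hε
  have uniform : UniformContinuousOn (uncurry f) (Icc t₀ (t₁ + h) ×ˢ K) :=
    (isCompact_Icc.prod hK).uniformContinuousOn_of_continuous
      (hf.mono (prod_mono_left fun s hs => ht₀.trans_le hs.1))
  obtain ⟨η, hη, modulus⟩ := Metric.uniformContinuousOn_iff.1 uniform (ε / (2 * h)) (by positivity)
  filter_upwards [(tendsto_const_div_atTop_nhds_zero_nat h).eventually_lt_const hη,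
    eventually_ne_atTop 0] with n small hn p ⟨hp, hpK⟩
  rw [dist_comm]
  refine (abs_translateSum_sub_slidingIntegral_le hn hh.le (hf.uncurry_right p.2 hpK)
    (ht₀.trans_le hp.1) fun s hs s' hs' close =>
      (modulus (s, p.2) ⟨⟨?_, ?_⟩, hpK⟩ (s', p.2) ⟨⟨?_, ?_⟩, hpK⟩ ?_).le).trans_lt
    (?_ : ε / (2 * h) * h < ε)
  any_goals linarith [hp.1, hp.2, hs.1, hs.2, hs'.1, hs'.2]
  · simpa [Prod.dist_eq, hη, Real.dist_eq] using close.trans_lt small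
  · rw [div_mul_eq_mul_div, mul_div_mul_right _ _ hh.ne']
    exact half_lt_self hε

end SlidingIntegral

section BoundaryValueProblem

/-- `exp ∫ₓʳ c / a`, the factor `p` that puts `a S'' + c S'` in divergence form
`(a / p) (p S')'`. -/
noncomputable def integratingFactor (a c : ℝ → ℝ) (x r : ℝ) : ℝ :=
  Real.exp (∫ s in x..r, c s / a s)

/-- The part `∫ₓʳ (p / a) n` of `p S'` that is generated by the source `n` of `a S'' + c S' = n`,
with `p = integratingFactor a c x`. -/
noncomputable def sourceFlux (a c n : ℝ → ℝ) (x r : ℝ) : ℝ :=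
  ∫ s in x..r, integratingFactor a c x s / a s * n s

/-- The value at `x₁` of `S'`, where `S` solves `a S'' + c S' = n` with `S x₁ = A₁` and
`S x₂ = A₂`. -/
noncomputable def boundarySlope (a c n : ℝ → ℝ) (x₁ x₂ A₁ A₂ : ℝ) : ℝ :=
  (A₂ - A₁ - ∫ s in x₁..x₂, sourceFlux a c n x₁ s / integratingFactor a c x₁ s)
    / ∫ s in x₁..x₂, (integratingFactor a c x₁ s)⁻¹

/-- The derivative of `bvpSolution`. -/
noncomputable def bvpSlope (a c n : ℝ → ℝ) (x₁ x₂ A₁ A₂ r : ℝ) : ℝ :=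
  (boundarySlope a c n x₁ x₂ A₁ A₂ + sourceFlux a c n x₁ r) / integratingFactor a c x₁ r

/-- The solution `S` of the boundary value problem `a S'' + c S' = n`, `S x₁ = A₁`,
`S x₂ = A₂`. -/
noncomputable def bvpSolution (a c n : ℝ → ℝ) (x₁ x₂ A₁ A₂ r : ℝ) : ℝ :=
  A₁ + ∫ s in x₁..r, bvpSlope a c n x₁ x₂ A₁ A₂ s

theorem integratingFactor_pos (a c : ℝ → ℝ) (x r : ℝ) : 0 < integratingFactor a c x r :=
  Real.exp_pos _

theorem bvpSolution_left (a c n : ℝ → ℝ) (x₁ x₂ A₁ A₂ : ℝ) :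
    bvpSolution a c n x₁ x₂ A₁ A₂ x₁ = A₁ := by
  rw [bvpSolution, intervalIntegral.integral_same, add_zero]

theorem continuousOn_primitive_uncurry {X : Type*} [TopologicalSpace X] {T : Set X}
    {k : X → ℝ → ℝ} {x : ℝ} (hx : 0 < x) (hk : ContinuousOn (uncurry k) (T ×ˢ Ioi 0)) :
    ContinuousOn (uncurry fun t r => ∫ s in x..r, k t s) (T ×ˢ Ioi 0) := by
  have segment_pos {r θ : ℝ} (hr : 0 < r) (hθ : θ ∈ Icc (0 : ℝ) 1) : 0 < x + (r - x) * θ := by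
    have convex := (convex_Ioi (0 : ℝ)) (mem_Ioi.2 hx) (mem_Ioi.2 hr)
      (sub_nonneg.2 hθ.2) hθ.1 (by ring)
    simp only [smul_eq_mul, mem_Ioi] at convex
    linarith
  have unit_segment : ContinuousOn
      (fun p : X × ℝ => ∫ θ in 0..1, k p.1 (x + (p.2 - x) * θ)) (T ×ˢ Ioi 0) :=
    continuousOn_intervalIntegral_of_uncurry (F := fun (p : X × ℝ) θ => k p.1 (x + (p.2 - x) * θ))
      zero_le_one (hk.comp
        (f := fun q : (X × ℝ) × ℝ => (q.1.1, x + (q.1.2 - x) * q.2)) (by fun_prop)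
        fun q hq => ⟨hq.1.1, segment_pos hq.1.2 hq.2⟩)
  refine ((continuousOn_snd.sub (continuousOn_const (c := x))).mul unit_segment).congr fun p _ => ?_
  have substitution := intervalIntegral.smul_integral_comp_add_mul (a := 0) (b := 1) (k p.1)
    (p.2 - x) x
  simp only [mul_zero, mul_one, add_zero, add_sub_cancel, smul_eq_mul] at substitution
  exact substitution.symm

variable {a c n : ℝ → ℝ} {x x₁ x₂ A₁ A₂ r : ℝ}

theorem hasDerivAt_integratingFactor (ca : ContinuousOn a (Ioi 0)) (cc : ContinuousOn c (Ioi 0))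
    (a_ne : ∀ r, 0 < r → a r ≠ 0) (hx : 0 < x) (hr : 0 < r) :
    HasDerivAt (integratingFactor a c x) (integratingFactor a c x r * (c r / a r)) r :=
  (hasDerivAt_integral_of_continuousOn_Ioi (cc.div ca a_ne) hx hr).exp

theorem continuousOn_integratingFactor (ca : ContinuousOn a (Ioi 0))
    (cc : ContinuousOn c (Ioi 0)) (a_ne : ∀ r, 0 < r → a r ≠ 0) (hx : 0 < x) :
    ContinuousOn (integratingFactor a c x) (Ioi 0) :=
  fun _ hr => (hasDerivAt_integratingFactor ca cc a_ne hx hr).continuousAt.continuousWithinAt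

section Continuity

variable {X : Type*} [TopologicalSpace X] {T : Set X} {N : X → ℝ → ℝ} {F₁ F₂ : X → ℝ}

theorem continuousOn_sourceFlux (ca : ContinuousOn a (Ioi 0)) (cc : ContinuousOn c (Ioi 0))
    (a_ne : ∀ r, 0 < r → a r ≠ 0) (hx : 0 < x)
    (cN : ContinuousOn (uncurry N) (T ×ˢ Ioi 0)) :
    ContinuousOn (uncurry fun t => sourceFlux a c (N t) x) (T ×ˢ Ioi 0) := by
  refine continuousOn_primitive_uncurry hx (ContinuousOn.mul ?_ cN)
  exact ((continuousOn_integratingFactor ca cc a_ne hx).div ca a_ne).comp continuousOn_snd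
    fun _ hp => hp.2

theorem continuousOn_bvpSlope (ca : ContinuousOn a (Ioi 0)) (cc : ContinuousOn c (Ioi 0))
    (a_ne : ∀ r, 0 < r → a r ≠ 0) (hx₁ : 0 < x₁) (hx₂ : 0 < x₂)
    (cN : ContinuousOn (uncurry N) (T ×ˢ Ioi 0)) (cF₁ : ContinuousOn F₁ T)
    (cF₂ : ContinuousOn F₂ T) :
    ContinuousOn (uncurry fun t => bvpSlope a c (N t) x₁ x₂ (F₁ t) (F₂ t)) (T ×ˢ Ioi 0) := by
  have cFactor : ContinuousOn (fun p : X × ℝ => integratingFactor a c x₁ p.2) (T ×ˢ Ioi 0) :=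
    (continuousOn_integratingFactor ca cc a_ne hx₁).comp continuousOn_snd fun _ hp => hp.2
  have factor_ne : ∀ p ∈ T ×ˢ Ioi (0 : ℝ), integratingFactor a c x₁ p.2 ≠ 0 :=
    fun p _ => (integratingFactor_pos a c x₁ p.2).ne'
  have cFlux := continuousOn_sourceFlux ca cc a_ne hx₁ cN
  have cBoundary : ContinuousOn
      (fun t => boundarySlope a c (N t) x₁ x₂ (F₁ t) (F₂ t)) T :=
    ((cF₂.sub cF₁).sub ((continuousOn_primitive_uncurry
      (k := fun t s => sourceFlux a c (N t) x₁ s / integratingFactor a c x₁ s) hx₁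
      (cFlux.div cFactor factor_ne)).uncurry_right x₂ hx₂)).div_const _
  exact ((cBoundary.comp continuousOn_fst fun _ hp => hp.1).add cFlux).div cFactor factor_ne

theorem continuousOn_bvpSolution (ca : ContinuousOn a (Ioi 0)) (cc : ContinuousOn c (Ioi 0))
    (a_ne : ∀ r, 0 < r → a r ≠ 0) (hx₁ : 0 < x₁) (hx₂ : 0 < x₂)
    (cN : ContinuousOn (uncurry N) (T ×ˢ Ioi 0)) (cF₁ : ContinuousOn F₁ T)
    (cF₂ : ContinuousOn F₂ T) :
    ContinuousOn (uncurry fun t => bvpSolution a c (N t) x₁ x₂ (F₁ t) (F₂ t)) (T ×ˢ Ioi 0) :=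
  (cF₁.comp continuousOn_fst fun _ hp => hp.1).add (continuousOn_primitive_uncurry hx₁
    (continuousOn_bvpSlope ca cc a_ne hx₁ hx₂ cN cF₁ cF₂))

end Continuity

theorem hasDerivAt_bvpSlope (ca : ContinuousOn a (Ioi 0)) (cc : ContinuousOn c (Ioi 0))
    (a_ne : ∀ r, 0 < r → a r ≠ 0) (cn : ContinuousOn n (Ioi 0)) (hx₁ : 0 < x₁) (hr : 0 < r) :
    HasDerivAt (bvpSlope a c n x₁ x₂ A₁ A₂)
      ((n r - c r * bvpSlope a c n x₁ x₂ A₁ A₂ r) / a r) r := by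
  have factor_ne := (integratingFactor_pos a c x₁ r).ne'
  have flux_deriv := hasDerivAt_integral_of_continuousOn_Ioi
    (((continuousOn_integratingFactor ca cc a_ne hx₁).div ca a_ne).mul cn) hx₁ hr
  refine ((flux_deriv.const_add _).fun_div
    (hasDerivAt_integratingFactor ca cc a_ne hx₁ hr) factor_ne).congr_deriv ?_
  have a_ne_zero := a_ne r hr
  simp only [bvpSlope, sourceFlux, Pi.mul_apply, Pi.div_apply]
  field_simp

theorem continuousOn_bvpSlope_right (ca : ContinuousOn a (Ioi 0)) (cc : ContinuousOn c (Ioi 0))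
    (a_ne : ∀ r, 0 < r → a r ≠ 0) (cn : ContinuousOn n (Ioi 0)) (hx₁ : 0 < x₁) :
    ContinuousOn (bvpSlope a c n x₁ x₂ A₁ A₂) (Ioi 0) :=
  fun _ hr => (hasDerivAt_bvpSlope ca cc a_ne cn hx₁ hr).continuousAt.continuousWithinAt

theorem hasDerivAt_bvpSolution (ca : ContinuousOn a (Ioi 0)) (cc : ContinuousOn c (Ioi 0))
    (a_ne : ∀ r, 0 < r → a r ≠ 0) (cn : ContinuousOn n (Ioi 0)) (hx₁ : 0 < x₁) (hr : 0 < r) :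
    HasDerivAt (bvpSolution a c n x₁ x₂ A₁ A₂) (bvpSlope a c n x₁ x₂ A₁ A₂ r) r :=
  (hasDerivAt_integral_of_continuousOn_Ioi (continuousOn_bvpSlope_right ca cc a_ne cn hx₁)
    hx₁ hr).const_add _

theorem bvpSolution_right (ca : ContinuousOn a (Ioi 0)) (cc : ContinuousOn c (Ioi 0))
    (a_ne : ∀ r, 0 < r → a r ≠ 0) (cn : ContinuousOn n (Ioi 0)) (hx₁ : 0 < x₁) (hx : x₁ < x₂) :
    bvpSolution a c n x₁ x₂ A₁ A₂ x₂ = A₂ := by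
  have hx₂ := hx₁.trans hx
  have cFactor := continuousOn_integratingFactor ca cc a_ne hx₁
  have factor_ne : ∀ r ∈ Ioi (0 : ℝ), integratingFactor a c x₁ r ≠ 0 :=
    fun r _ => (integratingFactor_pos a c x₁ r).ne'
  have cFlux : ContinuousOn (sourceFlux a c n x₁) (Ioi 0) := fun r hr =>
    (hasDerivAt_integral_of_continuousOn_Ioi ((cFactor.div ca a_ne).mul cn) hx₁
      hr).continuousAt.continuousWithinAt
  have resistance_pos : 0 < ∫ s in x₁..x₂, (integratingFactor a c x₁ s)⁻¹ :=
    intervalIntegral.intervalIntegral_pos_of_pos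
      (intervalIntegrable_of_continuousOn_Ioi (cFactor.fun_inv₀ factor_ne) hx₁ hx₂)
      (fun s => inv_pos.2 (integratingFactor_pos a c x₁ s)) hx
  have split : ∫ s in x₁..x₂, bvpSlope a c n x₁ x₂ A₁ A₂ s
      = boundarySlope a c n x₁ x₂ A₁ A₂ * (∫ s in x₁..x₂, (integratingFactor a c x₁ s)⁻¹)
        + ∫ s in x₁..x₂, sourceFlux a c n x₁ s / integratingFactor a c x₁ s := by
    have inverse_integrable := intervalIntegrable_of_continuousOn_Ioi
      (cFactor.fun_inv₀ factor_ne) hx₁ hx₂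
    have flux_integrable : IntervalIntegrable
        (fun s => sourceFlux a c n x₁ s / integratingFactor a c x₁ s) volume x₁ x₂ :=
      intervalIntegrable_of_continuousOn_Ioi (cFlux.div cFactor factor_ne) hx₁ hx₂
    rw [← intervalIntegral.integral_const_mul, ← intervalIntegral.integral_add
      (inverse_integrable.const_mul _)
      flux_integrable]
    simp only [bvpSlope, div_eq_mul_inv, add_mul]
  rw [bvpSolution, split, boundarySlope, div_mul_cancel₀ _ resistance_pos.ne']
  ring

end BoundaryValueProblem

section Comparison

theorem second_deriv_nonpos_of_isLocalMax {ψ ψ' : ℝ → ℝ} {y m : ℝ} (hmax : IsLocalMax ψ y)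
    (hψ : ∀ᶠ z in 𝓝 y, HasDerivAt ψ (ψ' z) z) (hψ' : HasDerivAt ψ' m y) : m ≤ 0 := by
  by_contra! m_pos
  have deriv_eq : deriv ψ =ᶠ[𝓝 y] ψ' := hψ.mono fun z hz => hz.deriv
  have second : deriv (deriv ψ) y = m := deriv_eq.deriv_eq.trans hψ'.deriv
  have hmin : IsLocalMin ψ y := isLocalMin_of_deriv_deriv_pos (second ▸ m_pos)
    hmax.deriv_eq_zero hψ.self_of_nhds.continuousAt
  have constant : ψ =ᶠ[𝓝 y] fun _ => ψ y := by
    filter_upwards [hmax, hmin] with z hle hge using le_antisymm hle hge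
  have second_eq_zero := constant.deriv.deriv_eq
  simp only [deriv_const', second] at second_eq_zero
  exact m_pos.ne' second_eq_zero

theorem exists_seq_isMaxOn_tendsto {X : Type*} [TopologicalSpace X] [FirstCountableTopology X]
    {K : Set X} {v : ℕ → X → ℝ} {F : X → ℝ} (hK : IsCompact K) (hne : K.Nonempty)
    (hv : ∀ n, ContinuousOn (v n) K) (hF : ContinuousOn F K)
    (hlim : TendstoUniformlyOn v F atTop K) :
    ∃ φ : ℕ → ℕ, ∃ z : ℕ → X, ∃ z₀ ∈ K, IsMaxOn F K z₀ ∧ Tendsto z atTop (𝓝 z₀)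
      ∧ ∀ n, z n ∈ K ∧ IsMaxOn (v (φ n)) K (z n) := by
  choose y hy hmax using fun n => hK.exists_isMaxOn hne (hv n)
  obtain ⟨z₀, hz₀, φ, hφ, hlim_z⟩ := hK.tendsto_subseq hy
  refine ⟨φ, y ∘ φ, z₀, hz₀, fun x hx => ?_, hlim_z, fun n => ⟨hy _, hmax _⟩⟩
  have sub_unif : TendstoUniformlyOn (fun n => v (φ n)) F atTop K :=
    fun U hU => hφ.tendsto_atTop.eventually (hlim U hU)
  have max_values : Tendsto (fun n => v (φ n) (y (φ n))) atTop (𝓝 (F z₀)) :=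
    tendsto_comp_of_locally_uniform_limit_within (hF z₀ hz₀)
      (tendsto_nhdsWithin_iff.2 ⟨hlim_z, Eventually.of_forall fun n => hy _⟩)
      fun U hU => ⟨K, self_mem_nhdsWithin, sub_unif U hU⟩
  exact le_of_tendsto_of_tendsto' (sub_unif.tendsto_at hx) max_values fun n => hmax (φ n) hx

/-- `f` solves `∂ₜf = a ∂ᵣ²f + c ∂ᵣf` pointwise for `t > 0` and `r > 0`, where `f' = ∂ᵣf` and
`f'' = ∂ᵣ²f` need not be jointly continuous. -/
structure IsClassicalSolution (a c : ℝ → ℝ) (f f' f'' : ℝ → ℝ → ℝ) : Prop where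
  hasDerivAt_space : ∀ t, 0 < t → ∀ r, 0 < r → HasDerivAt (f t) (f' t r) r
  slope_hasDerivAt : ∀ t, 0 < t → ∀ r, 0 < r → HasDerivAt (f' t) (f'' t r) r
  hasDerivAt_time : ∀ t, 0 < t → ∀ r, 0 < r →
    HasDerivAt (fun τ => f τ r) (a r * f'' t r + c r * f' t r) t
  continuousOn : ContinuousOn (uncurry f) (Ioi 0 ×ˢ Ioi 0)

/-- `F`, with time derivative `N`, is a locally uniform limit of classical solutions. -/
structure IsGeneralizedSolution (a c : ℝ → ℝ) (F N : ℝ → ℝ → ℝ) : Prop where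
  exists_approximation : ∃ v v' v'' : ℕ → ℝ → ℝ → ℝ,
    (∀ n, IsClassicalSolution a c (v n) (v' n) (v'' n)) ∧
      TendstoLocallyUniformlyOn (fun n => uncurry (v n)) (uncurry F) atTop (Ioi 0 ×ˢ Ioi 0)
  hasDerivAt_time : ∀ t, 0 < t → ∀ r, 0 < r → HasDerivAt (fun τ => F τ r) (N t r) t
  continuousOn_speed : ContinuousOn (uncurry N) (Ioi 0 ×ˢ Ioi 0)

variable {a c n₀ S S' : ℝ → ℝ} {F N f f' f'' : ℝ → ℝ → ℝ}

theorem IsClassicalSolution.neg (hf : IsClassicalSolution a c f f' f'') :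
    IsClassicalSolution a c (fun t r => -f t r) (fun t r => -f' t r) (fun t r => -f'' t r) where
  hasDerivAt_space t ht r hr := (hf.hasDerivAt_space t ht r hr).fun_neg
  slope_hasDerivAt t ht r hr := (hf.slope_hasDerivAt t ht r hr).fun_neg
  hasDerivAt_time t ht r hr := (hf.hasDerivAt_time t ht r hr).fun_neg.congr_deriv (by ring)
  continuousOn := hf.continuousOn.neg

theorem IsGeneralizedSolution.continuousOn (hF : IsGeneralizedSolution a c F N) :
    ContinuousOn (uncurry F) (Ioi 0 ×ˢ Ioi 0) := by
  obtain ⟨v, v', v'', hv, hlim⟩ := hF.exists_approximation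
  exact hlim.continuousOn (Frequently.of_forall fun n => (hv n).continuousOn)

theorem IsGeneralizedSolution.neg (hF : IsGeneralizedSolution a c F N) :
    IsGeneralizedSolution a c (fun t r => -F t r) (fun t r => -N t r) where
  exists_approximation := by
    obtain ⟨v, v', v'', hv, hlim⟩ := hF.exists_approximation
    exact ⟨_, _, _, fun n => (hv n).neg, hlim.fun_neg⟩
  hasDerivAt_time t ht r hr := (hF.hasDerivAt_time t ht r hr).fun_neg
  continuousOn_speed := hF.continuousOn_speed.neg

theorem IsClassicalSolution.speed_le_of_isLocalMax {θ : ℝ → ℝ} {θ' t r : ℝ}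
    (hf : IsClassicalSolution a c f f' f'') (ht : 0 < t) (hr : 0 < r) (ha : 0 < a r)
    (hS : ∀ r, 0 < r → HasDerivAt S (S' r) r)
    (hS' : HasDerivAt S' ((n₀ r - c r * S' r) / a r) r) (hθ : HasDerivAt θ θ' t)
    (hmax : IsLocalMax (fun p : ℝ × ℝ => f p.1 p.2 - (S p.2 + θ p.1)) (t, r)) : θ' ≤ n₀ r := by
  have max_time : IsLocalMax (fun τ => f τ r - (S r + θ τ)) t :=
    hmax.comp_continuous (g := fun τ => (τ, r)) (by fun_prop)
  have max_space : IsLocalMax (fun y => f t y - (S y + θ t)) r :=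
    hmax.comp_continuous (g := fun y => (t, y)) (by fun_prop)
  have deriv_space (y : ℝ) (hy : 0 < y) :
      HasDerivAt (fun y => f t y - (S y + θ t)) (f' t y - S' y) y :=
    (hf.hasDerivAt_space t ht y hy).fun_sub ((hS y hy).add_const _)
  have speed_eq := max_time.hasDerivAt_eq_zero
    ((hf.hasDerivAt_time t ht r hr).fun_sub (hθ.const_add _))
  have slope_eq := max_space.hasDerivAt_eq_zero (deriv_space r hr)
  have curvature_le : f'' t r - (n₀ r - c r * S' r) / a r ≤ 0 :=
    second_deriv_nonpos_of_isLocalMax max_space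
      (by filter_upwards [Ioi_mem_nhds hr] with y hy using deriv_space y hy)
      ((hf.slope_hasDerivAt t ht r hr).fun_sub hS')
  rw [sub_nonpos, le_div_iff₀ ha] at curvature_le
  rw [sub_eq_zero.1 slope_eq] at speed_eq
  linarith

theorem IsGeneralizedSolution.exists_isMaxOn_speed_le {θ θ' : ℝ → ℝ} {t₁ t₂ x₁ x₂ : ℝ}
    (hF : IsGeneralizedSolution a c F N) (a_pos : ∀ r, 0 < r → 0 < a r)
    (hS : ∀ r, 0 < r → HasDerivAt S (S' r) r)
    (hS' : ∀ r, 0 < r → HasDerivAt S' ((n₀ r - c r * S' r) / a r) r)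
    (cn₀ : ContinuousOn n₀ (Ioi 0)) (hθ : ∀ t, HasDerivAt θ (θ' t) t) (cθ' : Continuous θ')
    (ht₁ : 0 < t₁) (ht : t₁ ≤ t₂) (hx₁ : 0 < x₁) (hx : x₁ ≤ x₂)
    (interior : ∀ p ∈ Icc t₁ t₂ ×ˢ Icc x₁ x₂,
      IsMaxOn (fun p : ℝ × ℝ => F p.1 p.2 - (S p.2 + θ p.1)) (Icc t₁ t₂ ×ˢ Icc x₁ x₂) p →
        p ∈ Ioo t₁ t₂ ×ˢ Ioo x₁ x₂) :
    ∃ p ∈ Ioo t₁ t₂ ×ˢ Ioo x₁ x₂,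
      IsMaxOn (fun p : ℝ × ℝ => F p.1 p.2 - (S p.2 + θ p.1)) (Icc t₁ t₂ ×ˢ Icc x₁ x₂) p ∧
        θ' p.1 ≤ n₀ p.2 := by
  set Q := Icc t₁ t₂ ×ˢ Icc x₁ x₂
  have Q_compact : IsCompact Q := isCompact_Icc.prod isCompact_Icc
  have Q_subset : Q ⊆ Ioi 0 ×ˢ Ioi 0 :=
    prod_mono (fun t ht => ht₁.trans_le ht.1) fun r hr => hx₁.trans_le hr.1
  obtain ⟨v, v', v'', hv, hlim⟩ := hF.exists_approximation
  have cBarrier : ContinuousOn (fun p : ℝ × ℝ => S p.2 + θ p.1) Q :=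
    (ContinuousOn.comp (fun r hr => (hS r hr).continuousAt.continuousWithinAt) continuousOn_snd
      fun p hp => (Q_subset hp).2).add
      ((continuous_iff_continuousAt.2 fun t => (hθ t).continuousAt).comp
        continuous_fst).continuousOn
  have uniform : TendstoUniformlyOn (fun n (p : ℝ × ℝ) => v n p.1 p.2 - (S p.2 + θ p.1))
      (fun p => F p.1 p.2 - (S p.2 + θ p.1)) atTop Q :=
    ((tendstoLocallyUniformlyOn_iff_tendstoUniformlyOn_of_compact Q_compact).1
      (hlim.mono Q_subset)).fun_sub
        fun U hU => Eventually.of_forall fun _ _ _ => refl_mem_uniformity hU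
  obtain ⟨φ, z, z₀, hz₀, z₀_max, z_lim, hz⟩ := exists_seq_isMaxOn_tendsto Q_compact
    ((nonempty_Icc.2 ht).prod (nonempty_Icc.2 hx))
    (fun n => ((hv n).continuousOn.mono Q_subset).sub cBarrier)
    ((hF.continuousOn.mono Q_subset).sub cBarrier) uniform
  have z₀_mem := interior z₀ hz₀ z₀_max
  have z₀_nhds : Ioo t₁ t₂ ×ˢ Ioo x₁ x₂ ∈ 𝓝 z₀ := (isOpen_Ioo.prod isOpen_Ioo).mem_nhds z₀_mem
  refine ⟨z₀, z₀_mem, z₀_max, le_of_tendsto_of_tendsto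
    ((cθ'.comp continuous_fst).continuousAt.tendsto.comp z_lim)
    ((cn₀.continuousAt (Ioi_mem_nhds (Q_subset hz₀).2)).tendsto.comp
      ((continuous_snd.tendsto z₀).comp z_lim)) ?_⟩
  filter_upwards [z_lim.eventually_mem z₀_nhds] with n hn
  have z_pos := Q_subset (hz n).1
  refine (hv (φ n)).speed_le_of_isLocalMax z_pos.1 z_pos.2 (a_pos _ z_pos.2) hS (hS' _ z_pos.2)
    (hθ _) ((hz n).2.isLocalMax (mem_of_superset ((isOpen_Ioo.prod isOpen_Ioo).mem_nhds hn) ?_))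
  exact prod_mono Ioo_subset_Icc_self Ioo_subset_Icc_self

end Comparison

section Representation

variable {a c n₀ S S' : ℝ → ℝ} {F N : ℝ → ℝ → ℝ}

theorem exists_quadratic_penalty {τ M B : ℝ} (hτ : 0 < τ) (hM : 0 < M) (hB : 0 ≤ B) :
    ∃ K, B * τ < K * τ ^ 2 ∧ ∀ x, B * x - K * x ^ 2 < M := by
  refine ⟨B / τ + B ^ 2 / M + 1, ?_, fun x => ?_⟩
  · have expand : (B / τ + B ^ 2 / M + 1) * τ ^ 2 = B * τ + (B ^ 2 / M + 1) * τ ^ 2 := by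
      field_simp
      ring
    rw [expand]
    exact lt_add_of_pos_right _ (by positivity)
  · have young : 0 ≤ (B * x - M / 2) ^ 2 / M := by positivity
    have expand : (B * x - M / 2) ^ 2 / M = B ^ 2 / M * x ^ 2 - B * x + M / 4 := by
      field_simp
      ring
    have rest : 0 ≤ (B / τ + 1) * x ^ 2 := by positivity
    linarith

theorem exists_uniform_in_time {t₀ x₁ x₂ η : ℝ}
    (cN : ContinuousOn (uncurry N) (Ioi 0 ×ˢ Ioi 0)) (ht₀ : 0 < t₀) (hx₁ : 0 < x₁) (hη : 0 < η) :
    ∃ τ, 0 < τ ∧ τ < t₀ ∧ ∀ t ∈ Icc (t₀ - τ) (t₀ + τ), ∀ r ∈ Icc x₁ x₂,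
      |N t r - N t₀ r| < η := by
  have uniform : UniformContinuousOn (uncurry N) (Icc (t₀ / 2) (2 * t₀) ×ˢ Icc x₁ x₂) :=
    (isCompact_Icc.prod isCompact_Icc).uniformContinuousOn_of_continuous
      (cN.mono (prod_mono (fun t ht => (half_pos ht₀).trans_le ht.1)
        fun r hr => hx₁.trans_le hr.1))
  obtain ⟨ρ, hρ, modulus⟩ := Metric.uniformContinuousOn_iff.1 uniform η hη
  refine ⟨min (t₀ / 2) (ρ / 2), by positivity, by linarith [min_le_left (t₀ / 2) (ρ / 2)],
    fun t ht r hr => ?_⟩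
  have near_half := min_le_left (t₀ / 2) (ρ / 2)
  have near_radius := min_le_right (t₀ / 2) (ρ / 2)
  have close : |t - t₀| < ρ := by
    rw [abs_lt]
    constructor <;> linarith [ht.1, ht.2]
  exact modulus (t, r) ⟨⟨by linarith [ht.1], by linarith [ht.2]⟩, hr⟩ (t₀, r)
    ⟨⟨by linarith, by linarith⟩, hr⟩ (by simpa [Prod.dist_eq, Real.dist_eq, hρ] using close)

theorem IsGeneralizedSolution.exists_lipschitz {t₁ t₂ x₁ x₂ : ℝ}
    (hF : IsGeneralizedSolution a c F N) (ht₁ : 0 < t₁) (hx₁ : 0 < x₁) :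
    ∃ B, 0 ≤ B ∧ ∀ r ∈ Icc x₁ x₂, ∀ s ∈ Icc t₁ t₂, ∀ t ∈ Icc t₁ t₂,
      |F t r - F s r| ≤ B * |t - s| := by
  have times : Icc t₁ t₂ ⊆ Ioi 0 := fun t ht => ht₁.trans_le ht.1
  obtain ⟨B, hB⟩ := (isCompact_Icc.prod isCompact_Icc).exists_bound_of_continuousOn
    (hF.continuousOn_speed.mono (prod_mono times fun r (hr : r ∈ Icc x₁ x₂) => hx₁.trans_le hr.1))
  refine ⟨|B|, abs_nonneg B, fun r hr s hs t ht => ?_⟩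
  exact (convex_Icc t₁ t₂).norm_image_sub_le_of_norm_hasDerivWithin_le
    (fun τ hτ => (hF.hasDerivAt_time τ (times hτ) r (hx₁.trans_le hr.1)).hasDerivWithinAt)
    (fun τ hτ => (hB (τ, r) ⟨hτ, hr⟩).trans (le_abs_self B)) hs ht

theorem mem_Ioo_prod_Ioo_of_isMaxOn_penalized {K B τ t₀ x₁ x₂ r₀ : ℝ} {p : ℝ × ℝ} (hτ : 0 < τ)
    (K_large : B * τ < K * τ ^ 2)
    (K_penalty : ∀ x, B * x - K * x ^ 2 < F t₀ r₀ - S r₀) (hr₀ : r₀ ∈ Icc x₁ x₂)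
    (r₀_max : ∀ r ∈ Icc x₁ x₂, F t₀ r - S r ≤ F t₀ r₀ - S r₀)
    (near : ∀ t ∈ Icc (t₀ - τ) (t₀ + τ), ∀ r ∈ Icc x₁ x₂, F t r ≤ F t₀ r + B * |t - t₀|)
    (left_le : F t₀ x₁ ≤ S x₁) (right_le : F t₀ x₂ ≤ S x₂)
    (hp : p ∈ Icc (t₀ - τ) (t₀ + τ) ×ˢ Icc x₁ x₂)
    (p_max : IsMaxOn (fun p : ℝ × ℝ => F p.1 p.2 - (S p.2 + K * (p.1 - t₀) ^ 2))
      (Icc (t₀ - τ) (t₀ + τ) ×ˢ Icc x₁ x₂) p) :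
    p ∈ Ioo (t₀ - τ) (t₀ + τ) ×ˢ Ioo x₁ x₂ := by
  obtain ⟨t, r⟩ := p
  obtain ⟨ht, hr⟩ := hp
  have t₀_mem : t₀ ∈ Icc (t₀ - τ) (t₀ + τ) := ⟨by linarith, by linarith⟩
  have value_ge : F t₀ r₀ - S r₀ ≤ F t r - (S r + K * (t - t₀) ^ 2) := by
    simpa using p_max (mk_mem_prod t₀_mem hr₀)
  have value_le := near t ht r hr
  have penalized := K_penalty |t - t₀|
  rw [sq_abs] at penalized
  have not_lateral : 0 < F t₀ r - S r := by linarith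
  have not_extreme : |t - t₀| ≠ τ := by
    intro extreme
    rw [← sq_abs, extreme] at value_ge
    rw [extreme] at value_le
    linarith [r₀_max r hr]
  refine ⟨⟨ht.1.lt_of_ne ?_, ht.2.lt_of_ne ?_⟩, hr.1.lt_of_ne ?_, hr.2.lt_of_ne ?_⟩
  · rintro rfl
    simp [abs_of_pos hτ] at not_extreme
  · rintro rfl
    simp [abs_of_pos hτ] at not_extreme
  · rintro rfl
    linarith
  · rintro rfl
    linarith

/-- The penalty `K (t - t₀) ^ 2` forces the maximum of `F - S` over a cylinder into its interior,
at a time where the speed of `F` cannot exceed `n₀`. -/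
theorem IsGeneralizedSolution.le_of_source_add_le {t₀ x₁ x₂ η : ℝ}
    (hF : IsGeneralizedSolution a c F N) (a_pos : ∀ r, 0 < r → 0 < a r)
    (hS : ∀ r, 0 < r → HasDerivAt S (S' r) r)
    (hS' : ∀ r, 0 < r → HasDerivAt S' ((n₀ r - c r * S' r) / a r) r)
    (cn₀ : ContinuousOn n₀ (Ioi 0)) (ht₀ : 0 < t₀) (hx₁ : 0 < x₁) (hx : x₁ ≤ x₂) (hη : 0 < η)
    (source_le : ∀ r ∈ Icc x₁ x₂, n₀ r + η ≤ N t₀ r) (left_le : F t₀ x₁ ≤ S x₁)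
    (right_le : F t₀ x₂ ≤ S x₂) : ∀ r ∈ Icc x₁ x₂, F t₀ r ≤ S r := by
  have cS : ContinuousOn S (Icc x₁ x₂) := fun r hr =>
    (hS r (hx₁.trans_le hr.1)).continuousAt.continuousWithinAt
  have cF : ContinuousOn (F t₀) (Icc x₁ x₂) :=
    (hF.continuousOn.uncurry_left t₀ ht₀).mono fun r hr => hx₁.trans_le hr.1
  obtain ⟨r₀, hr₀, r₀_max⟩ := isCompact_Icc.exists_isMaxOn (nonempty_Icc.2 hx) (cF.sub cS)
  suffices excess_nonpos : F t₀ r₀ - S r₀ ≤ 0 from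
    fun r hr => sub_nonpos.1 ((r₀_max hr).trans excess_nonpos)
  by_contra! excess_pos
  obtain ⟨τ, hτ, τ_lt, speed_near⟩ :=
    exists_uniform_in_time (x₂ := x₂) hF.continuousOn_speed ht₀ hx₁ hη
  obtain ⟨B, hB, lipschitz⟩ :=
    hF.exists_lipschitz (t₂ := t₀ + τ) (x₂ := x₂) (sub_pos.2 τ_lt) hx₁
  obtain ⟨K, K_large, K_penalty⟩ := exists_quadratic_penalty hτ excess_pos hB
  have near (t : ℝ) (ht : t ∈ Icc (t₀ - τ) (t₀ + τ)) (r : ℝ) (hr : r ∈ Icc x₁ x₂) :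
      F t r ≤ F t₀ r + B * |t - t₀| := by
    linarith [le_abs_self (F t r - F t₀ r),
      lipschitz r hr t₀ ⟨by linarith, by linarith⟩ t ht]
  have penalty_deriv (t : ℝ) : HasDerivAt (fun t => K * (t - t₀) ^ 2) (2 * K * (t - t₀)) t :=
    ((((hasDerivAt_id t).sub_const t₀).fun_pow 2).const_mul K).congr_deriv (by simp; ring)
  obtain ⟨⟨t, r⟩, ⟨ht, hr⟩, p_max, speed_le⟩ := hF.exists_isMaxOn_speed_le (t₁ := t₀ - τ)
    (t₂ := t₀ + τ) a_pos hS hS' cn₀ penalty_deriv (by fun_prop) (sub_pos.2 τ_lt) (by linarith)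
    hx₁ hx fun p hp => mem_Ioo_prod_Ioo_of_isMaxOn_penalized hτ K_large K_penalty hr₀ r₀_max near
      left_le right_le hp
  have htI := Ioo_subset_Icc_self ht
  have hrI := Ioo_subset_Icc_self hr
  have max_time : IsLocalMax (fun s => F s r - (S r + K * (s - t₀) ^ 2)) t := by
    filter_upwards [Ioo_mem_nhds ht.1 ht.2] with s hs
      using p_max (mk_mem_prod (Ioo_subset_Icc_self hs) hrI)
  have speed_eq := max_time.hasDerivAt_eq_zero ((hF.hasDerivAt_time t
    (by linarith [ht.1]) r (hx₁.trans hr.1)).fun_sub ((penalty_deriv t).const_add (S r)))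
  linarith [(abs_lt.1 (speed_near t htI r hrI)).1, source_le r hrI]

theorem IsGeneralizedSolution.eq_bvpSolution {t x₁ x₂ : ℝ}
    (hF : IsGeneralizedSolution a c F N) (ca : ContinuousOn a (Ioi 0))
    (cc : ContinuousOn c (Ioi 0)) (a_pos : ∀ r, 0 < r → 0 < a r) (ht : 0 < t) (hx₁ : 0 < x₁)
    (hx : x₁ < x₂) :
    EqOn (F t) (bvpSolution a c (N t) x₁ x₂ (F t x₁) (F t x₂)) (Icc x₁ x₂) := by
  intro r hr
  have a_ne : ∀ r, 0 < r → a r ≠ 0 := fun r hr => (a_pos r hr).ne'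
  have hr_pos : 0 < r := hx₁.trans_le hr.1
  have cN : ContinuousOn (N t) (Ioi 0) := hF.continuousOn_speed.uncurry_left t ht
  let shifted (η : ℝ) := bvpSolution a c (fun r => N t r - η) x₁ x₂ (F t x₁) (F t x₂)
  have cShift (η : ℝ) : ContinuousOn (fun r => N t r - η) (Ioi 0) := by fun_prop
  have hshifted (η y : ℝ) (hy : 0 < y) := hasDerivAt_bvpSolution (x₂ := x₂) (A₁ := F t x₁)
    (A₂ := F t x₂) ca cc a_ne (cShift η) hx₁ hy
  have hshifted' (η y : ℝ) (hy : 0 < y) := hasDerivAt_bvpSlope (x₂ := x₂) (A₁ := F t x₁)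
    (A₂ := F t x₂) ca cc a_ne (cShift η) hx₁ hy
  have left (η : ℝ) : shifted η x₁ = F t x₁ := bvpSolution_left ..
  have right (η : ℝ) : shifted η x₂ = F t x₂ := bvpSolution_right ca cc a_ne (cShift η) hx₁ hx
  have upper (η : ℝ) (hη : 0 < η) : F t r ≤ shifted η r :=
    hF.le_of_source_add_le a_pos (hshifted η) (hshifted' η) (cShift η) ht hx₁ hx.le hη
      (fun y _ => by simp) (left η).ge (right η).ge r hr
  have lower (η : ℝ) (hη : 0 < η) : shifted (-η) r ≤ F t r := neg_le_neg_iff.1 <|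
    hF.neg.le_of_source_add_le a_pos (n₀ := fun y => -(N t y - -η))
      (fun y hy => (hshifted (-η) y hy).fun_neg)
      (fun y hy => (hshifted' (-η) y hy).fun_neg.congr_deriv (by ring)) (cShift (-η)).neg ht hx₁
      hx.le hη (fun y _ => by simp) (neg_le_neg (left _).le) (neg_le_neg (right _).le) r hr
  have joint : ContinuousOn (uncurry fun η r => N t r - η) (univ ×ˢ Ioi 0) :=
    (cN.comp continuousOn_snd fun p hp => hp.2).sub continuousOn_fst
  have continuous_shift : ContinuousAt (fun η => shifted η r) 0 :=
    ((continuousOn_bvpSolution ca cc a_ne hx₁ (hx₁.trans hx) joint continuousOn_const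
      continuousOn_const).uncurry_right r hr_pos).continuousAt univ_mem
  have limit : Tendsto (fun η => shifted η r) (𝓝 0) (𝓝 (bvpSolution a c (N t) x₁ x₂
      (F t x₁) (F t x₂) r)) := by
    simpa [shifted, ContinuousAt] using continuous_shift
  refine le_antisymm (ge_of_tendsto (limit.mono_left nhdsWithin_le_nhds)
    (eventually_mem_nhdsWithin.mono fun η (hη : η ∈ Ioi 0) => upper η hη))
    (le_of_tendsto (limit.mono_left (nhdsWithin_le_nhds (s := Iio 0))) ?_)
  filter_upwards [self_mem_nhdsWithin] with η hη
  simpa using lower (-η) (neg_pos.2 hη)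

section Regularity

variable (hF : IsGeneralizedSolution a c F N) (ca : ContinuousOn a (Ioi 0))
  (cc : ContinuousOn c (Ioi 0)) (a_pos : ∀ r, 0 < r → 0 < a r)
include hF ca cc a_pos

theorem IsGeneralizedSolution.hasDerivAt_bvpSlope {t x₁ x₂ r : ℝ} (ht : 0 < t) (hx₁ : 0 < x₁)
    (hr : r ∈ Ioo x₁ x₂) :
    HasDerivAt (F t) (bvpSlope a c (N t) x₁ x₂ (F t x₁) (F t x₂) r) r :=
  (hasDerivAt_bvpSolution ca cc (fun r hr => (a_pos r hr).ne')
    (hF.continuousOn_speed.uncurry_left t ht) hx₁ (hx₁.trans hr.1)).congr_of_eventuallyEq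
    ((hF.eq_bvpSolution ca cc a_pos ht hx₁ (hr.1.trans hr.2)).eventuallyEq_of_mem
      (Icc_mem_nhds hr.1 hr.2))

theorem IsGeneralizedSolution.hasDerivAt_space {t r : ℝ} (ht : 0 < t) (hr : 0 < r) :
    HasDerivAt (F t) (deriv (F t) r) r :=
  (hF.hasDerivAt_bvpSlope ca cc a_pos ht (half_pos hr) (x₂ := 2 * r)
    ⟨by linarith, by linarith⟩).differentiableAt.hasDerivAt

theorem IsGeneralizedSolution.slope_hasDerivAt {t r : ℝ} (ht : 0 < t) (hr : 0 < r) :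
    HasDerivAt (deriv (F t)) ((N t r - c r * deriv (F t) r) / a r) r := by
  have hr_mem : r ∈ Ioo (r / 2) (2 * r) := ⟨by linarith, by linarith⟩
  have slope_eq {y : ℝ} (hy : y ∈ Ioo (r / 2) (2 * r)) :=
    (hF.hasDerivAt_bvpSlope ca cc a_pos ht (half_pos hr) hy).deriv
  rw [slope_eq hr_mem]
  refine (DegenerateParabolic.hasDerivAt_bvpSlope ca cc (fun r hr => (a_pos r hr).ne')
    (hF.continuousOn_speed.uncurry_left t ht) (half_pos hr) hr).congr_of_eventuallyEq ?_
  filter_upwards [Ioo_mem_nhds hr_mem.1 hr_mem.2] with y hy using slope_eq hy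

theorem IsGeneralizedSolution.continuousOn_slope :
    ContinuousOn (uncurry fun t => deriv (F t)) (Ioi 0 ×ˢ Ioi 0) := by
  rintro ⟨t, r⟩ ⟨ht, hr : 0 < r⟩
  have hr_mem : r ∈ Ioo (r / 2) (2 * r) := ⟨by linarith, by linarith⟩
  have hr₂ : 0 < 2 * r := by linarith
  have cSlope := continuousOn_bvpSlope ca cc (fun r hr => (a_pos r hr).ne') (half_pos hr) hr₂
    hF.continuousOn_speed (hF.continuousOn.uncurry_right (r / 2) (half_pos hr))
    (hF.continuousOn.uncurry_right (2 * r) hr₂)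
  refine ((cSlope.continuousAt (prod_mem_nhds (Ioi_mem_nhds ht) (Ioi_mem_nhds hr))).congr
    ?_).continuousWithinAt
  filter_upwards [prod_mem_nhds (Ioi_mem_nhds ht) (Ioo_mem_nhds hr_mem.1 hr_mem.2)] with p hp
    using (hF.hasDerivAt_bvpSlope ca cc a_pos hp.1 (half_pos hr) hp.2).deriv.symm

end Regularity

end Representation

section Mollification

variable {a c : ℝ → ℝ} {f f' f'' F N : ℝ → ℝ → ℝ} {h : ℝ}

theorem IsClassicalSolution.const_mul (hf : IsClassicalSolution a c f f' f'') (k : ℝ) :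
    IsClassicalSolution a c (fun t r => k * f t r) (fun t r => k * f' t r)
      (fun t r => k * f'' t r) where
  hasDerivAt_space t ht r hr := (hf.hasDerivAt_space t ht r hr).const_mul k
  slope_hasDerivAt t ht r hr := (hf.slope_hasDerivAt t ht r hr).const_mul k
  hasDerivAt_time t ht r hr :=
    ((hf.hasDerivAt_time t ht r hr).const_mul k).congr_deriv (by ring)
  continuousOn := hf.continuousOn.const_mul k

theorem IsClassicalSolution.comp_add_const (hf : IsClassicalSolution a c f f' f'') (hh : 0 ≤ h) :
    IsClassicalSolution a c (fun t => f (t + h)) (fun t => f' (t + h)) (fun t => f'' (t + h)) where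
  hasDerivAt_space t ht := hf.hasDerivAt_space _ (add_pos_of_pos_of_nonneg ht hh)
  slope_hasDerivAt t ht := hf.slope_hasDerivAt _ (add_pos_of_pos_of_nonneg ht hh)
  hasDerivAt_time t ht r hr :=
    (hf.hasDerivAt_time _ (add_pos_of_pos_of_nonneg ht hh) r hr).comp_add_const t h
  continuousOn := hf.continuousOn.comp (f := fun p : ℝ × ℝ => (p.1 + h, p.2)) (by fun_prop)
    fun _ hp => ⟨add_pos_of_pos_of_nonneg hp.1 hh, hp.2⟩

theorem IsClassicalSolution.sum {ι : Type*} {s : Finset ι} {f f' f'' : ι → ℝ → ℝ → ℝ}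
    (hf : ∀ i ∈ s, IsClassicalSolution a c (f i) (f' i) (f'' i)) :
    IsClassicalSolution a c (fun t r => ∑ i ∈ s, f i t r) (fun t r => ∑ i ∈ s, f' i t r)
      (fun t r => ∑ i ∈ s, f'' i t r) where
  hasDerivAt_space t ht r hr := HasDerivAt.fun_sum fun i hi => (hf i hi).hasDerivAt_space t ht r hr
  slope_hasDerivAt t ht r hr := HasDerivAt.fun_sum fun i hi => (hf i hi).slope_hasDerivAt t ht r hr
  hasDerivAt_time t ht r hr :=
    (HasDerivAt.fun_sum fun i hi => (hf i hi).hasDerivAt_time t ht r hr).congr_deriv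
      (by rw [Finset.sum_add_distrib, Finset.mul_sum, Finset.mul_sum])
  continuousOn := continuousOn_finsetSum s fun i hi => (hf i hi).continuousOn

theorem IsClassicalSolution.translateSum (hf : IsClassicalSolution a c f f' f'') (n : ℕ)
    (hh : 0 ≤ h) :
    IsClassicalSolution a c (translateSum n h f) (translateSum n h f') (translateSum n h f'') :=
  IsClassicalSolution.sum fun _ _ => (hf.comp_add_const (by positivity)).const_mul _

theorem IsClassicalSolution.isGeneralizedSolution_slidingIntegral
    (hf : IsClassicalSolution a c f f' f'') (hh : 0 < h) :
    IsGeneralizedSolution a c (slidingIntegral h f) (fun t r => f (t + h) r - f t r) where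
  exists_approximation := by
    refine ⟨_, _, _, fun n => hf.translateSum n hh.le,
      (tendstoLocallyUniformlyOn_iff_forall_isCompact (isOpen_Ioi.prod isOpen_Ioi)).2
        fun K hK_subset hK => ?_⟩
    obtain rfl | hne := K.eq_empty_or_nonempty
    · exact tendstoUniformlyOn_empty
    obtain ⟨t₀, ht₀⟩ := (hK.image continuous_fst).exists_isLeast (hne.image _)
    obtain ⟨t₁, ht₁⟩ := (hK.image continuous_fst).bddAbove
    obtain ⟨p, hp, rfl⟩ := ht₀.1
    refine (tendstoUniformlyOn_translateSum (t₁ := t₁) hh (hK_subset hp).1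
      (hK.image continuous_snd) (hf.continuousOn.mono (prod_mono_right ?_))).mono fun q hq =>
        ⟨⟨ht₀.2 (mem_image_of_mem _ hq), ht₁ (mem_image_of_mem _ hq)⟩, mem_image_of_mem _ hq⟩
    rintro _ ⟨q, hq, rfl⟩
    exact (hK_subset hq).2
  hasDerivAt_time t ht r hr :=
    hasDerivAt_slidingIntegral_time hh.le (hf.continuousOn.uncurry_right r hr) ht
  continuousOn_speed := (hf.comp_add_const hh.le).continuousOn.sub hf.continuousOn

theorem IsRegularSolution.comp_add_const {I J : Set ℝ} {u g gr ut gt : ℝ → ℝ → ℝ}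
    (hu : IsRegularSolution a c I J u g gr ut gt) (h : ℝ) :
    IsRegularSolution a c ((· + h) ⁻¹' I) J (fun t => u (t + h)) (fun t => g (t + h))
      (fun t => gr (t + h)) (fun t => ut (t + h)) (fun t => gt (t + h)) where
  hasDerivAt_time t ht r hr := (hu.hasDerivAt_time _ ht r hr).comp_add_const t h
  hasDerivAt_space t ht := hu.hasDerivAt_space _ ht
  slope_hasDerivAt_time t ht r hr := (hu.slope_hasDerivAt_time _ ht r hr).comp_add_const t h
  slope_hasDerivAt_space t ht := hu.slope_hasDerivAt_space _ ht
  speed_hasDerivAt_space t ht := hu.speed_hasDerivAt_space _ ht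
  equation t ht := hu.equation _ ht
  continuousOn := hu.continuousOn.comp (f := fun p : ℝ × ℝ => (p.1 + h, p.2)) (by fun_prop)
    fun _ hp => hp
  continuousOn_slope := hu.continuousOn_slope.comp (f := fun p : ℝ × ℝ => (p.1 + h, p.2))
    (by fun_prop) fun _ hp => hp
  continuousOn_speed := hu.continuousOn_speed.comp (f := fun p : ℝ × ℝ => (p.1 + h, p.2))
    (by fun_prop) fun _ hp => hp
  continuousOn_mixed := hu.continuousOn_mixed.comp (f := fun p : ℝ × ℝ => (p.1 + h, p.2))
    (by fun_prop) fun _ hp => hp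

theorem slidingIntegral_eq_sub {r t : ℝ} (hh : 0 ≤ h)
    (hF : ∀ s, 0 < s → HasDerivAt (fun τ => F τ r) (N s r) s)
    (cN : ContinuousOn (fun s => N s r) (Ioi 0)) (ht : 0 < t) :
    slidingIntegral h N t r = F (t + h) r - F t r :=
  intervalIntegral.integral_eq_sub_of_hasDerivAt
    (fun s hs => hF s (ordConnected_Ioi.uIcc_subset ht (add_pos_of_pos_of_nonneg ht hh) hs))
    (intervalIntegrable_of_continuousOn_Ioi cN ht (add_pos_of_pos_of_nonneg ht hh))

theorem IsGeneralizedSolution.isRegularSolution_slidingIntegral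
    (hF : IsGeneralizedSolution a c F N) (ca : ContinuousOn a (Ioi 0))
    (cc : ContinuousOn c (Ioi 0)) (a_pos : ∀ r, 0 < r → 0 < a r) (hh : 0 ≤ h) :
    IsRegularSolution a c (Ioi 0) (Ioi 0) (slidingIntegral h F)
      (slidingIntegral h fun t => deriv (F t))
      (slidingIntegral h fun t r => (N t r - c r * deriv (F t) r) / a r)
      (fun t r => F (t + h) r - F t r) (fun t r => deriv (F (t + h)) r - deriv (F t) r) := by
  have cF := hF.continuousOn
  have cSlope := hF.continuousOn_slope ca cc a_pos
  have cCurvature : ContinuousOn (uncurry fun t r => (N t r - c r * deriv (F t) r) / a r)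
      (Ioi 0 ×ˢ Ioi 0) :=
    (hF.continuousOn_speed.sub ((cc.comp continuousOn_snd (mapsTo_snd_prod _ _)).mul cSlope)).div
      (ca.comp continuousOn_snd (mapsTo_snd_prod _ _)) fun p hp => (a_pos p.2 hp.2).ne'
  have shift {k : ℝ → ℝ → ℝ} (hk : ContinuousOn (uncurry k) (Ioi 0 ×ˢ Ioi 0)) :
      ContinuousOn (uncurry fun t => k (t + h)) (Ioi 0 ×ˢ Ioi 0) :=
    hk.comp (f := fun p : ℝ × ℝ => (p.1 + h, p.2)) (by fun_prop)
      fun p hp => ⟨add_pos_of_pos_of_nonneg hp.1 hh, hp.2⟩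
  have hspace (t : ℝ) (ht : 0 < t) (r : ℝ) (hr : 0 < r) :=
    hF.hasDerivAt_space ca cc a_pos ht hr
  have hslope (t : ℝ) (ht : 0 < t) (r : ℝ) (hr : 0 < r) :=
    hF.slope_hasDerivAt ca cc a_pos ht hr
  refine ⟨fun t ht r hr => hasDerivAt_slidingIntegral_time hh (cF.uncurry_right r hr) ht,
    fun t ht r hr => hasDerivAt_slidingIntegral_space hh isOpen_Ioi cF cSlope hspace ht hr,
    fun t ht r hr => hasDerivAt_slidingIntegral_time hh (cSlope.uncurry_right r hr) ht,
    fun t ht r hr => hasDerivAt_slidingIntegral_space hh isOpen_Ioi cSlope cCurvature hslope ht hr,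
    fun t ht r hr => (hspace _ (add_pos_of_pos_of_nonneg ht hh) r hr).sub (hspace t ht r hr),
    fun t ht r hr => ?_, continuousOn_slidingIntegral hh cF, continuousOn_slidingIntegral hh cSlope,
    (shift cF).sub cF, (shift cSlope).sub cSlope⟩
  have ht' : 0 < t + h := add_pos_of_pos_of_nonneg ht hh
  rw [← slidingIntegral_eq_sub hh (fun s hs => hF.hasDerivAt_time s hs r hr)
    (hF.continuousOn_speed.uncurry_right r hr) ht, slidingIntegral, slidingIntegral,
    slidingIntegral, ← intervalIntegral.integral_const_mul, ← intervalIntegral.integral_const_mul,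
    ← intervalIntegral.integral_add
      ((intervalIntegrable_of_continuousOn_Ioi (cCurvature.uncurry_right r hr) ht ht').const_mul _)
      ((intervalIntegrable_of_continuousOn_Ioi (cSlope.uncurry_right r hr) ht ht').const_mul _)]
  refine intervalIntegral.integral_congr fun s _ => ?_
  have a_ne := (a_pos r hr).ne'
  field_simp
  ring

/-- The average of `f s r` over `s ∈ [t + h, t + 3 h]` with a tent-shaped weight. Averaging twice
makes it a regular solution up to time `0` when `f` is a classical solution. -/
noncomputable def mollify (h : ℝ) (f : ℝ → ℝ → ℝ) (t : ℝ) : ℝ → ℝ :=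
  slidingIntegral h (slidingIntegral h fun t r => (h ^ 2)⁻¹ * f t r) (t + h)

theorem IsClassicalSolution.isRegularSolution_mollify (hf : IsClassicalSolution a c f f' f'')
    (ca : ContinuousOn a (Ioi 0)) (cc : ContinuousOn c (Ioi 0)) (a_pos : ∀ r, 0 < r → 0 < a r)
    {B : ℝ} (hB : ∀ t, 0 < t → ∀ r, 0 < r → |f t r| ≤ B) (hh : 0 < h) :
    ∃ g gr ut gt : ℝ → ℝ → ℝ,
      IsRegularSolution a c (Ici 0) (Ioi 0) (mollify h f) g gr ut gt ∧
        ∀ t, 0 ≤ t → ∀ r, 0 < r → |mollify h f t r| ≤ B ∧ |ut t r| ≤ 2 * B / h := by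
  set G := slidingIntegral h fun t r => (h ^ 2)⁻¹ * f t r
  have hG := (hf.const_mul (h ^ 2)⁻¹).isGeneralizedSolution_slidingIntegral hh
  have G_le (t : ℝ) (ht : 0 < t) (r : ℝ) (hr : 0 < r) : |G t r| ≤ B / h := by
    have times := Icc_add_subset_Ioi (h := h) ht
    refine (abs_slidingIntegral_le (B := (h ^ 2)⁻¹ * B) hh.le
      (((hf.const_mul _).continuousOn.uncurry_right r hr).mono times) fun s hs => ?_).trans_eq ?_
    · rw [abs_mul, abs_of_pos (by positivity)]
      gcongr
      exact hB s (times hs) r hr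
    · field_simp
  refine ⟨_, _, _, _, ((hG.isRegularSolution_slidingIntegral ca cc a_pos hh.le).comp_add_const
    h).mono (fun t ht => add_pos_of_nonneg_of_pos ht hh) Subset.rfl, fun t ht r hr => ⟨?_, ?_⟩⟩
  · have times := Icc_add_subset_Ioi (h := h) (add_pos_of_nonneg_of_pos ht hh)
    exact (abs_slidingIntegral_le hh.le ((hG.continuousOn.uncurry_right r hr).mono times)
      fun s hs => G_le s (times hs) r hr).trans_eq (div_mul_cancel₀ B hh.ne')
  · calc |G (t + h + h) r - G (t + h) r| ≤ |G (t + h + h) r| + |G (t + h) r| := abs_sub _ _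
      _ ≤ B / h + B / h :=
        add_le_add (G_le _ (by positivity) r hr) (G_le _ (by positivity) r hr)
      _ = 2 * B / h := by ring

theorem tendsto_mollify {r t : ℝ} (hf : ContinuousOn (fun s => f s r) (Ioi 0)) (ht : 0 < t) :
    Tendsto (fun h => mollify h f t r) (𝓝[>] 0) (𝓝 (f t r)) := by
  refine Metric.tendsto_nhdsWithin_nhds.2 fun ε hε => ?_
  obtain ⟨ρ, hρ, near⟩ := Metric.continuousAt_iff.1 (hf.continuousAt (Ioi_mem_nhds ht)) (ε / 2)
    (half_pos hε)
  refine ⟨ρ / 3, by positivity, fun h (hh : 0 < h) h_lt => ?_⟩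
  rw [Real.dist_0_eq_abs, abs_of_pos hh] at h_lt
  have scaled : ContinuousOn (fun s => (h ^ 2)⁻¹ * f s r) (Ioi 0) := hf.const_mul _
  have inner_near (s : ℝ) (hs : s ∈ Icc (t + h) (t + h + h)) :
      |slidingIntegral h (fun t r => (h ^ 2)⁻¹ * f t r) s r - h * ((h ^ 2)⁻¹ * f t r)|
        ≤ (h ^ 2)⁻¹ * (ε / 2) * h := by
    have hs_pos : 0 < s := by linarith [hs.1]
    refine abs_slidingIntegral_sub_mul_le hh.le (scaled.mono (Icc_add_subset_Ioi hs_pos))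
      fun τ hτ => ?_
    rw [← mul_sub, abs_mul, abs_of_pos (by positivity : 0 < (h ^ 2)⁻¹)]
    gcongr
    refine (near ?_).le
    rw [Real.dist_eq, abs_lt]
    constructor <;> linarith [hs.1, hs.2, hτ.1, hτ.2]
  have inner_continuous : ContinuousOn
      (fun s => slidingIntegral h (fun t r => (h ^ 2)⁻¹ * f t r) s r) (Ioi 0) := fun s hs =>
    (hasDerivAt_slidingIntegral_time hh.le scaled hs).continuousAt.continuousWithinAt
  have outer_near := abs_slidingIntegral_sub_mul_le hh.le
    (inner_continuous.mono (Icc_add_subset_Ioi (by positivity))) inner_near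
  have target : h * (h * ((h ^ 2)⁻¹ * f t r)) = f t r := by field_simp
  have radius : (h ^ 2)⁻¹ * (ε / 2) * h * h = ε / 2 := by field_simp
  rw [target, radius] at outer_near
  exact outer_near.trans_lt (half_lt_self hε)

end Mollification

section Origin

variable {a c u g gr : ℝ → ℝ} {B E M q r η : ℝ}

theorem exists_abs_mul_deriv_le (hr : 0 < r) (hη : 0 < η)
    (hu : ∀ x ∈ Ioc 0 r, HasDerivAt u (g x) x) (hB : ∀ x ∈ Ioc 0 r, |u x| ≤ B) :
    ∃ ξ ∈ Ioo 0 r, |ξ * g ξ| ≤ η := by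
  have B_nonneg : 0 ≤ B := (abs_nonneg _).trans (hB r ⟨hr, le_rfl⟩)
  set T := 2 * B / η + 1
  have T_pos : 0 < T := by positivity
  set x := r * Real.exp (-T)
  have x_pos : 0 < x := by positivity
  have x_lt : x < r := mul_lt_of_lt_one_right hr (Real.exp_lt_one_iff.2 (neg_lt_zero.2 T_pos))
  have log_gap : Real.log r - Real.log x = T := by
    rw [Real.log_mul hr.ne' (Real.exp_ne_zero _), Real.log_exp]
    ring
  have positive {y : ℝ} (hy : y ∈ Icc x r) : 0 < y := x_pos.trans_le hy.1
  have inside {y : ℝ} (hy : y ∈ Icc x r) : y ∈ Ioc 0 r := ⟨positive hy, hy.2⟩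
  obtain ⟨ξ, hξ, cauchy⟩ := exists_ratio_hasDerivAt_eq_ratio_slope Real.log (fun y => y⁻¹) x_lt
    (fun y hy => (Real.continuousAt_log (positive hy).ne').continuousWithinAt)
    (fun y hy => Real.hasDerivAt_log (positive (Ioo_subset_Icc_self hy)).ne') u g
    (fun y hy => (hu y (inside hy)).continuousAt.continuousWithinAt)
    (fun y hy => hu y (inside (Ioo_subset_Icc_self hy)))
  have ξ_pos := x_pos.trans hξ.1
  refine ⟨ξ, ⟨ξ_pos, hξ.2⟩, le_of_mul_le_mul_left ?_ T_pos⟩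
  rw [log_gap] at cauchy
  calc T * |ξ * g ξ| = |T * (ξ * g ξ)| := by rw [abs_mul T, abs_of_pos T_pos]
    _ = |u r - u x| := by
      rw [mul_left_comm, ← cauchy, mul_left_comm, mul_inv_cancel₀ ξ_pos.ne', mul_one]
    _ ≤ |u r| + |u x| := abs_sub _ _
    _ ≤ B + B := add_le_add (hB r ⟨hr, le_rfl⟩) (hB x ⟨x_pos, x_lt.le⟩)
    _ ≤ T * η := by
      rw [add_mul, div_mul_cancel₀ _ hη.ne']
      linarith

theorem hasDerivAt_mul_exp_neg_mul {g' : ℝ} (E : ℝ) (hq : 0 < q) (hr : 0 < r)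
    (hg : HasDerivAt g g' r) :
    HasDerivAt (fun x => x * Real.exp (-(E / q * x ^ q)) * g x)
      (Real.exp (-(E / q * r ^ q)) * ((1 - E * r ^ q) * g r + r * g')) r := by
  have power : r ^ q = r ^ (q - 1) * r := by rw [← Real.rpow_add_one hr.ne', sub_add_cancel]
  refine (((hasDerivAt_id r).fun_mul ((((Real.hasDerivAt_rpow_const (p := q)
    (Or.inl hr.ne')).const_mul (E / q)).fun_neg).exp)).fun_mul hg).congr_deriv ?_
  simp only [id_eq, power]
  field_simp
  ring

/-- `r exp (-E r ^ q / q)` underestimates the integrating factor of `a ∂ᵣ² + c ∂ᵣ`, so a barrier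
for its product with `g` only needs to beat the source. -/
theorem mul_exp_neg_mul_slope_le {A M' ξ : ℝ} (hq : 0 < q) (hE : 0 ≤ E) (hM : 0 ≤ M)
    (hM' : M < M') (hA : 0 < A) (hξ : 0 < ξ) (hξr : ξ ≤ r) (start : |ξ * g ξ| ≤ A)
    (hg : ∀ x ∈ Icc ξ r, HasDerivAt g (gr x) x) (a_pos : ∀ x ∈ Icc ξ r, 0 < a x)
    (drift : ∀ x ∈ Icc ξ r, a x - x * c x ≤ E * x ^ q * a x)
    (source : ∀ x ∈ Icc ξ r, a x * gr x + c x * g x ≤ M * a x) :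
    r * Real.exp (-(E / q * r ^ q)) * g r ≤ A + M' * r ^ 2 / 2 := by
  let damping (x : ℝ) := Real.exp (-(E / q * x ^ q))
  have damping_pos (x : ℝ) : 0 < damping x := Real.exp_pos _
  have damping_le (x : ℝ) (hx : 0 < x) : damping x ≤ 1 :=
    Real.exp_le_one_iff.2 (neg_nonpos.2 (by positivity))
  have positive {x : ℝ} (hx : x ∈ Icc ξ r) : 0 < x := hξ.trans_le hx.1
  have flux_deriv (x : ℝ) (hx : x ∈ Icc ξ r) :=
    hasDerivAt_mul_exp_neg_mul E hq (positive hx) (hg x hx)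
  have barrier_deriv (x : ℝ) : HasDerivAt (fun x => A + M' * x ^ 2 / 2) (M' * x) x :=
    ((((hasDerivAt_id x).fun_pow 2).const_mul M').div_const 2 |>.const_add A).congr_deriv
      (by simp; ring)
  have start_le : ξ * damping ξ * g ξ ≤ A + M' * ξ ^ 2 / 2 := by
    have M'_pos : 0 < M' := hM.trans_lt hM'
    calc ξ * damping ξ * g ξ = damping ξ * (ξ * g ξ) := by ring
      _ ≤ damping ξ * |ξ * g ξ| := by gcongr; exact le_abs_self _
      _ ≤ 1 * |ξ * g ξ| := by gcongr; exact damping_le ξ hξ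
      _ ≤ A + M' * ξ ^ 2 / 2 := by linarith [show 0 ≤ M' * ξ ^ 2 / 2 by positivity]
  refine image_le_of_deriv_right_lt_deriv_boundary
    (fun x hx => (flux_deriv x hx).continuousAt.continuousWithinAt)
    (fun x hx => (flux_deriv x (Ico_subset_Icc_self hx)).hasDerivWithinAt) start_le barrier_deriv
    (fun x hx touch => ?_) ⟨hξr, le_rfl⟩
  have hx := Ico_subset_Icc_self hx
  have x_pos := positive hx
  have slope_pos : 0 < g x := by
    refine pos_of_mul_pos_right (a := x * damping x) ?_ (mul_pos x_pos (damping_pos x)).le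
    rw [touch]
    have := hM.trans_lt hM'
    positivity
  have growth : (1 - E * x ^ q) * g x + x * gr x ≤ M * x := by
    refine le_of_mul_le_mul_left ?_ (a_pos x hx)
    linarith [mul_le_mul_of_nonneg_right (drift x hx) slope_pos.le,
      mul_le_mul_of_nonneg_left (source x hx) x_pos.le]
  calc damping x * ((1 - E * x ^ q) * g x + x * gr x) ≤ damping x * (M * x) := by
        gcongr
    _ ≤ 1 * (M * x) := by gcongr; exact damping_le x x_pos
    _ < M' * x := by rw [one_mul]; gcongr

theorem abs_slope_le_of_abs_le (hq : 0 < q) (hE : 0 ≤ E) (hr : 0 < r)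
    (hu : ∀ x ∈ Ioc 0 r, HasDerivAt u (g x) x) (hg : ∀ x ∈ Ioc 0 r, HasDerivAt g (gr x) x)
    (hB : ∀ x ∈ Ioc 0 r, |u x| ≤ B) (a_pos : ∀ x ∈ Ioc 0 r, 0 < a x)
    (drift : ∀ x ∈ Ioc 0 r, a x - x * c x ≤ E * x ^ q * a x)
    (source : ∀ x ∈ Ioc 0 r, |a x * gr x + c x * g x| ≤ M * a x) :
    |g r| ≤ Real.exp (E / q * r ^ q) * (M / 2) * r := by
  have M_nonneg : 0 ≤ M := nonneg_of_mul_nonneg_left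
    ((abs_nonneg _).trans (source r ⟨hr, le_rfl⟩)) (a_pos r ⟨hr, le_rfl⟩)
  have bound (η : ℝ) (hη : 0 < η) :
      r * Real.exp (-(E / q * r ^ q)) * |g r| ≤ η + (M + η) * r ^ 2 / 2 := by
    obtain ⟨ξ, hξ, start⟩ := exists_abs_mul_deriv_le hr hη hu hB
    have inside {x : ℝ} (hx : x ∈ Icc ξ r) : x ∈ Ioc 0 r := ⟨hξ.1.trans_le hx.1, hx.2⟩
    have lt_add : M < M + η := lt_add_of_pos_right M hη
    obtain nonneg | nonpos := abs_cases (g r)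
    · rw [nonneg.1]
      exact mul_exp_neg_mul_slope_le hq hE M_nonneg lt_add hη hξ.1 hξ.2.le start
        (fun x hx => hg x (inside hx)) (fun x hx => a_pos x (inside hx))
        (fun x hx => drift x (inside hx)) fun x hx => (abs_le.1 (source x (inside hx))).2
    · rw [nonpos.1]
      exact mul_exp_neg_mul_slope_le (g := fun x => -g x) hq hE M_nonneg lt_add hη hξ.1 hξ.2.le
        (by simpa only [mul_neg, abs_neg] using start)
        (fun x hx => (hg x (inside hx)).fun_neg) (fun x hx => a_pos x (inside hx))
        (fun x hx => drift x (inside hx))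
        fun x hx => by linarith [(abs_le.1 (source x (inside hx))).1]
  have limit_bound : r * Real.exp (-(E / q * r ^ q)) * |g r| ≤ M * r ^ 2 / 2 := by
    refine le_of_forall_pos_le_add_mul (k := 1 + r ^ 2 / 2) fun η hη => ?_
    linarith [bound η hη]
  rw [Real.exp_neg] at limit_bound
  refine le_of_mul_le_mul_left ?_ (show 0 < r * (Real.exp (E / q * r ^ q))⁻¹ by positivity)
  refine limit_bound.trans_eq ?_
  field_simp

end Origin

section UnitTime

theorem monotone_Icc_div_add_one {x y : ℝ} (hx : 0 ≤ x) :
    Monotone fun n : ℕ => Icc (x / (n + 1)) y := fun m n hmn =>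
  Icc_subset_Icc_left (by gcongr)

theorem iUnion_Icc_div_add_one {x : ℝ} (hx : 0 < x) (y : ℝ) :
    ⋃ n : ℕ, Icc (x / (n + 1)) y = Ioc 0 y := by
  ext r
  simp only [mem_iUnion, mem_Icc, mem_Ioc, exists_and_right]
  refine and_congr_left fun _ => ⟨fun ⟨n, hn⟩ => lt_of_lt_of_le (by positivity) hn, fun hr => ?_⟩
  obtain ⟨n, hn⟩ := exists_nat_gt (x / r)
  refine ⟨n, ?_⟩
  rw [div_lt_iff₀ hr] at hn
  rw [div_le_iff₀ (by positivity)]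
  linarith

variable {a a' c w w' w'' : ℝ → ℝ} {δ c₀ C₀ L B K₀ E m q : ℝ} {u g gr ut gt : ℝ → ℝ → ℝ}

theorem IsRegularSolution.exists_speed_slope_le (hq : 0 < q) (hE : 0 ≤ E) (hm : 0 < m)
    (hL : L ≤ 1) (le_a : ∀ r ∈ Ioc 0 L, m ≤ a r)
    (drift : ∀ r ∈ Ioc 0 L, a r - r * c r ≤ E * r ^ q * a r)
    (hu : IsRegularSolution a c (Icc 0 1) (Ioi 0) u g gr ut gt)
    (hB : ∀ t ∈ Icc (0 : ℝ) 1, ∀ r ∈ Ioc 0 L, |u t r| ≤ B)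
    (hut : ∀ t ∈ Icc (0 : ℝ) 1, ∀ r ∈ Ioc 0 L, |ut t r| ≤ K₀) :
    ∃ K, ∀ t ∈ Icc (0 : ℝ) 1, ∀ r ∈ Ioc 0 L, |ut t r| ≤ K ∧ |g t r| ≤ K * r := by
  refine ⟨max K₀ (Real.exp (E / q) * (K₀ / m / 2)), fun t ht r hr =>
    ⟨(hut t ht r hr).trans (le_max_left _ _), ?_⟩⟩
  have K₀_nonneg : 0 ≤ K₀ := (abs_nonneg _).trans (hut t ht r hr)
  have inside {x : ℝ} (hx : x ∈ Ioc 0 r) : x ∈ Ioc 0 L := ⟨hx.1, hx.2.trans hr.2⟩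
  have source (x : ℝ) (hx : x ∈ Ioc 0 r) : |a x * gr t x + c x * g t x| ≤ K₀ / m * a x := by
    rw [← hu.equation t ht x hx.1, div_mul_eq_mul_div, le_div_iff₀ hm]
    exact mul_le_mul (hut t ht x (inside hx)) (le_a x (inside hx)) hm.le K₀_nonneg
  have slope_le := abs_slope_le_of_abs_le hq hE hr.1 (fun x hx => hu.hasDerivAt_space t ht x hx.1)
    (fun x hx => hu.slope_hasDerivAt_space t ht x hx.1) (fun x hx => hB t ht x (inside hx))
    (fun x hx => hm.trans_le (le_a x (inside hx))) (fun x hx => drift x (inside hx)) source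
  have exponent_le : E / q * r ^ q ≤ E / q :=
    mul_le_of_le_one_right (by positivity) (Real.rpow_le_one hr.1.le (hr.2.trans hL) hq.le)
  calc |g t r| ≤ Real.exp (E / q * r ^ q) * (K₀ / m / 2) * r := slope_le
    _ ≤ Real.exp (E / q) * (K₀ / m / 2) * r := by
      have := hr.1.le
      gcongr
    _ ≤ _ := mul_le_mul_of_nonneg_right (le_max_right _ _) hr.1.le

section

variable {K : ℝ} (h : HasCoefficientBounds δ c₀ C₀ L a a' c w w' w'')
  (hu : IsRegularSolution a c (Icc 0 1) (Ioi 0) u g gr ut gt) (hδ : 0 < δ) (hδ₁ : δ ≤ 1)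
  (hc₀ : 0 < c₀) (hL : L ≤ 1) (hB₀ : 0 < B)
  (hB : ∀ t ∈ Icc (0 : ℝ) 1, ∀ r ∈ Ioc 0 L, |u t r| ≤ B)
  (hK : ∀ t ∈ Icc (0 : ℝ) 1, ∀ r ∈ Ioc 0 L, |ut t r| ≤ K ∧ |g t r| ≤ K * r)
include h hu hδ hδ₁ hc₀ hL hB₀ hB hK

theorem HasCoefficientBounds.setLIntegral_rectangle_slope_le {σ : ℝ} (hσ : 0 < σ)
    (hσL : σ ≤ L / 2) :
    ∫⁻ p in Icc 0 1 ×ˢ Icc σ (L / 2),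
        ENNReal.ofReal (uncurry (fun t r => r ^ δ * w r * |g t r|) p)
      ≤ ENNReal.ofReal (slopeConst δ c₀ C₀ L * (B + K * σ ^ δ)) := by
  have mem (r : ℝ) (hr : r ∈ Icc σ L) : r ∈ Ioc 0 L := ⟨hσ.trans_le hr.1, hr.2⟩
  have sub : Icc σ (L / 2) ⊆ Icc σ L := Icc_subset_Icc_right (by linarith)
  have σ_mem : σ ∈ Ioc 0 L := mem _ (sub ⟨le_rfl, hσL⟩)
  have cw := h.continuousOn_weight.mono fun r hr => mem r (sub hr)
  have hu' := hu.mono Subset.rfl fun r hr => (mem r hr).1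
  have cg := (hu'.mono Subset.rfl sub).continuousOn_slope
  have c_rpow := continuousOn_rpow_of_pos δ fun r hr => (mem r (sub hr)).1
  have snd_mem := mapsTo_snd_prod (Icc (0 : ℝ) 1) (Icc σ (L / 2))
  rw [← ofReal_integral_eq_lintegral_ofReal
    (integrableOn_rectangle (by fun_prop (disch := assumption)))]
  · exact ENNReal.ofReal_le_ofReal <| h.setIntegral_rpow_mul_weight_mul_abs_slope_le
      hu' hδ hδ₁ hc₀ hL hσ hσL hB₀ (fun t ht r hr => hB t ht r (mem r hr))
      (fun t ht => (hK t ht _ σ_mem).1) fun t ht => (hK t ht _ σ_mem).2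
  · filter_upwards [ae_restrict_mem (measurableSet_Icc.prod measurableSet_Icc)] with p hp
    have hp₂ := mem _ (sub hp.2)
    exact mul_nonneg (mul_nonneg (Real.rpow_nonneg hp₂.1.le _) (h.weight_pos _ hp₂).le)
      (abs_nonneg _)

theorem HasCoefficientBounds.setLIntegral_slope_le (hL₀ : 0 < L) :
    ∫⁻ p in Icc 0 1 ×ˢ Ioc 0 (L / 2),
        ENNReal.ofReal (uncurry (fun t r => r ^ δ * w r * |g t r|) p)
      ≤ ENNReal.ofReal (slopeConst δ c₀ C₀ L * B) := by
  set σ : ℕ → ℝ := fun n => L / 2 / (n + 1)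
  have rect_mono : Monotone fun n => Icc (0 : ℝ) 1 ×ˢ Icc (σ n) (L / 2) := fun m n hmn =>
    prod_mono_right (monotone_Icc_div_add_one (by positivity) hmn)
  have bound_tendsto : Tendsto
      (fun n => ENNReal.ofReal (slopeConst δ c₀ C₀ L * (B + K * σ n ^ δ))) atTop
      (𝓝 (ENNReal.ofReal (slopeConst δ c₀ C₀ L * B))) := by
    have σ_tendsto : Tendsto σ atTop (𝓝 0) := tendsto_const_div_atTop_nhds_zero_nat (L / 2)
      |>.comp (tendsto_add_atTop_nat 1) |>.congr fun n => by simp [σ]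
    have := σ_tendsto.rpow_const (p := δ) (.inr hδ.le)
    rw [Real.zero_rpow hδ.ne'] at this
    refine ENNReal.tendsto_ofReal ?_
    simpa using ((this.const_mul K).const_add B).const_mul (slopeConst δ c₀ C₀ L)
  rw [← iUnion_Icc_div_add_one (half_pos hL₀), prod_iUnion,
    setLIntegral_iUnion_of_directed _ rect_mono.directed_le]
  refine iSup_le fun n => ge_of_tendsto bound_tendsto <| eventually_atTop.2 ⟨n, fun m hm =>
    (lintegral_mono_set (rect_mono hm)).trans (h.setLIntegral_rectangle_slope_le hu hδ hδ₁ hc₀ hL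
      hB₀ hB hK (by positivity) (div_le_self (by positivity) (by simp)))⟩

end

end UnitTime

section OriginHolder

/-- The Hölder constant of order `γ` at the origin, over `(0, l)`. -/
noncomputable def originHolder (γ l : ℝ) (v : ℝ → ℝ) : ℝ≥0∞ :=
  ⨆ r ∈ Ioo (0 : ℝ) l, ENNReal.ofReal (|v r - v 0| / r ^ γ)

variable {γ l : ℝ}

theorem ofReal_abs_sub_div_rpow_le_lintegral {v g φ : ℝ → ℝ} {x y : ℝ} (hγ : 0 ≤ γ) (hx : 0 < x)
    (hxy : x ≤ y) (hyl : y ≤ l) (hv : ∀ r ∈ Icc x y, HasDerivAt v (g r) r)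
    (cg : ContinuousOn g (Icc x y)) (hφ : ∀ r ∈ Ioc 0 l, r ^ (-γ) ≤ φ r) :
    ENNReal.ofReal (|v y - v x| / y ^ γ) ≤ ∫⁻ r in Ioc 0 l, ENNReal.ofReal (φ r * |g r|) := by
  have y_pos := hx.trans_le hxy
  have increment : v y - v x = ∫ r in x..y, g r :=
    (intervalIntegral.integral_eq_sub_of_hasDerivAt (by rwa [uIcc_of_le hxy])
      (cg.intervalIntegrable_of_Icc hxy)).symm
  calc ENNReal.ofReal (|v y - v x| / y ^ γ)
      = ENNReal.ofReal (y ^ (-γ)) * ‖∫ r in Ioc x y, g r‖ₑ := by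
        rw [increment, intervalIntegral.integral_of_le hxy, div_eq_mul_inv,
          ← Real.rpow_neg y_pos.le, mul_comm, ENNReal.ofReal_mul (by positivity),
          Real.enorm_eq_ofReal_abs]
    _ ≤ ENNReal.ofReal (y ^ (-γ)) * ∫⁻ r in Ioc x y, ‖g r‖ₑ := by
        gcongr
        exact enorm_integral_le_lintegral_enorm _
    _ = ∫⁻ r in Ioc x y, ENNReal.ofReal (y ^ (-γ)) * ‖g r‖ₑ :=
        (lintegral_const_mul' _ _ ENNReal.ofReal_ne_top).symm
    _ ≤ ∫⁻ r in Ioc x y, ENNReal.ofReal (φ r * |g r|) := by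
        refine setLIntegral_mono' measurableSet_Ioc fun r hr => ?_
        have r_pos := hx.trans hr.1
        rw [Real.enorm_eq_ofReal_abs, ← ENNReal.ofReal_mul (by positivity)]
        refine ENNReal.ofReal_le_ofReal (mul_le_mul_of_nonneg_right ?_ (abs_nonneg _))
        exact (Real.rpow_le_rpow_of_nonpos r_pos hr.2 (neg_nonpos.2 hγ)).trans
          (hφ r ⟨r_pos, hr.2.trans hyl⟩)
    _ ≤ _ := lintegral_mono_set (Ioc_subset_Ioc hx.le hyl)

theorem originHolder_le_liminf {f : ℝ → ℝ} {v : ℕ → ℝ → ℝ} {X : ℕ → ℝ≥0∞}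
    (hf : ContinuousWithinAt f (Ioi 0) 0)
    (hv : ∀ r, 0 < r → Tendsto (fun n => v n r) atTop (𝓝 (f r)))
    (hX : ∀ n x y, 0 < x → x ≤ y → y < l → ENNReal.ofReal (|v n y - v n x| / y ^ γ) ≤ X n) :
    originHolder γ l f ≤ liminf X atTop := by
  refine iSup₂_le fun y hy => ?_
  have away (x : ℝ) (hx : x ∈ Ioc 0 y) :
      ENNReal.ofReal (|f y - f x| / y ^ γ) ≤ liminf X atTop := by
    have increment := ENNReal.tendsto_ofReal
      ((((hv y hy.1).sub (hv x hx.1)).abs).div_const (y ^ γ))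
    rw [← increment.liminf_eq]
    exact liminf_le_liminf (Eventually.of_forall fun n => hX n x y hx.1 hx.2 hy.2)
  refine le_of_tendsto (ENNReal.tendsto_ofReal ((hf.tendsto.const_sub (f y)).abs.div_const _)) ?_
  filter_upwards [Ioc_mem_nhdsGT hy.1] with x hx using away x hx

theorem lintegral_Ioc_natCast_le {φ : ℝ → ℝ≥0∞} {A : ℝ≥0∞}
    (h : ∀ j : ℕ, ∫⁻ s in Ioc (j : ℝ) (j + 1), φ s ≤ A) (N : ℕ) :
    ∫⁻ s in Ioc (0 : ℝ) N, φ s ≤ N * A := by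
  induction N with
  | zero => simp
  | succ n ih =>
    rw [Nat.cast_succ, ← Ioc_union_Ioc_eq_Ioc n.cast_nonneg (le_add_of_nonneg_right zero_le_one)]
    refine (lintegral_union_le _ _ _).trans ?_
    rw [Nat.cast_succ, add_mul, one_mul]
    exact add_le_add ih (h n)

theorem lintegral_Ioc_le_of_forall_shift {φ : ℝ → ℝ≥0∞} {A : ℝ≥0∞} {t : ℝ} (ht : 0 ≤ t)
    (h : ∀ j : ℕ, ∫⁻ s in Ioc (0 : ℝ) 1, φ (s + j) ≤ A) :
    ∫⁻ s in Ioc (0 : ℝ) t, φ s ≤ ENNReal.ofReal (1 + t) * A := by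
  have shift (j : ℕ) : ∫⁻ s in Ioc (j : ℝ) (j + 1), φ s = ∫⁻ s in Ioc (0 : ℝ) 1, φ (s + j) := by
    have := (measurePreserving_add_right volume (j : ℝ)).setLIntegral_comp_preimage_emb
      (MeasurableEquiv.addRight (j : ℝ)).measurableEmbedding φ (Ioc (j : ℝ) (j + 1))
    simpa using this.symm
  calc ∫⁻ s in Ioc (0 : ℝ) t, φ s ≤ ∫⁻ s in Ioc (0 : ℝ) ⌈t⌉₊, φ s :=
        lintegral_mono_set (Ioc_subset_Ioc_right (Nat.le_ceil t))
    _ ≤ ⌈t⌉₊ * A := lintegral_Ioc_natCast_le (fun j => (shift j).trans_le (h j)) _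
    _ ≤ ENNReal.ofReal (1 + t) * A := by
        gcongr
        rw [← ENNReal.ofReal_natCast]
        exact ENNReal.ofReal_le_ofReal (by linarith [Nat.ceil_lt_add_one ht])

theorem rpow_le_rpow_add_rpow_sub_one_mul {B p : ℝ} (hB : 0 < B) (hp : 0 ≤ p) (hp₁ : p ≤ 1)
    (Y : ℝ≥0∞) :
    Y ^ p ≤ ENNReal.ofReal (B ^ p) + ENNReal.ofReal (B ^ (p - 1)) * Y := by
  have B_ne : ENNReal.ofReal B ≠ 0 := (ENNReal.ofReal_pos.2 hB).ne'
  rw [← ENNReal.ofReal_rpow_of_pos hB, ← ENNReal.ofReal_rpow_of_pos hB]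
  obtain small | large := le_total Y (ENNReal.ofReal B)
  · exact (ENNReal.rpow_le_rpow small hp).trans le_self_add
  · refine le_add_left ?_
    obtain rfl | Y_ne_top := eq_or_ne Y ⊤
    · simp [ENNReal.mul_top, ENNReal.rpow_eq_zero_iff, B_ne, ENNReal.ofReal_ne_top]
    have Y_ne_zero : Y ≠ 0 := (B_ne.bot_lt.trans_le large).ne'
    calc Y ^ p = Y ^ (p - 1) * Y := by
          conv_lhs => rw [← sub_add_cancel p 1, ENNReal.rpow_add _ _ Y_ne_zero Y_ne_top,
            ENNReal.rpow_one]
      _ ≤ _ := by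
          gcongr ?_ * _
          rw [← neg_sub 1 p, ENNReal.rpow_neg, ENNReal.rpow_neg]
          exact ENNReal.inv_le_inv.2 (ENNReal.rpow_le_rpow large (sub_nonneg.2 hp₁))

end OriginHolder

section HolderEstimate

/-- Coefficients on the half-line for which the slope estimate near the origin controls the Hölder
constant of order `γ` there. The last two fields say that at the origin `a` does not degenerate and
the drift is nearly at least that of the two-dimensional Laplacian; they replace a Neumann
condition. -/
structure IsHolderAdmissible (γ δ c₀ C₀ L : ℝ) (a a' c w w' w'' : ℝ → ℝ) : Prop extends
    HasCoefficientBounds δ c₀ C₀ L a a' c w w' w'' where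
  diffusion_continuousOn : ContinuousOn a (Ioi 0)
  drift_continuousOn : ContinuousOn c (Ioi 0)
  diffusion_pos : ∀ r, 0 < r → 0 < a r
  rpow_neg_le : ∀ r ∈ Ioc 0 L, r ^ (-γ) ≤ r ^ δ * w r
  exists_le_diffusion : ∃ m, 0 < m ∧ ∀ r ∈ Ioc 0 L, m ≤ a r
  exists_sub_mul_drift_le : ∃ E q : ℝ, 0 ≤ E ∧ 0 < q ∧
    ∀ r ∈ Ioc 0 L, a r - r * c r ≤ E * r ^ q * a r

variable {a a' c w w' w'' : ℝ → ℝ} {γ δ c₀ C₀ L B : ℝ} {f f' f'' : ℝ → ℝ → ℝ}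
  (h : IsHolderAdmissible γ δ c₀ C₀ L a a' c w w' w'') (hγ : 0 ≤ γ) (hδ : 0 < δ) (hδ₁ : δ ≤ 1)
  (hc₀ : 0 < c₀) (hL₀ : 0 < L) (hL : L ≤ 1) (hB₀ : 0 < B)
  (hf : IsClassicalSolution a c f f' f'') (hB : ∀ t, 0 < t → ∀ r, 0 < r → |f t r| ≤ B)
include h hγ hδ hδ₁ hc₀ hL₀ hL hB₀ hf hB

theorem IsHolderAdmissible.exists_slope_majorant_mollify {η : ℝ} (hη : 0 < η) :
    ∃ X : ℝ → ℝ≥0∞, AEMeasurable X (volume.restrict (Icc 0 1)) ∧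
      ∫⁻ t in Icc 0 1, X t ≤ ENNReal.ofReal (slopeConst δ c₀ C₀ L * B) ∧
      ∀ t ∈ Icc (0 : ℝ) 1, ∀ x y, 0 < x → x ≤ y → y < L / 2 →
        ENNReal.ofReal (|mollify η f t y - mollify η f t x| / y ^ γ) ≤ X t := by
  obtain ⟨m, hm, le_a⟩ := h.exists_le_diffusion
  obtain ⟨E, q, hE, hq, drift⟩ := h.exists_sub_mul_drift_le
  obtain ⟨g, gr, ut, gt, regular, bounds⟩ := hf.isRegularSolution_mollify h.diffusion_continuousOn
    h.drift_continuousOn h.diffusion_pos hB hη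
  have hu := regular.mono (Icc_subset_Ici_self : Icc (0 : ℝ) 1 ⊆ _) Subset.rfl
  have inside {r : ℝ} (hr : r ∈ Ioc 0 (L / 2)) : r ∈ Ioc 0 L := ⟨hr.1, by linarith [hr.2]⟩
  have u_le : ∀ t ∈ Icc (0 : ℝ) 1, ∀ r ∈ Ioc 0 L, |mollify η f t r| ≤ B :=
    fun t ht r hr => (bounds t ht.1 r hr.1).1
  obtain ⟨K, hK⟩ := hu.exists_speed_slope_le hq hE hm hL le_a drift u_le
    fun t ht r hr => (bounds t ht.1 r hr.1).2
  have cw := h.continuousOn_weight.mono fun r hr => inside hr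
  have cg := (hu.mono Subset.rfl (Ioc_subset_Ioi_self : Ioc 0 (L / 2) ⊆ _)).continuousOn_slope
  have c_rpow := continuousOn_rpow_of_pos δ fun r (hr : r ∈ Ioc 0 (L / 2)) => hr.1
  have snd_mem := mapsTo_snd_prod (Icc (0 : ℝ) 1) (Ioc 0 (L / 2))
  have density_continuous : ContinuousOn (uncurry fun t r => r ^ δ * w r * |g t r|)
      (Icc 0 1 ×ˢ Ioc 0 (L / 2)) := by fun_prop (disch := assumption)
  have density_meas :=
    (density_continuous.aemeasurable (μ := volume.prod volume)
      (measurableSet_Icc.prod measurableSet_Ioc)).ennreal_ofReal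
  refine ⟨fun t => ∫⁻ r in Ioc 0 (L / 2), ENNReal.ofReal (r ^ δ * w r * |g t r|), ?_, ?_, ?_⟩
  · rw [← Measure.prod_restrict] at density_meas
    exact density_meas.lintegral_prod_right'
  · refine (setLIntegral_prod _ density_meas).symm.trans_le ?_
    exact h.setLIntegral_slope_le hu hδ hδ₁ hc₀ hL hB₀ u_le hK hL₀
  · exact fun t ht x y hx hxy hy => ofReal_abs_sub_div_rpow_le_lintegral hγ hx hxy hy.le
      (fun r hr => hu.hasDerivAt_space t ht r (hx.trans_le hr.1))
      ((hu.continuousOn_slope.uncurry_left t ht).mono fun r hr => hx.trans_le hr.1)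
      fun r hr => h.rpow_neg_le r (inside hr)

theorem IsHolderAdmissible.lintegral_originHolder_unit_le
    (hf₀ : ∀ t, 0 < t → ContinuousWithinAt (f t) (Ioi 0) 0) :
    ∫⁻ t in Ioc 0 1, originHolder γ (L / 2) (f t)
      ≤ ENNReal.ofReal (slopeConst δ c₀ C₀ L * B) := by
  let η (n : ℕ) : ℝ := 1 / (n + 1)
  have η_pos (n : ℕ) : 0 < η n := Nat.one_div_pos_of_nat
  have η_tendsto : Tendsto η atTop (𝓝[>] 0) := tendsto_nhdsWithin_iff.2
    ⟨tendsto_one_div_add_atTop_nhds_zero_nat, Eventually.of_forall η_pos⟩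
  choose X X_meas X_int X_bound using fun n => h.exists_slope_majorant_mollify hγ hδ hδ₁ hc₀ hL₀
    hL hB₀ hf hB (η_pos n)
  have limit {t r : ℝ} (ht : 0 < t) (hr : 0 < r) :
      Tendsto (fun n => mollify (η n) f t r) atTop (𝓝 (f t r)) :=
    (tendsto_mollify (hf.continuousOn.uncurry_right r hr) ht).comp η_tendsto
  calc ∫⁻ t in Ioc 0 1, originHolder γ (L / 2) (f t)
      ≤ ∫⁻ t in Ioc 0 1, liminf (fun n => X n t) atTop :=
        setLIntegral_mono' measurableSet_Ioc fun t ht => originHolder_le_liminf (hf₀ t ht.1)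
          (fun r hr => limit ht.1 hr) fun n => X_bound n t ⟨ht.1.le, ht.2⟩
    _ ≤ liminf (fun n => ∫⁻ t in Ioc 0 1, X n t) atTop := lintegral_liminf_le' fun n =>
        (X_meas n).mono_measure (Measure.restrict_mono Ioc_subset_Icc_self le_rfl)
    _ ≤ liminf (fun _ => ENNReal.ofReal (slopeConst δ c₀ C₀ L * B)) atTop :=
        liminf_le_liminf <| Eventually.of_forall fun n =>
          (lintegral_mono_set Ioc_subset_Icc_self).trans (X_int n)
    _ = _ := liminf_const _

theorem IsHolderAdmissible.lintegral_originHolder_le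
    (hf₀ : ∀ t, 0 < t → ContinuousWithinAt (f t) (Ioi 0) 0) {t : ℝ} (ht : 0 ≤ t) :
    ∫⁻ s in Ioc 0 t, originHolder γ (L / 2) (f s)
      ≤ ENNReal.ofReal (1 + t) * ENNReal.ofReal (slopeConst δ c₀ C₀ L * B) := by
  refine lintegral_Ioc_le_of_forall_shift ht fun j => ?_
  have later {s : ℝ} (hs : 0 < s) : 0 < s + j := add_pos_of_pos_of_nonneg hs j.cast_nonneg
  exact h.lintegral_originHolder_unit_le hγ hδ hδ₁ hc₀ hL₀ hL hB₀
    (hf.comp_add_const j.cast_nonneg) (fun s hs => hB _ (later hs)) fun s hs => hf₀ _ (later hs)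

end HolderEstimate

section Interpolation

variable {X : Type*} [MeasurableSpace X] {μ : Measure X}

theorem lintegral_rpow_le_add_mul {B p : ℝ} (hB : 0 < B) (hp : 0 ≤ p) (hp₁ : p ≤ 1)
    (φ : X → ℝ≥0∞) :
    ∫⁻ x, φ x ^ p ∂μ
      ≤ ENNReal.ofReal (B ^ p) * μ univ + ENNReal.ofReal (B ^ (p - 1)) * ∫⁻ x, φ x ∂μ :=
  calc ∫⁻ x, φ x ^ p ∂μ
      ≤ ∫⁻ x, (ENNReal.ofReal (B ^ p) + ENNReal.ofReal (B ^ (p - 1)) * φ x) ∂μ :=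
        lintegral_mono fun x => rpow_le_rpow_add_rpow_sub_one_mul hB hp hp₁ (φ x)
    _ = _ := by
        rw [lintegral_add_left measurable_const, lintegral_const,
          lintegral_const_mul' _ _ ENNReal.ofReal_ne_top]

theorem setLIntegral_rpow_le {B C p t : ℝ} (hB : 0 < B) (hp : 0 ≤ p) (hp₁ : p ≤ 1) (hC : 0 ≤ C)
    (ht : 0 ≤ t) {φ : ℝ → ℝ≥0∞}
    (hφ : ∫⁻ s in Ioc 0 t, φ s ≤ ENNReal.ofReal (1 + t) * ENNReal.ofReal (C * B)) :
    ∫⁻ s in Ioc 0 t, φ s ^ p ≤ ENNReal.ofReal ((1 + C) * (1 + t) * B ^ p) := by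
  have B_rpow : B ^ (p - 1) * B = B ^ p := by rw [← Real.rpow_add_one hB.ne', sub_add_cancel]
  have := Real.rpow_nonneg hB.le p
  calc ∫⁻ s in Ioc 0 t, φ s ^ p
      ≤ ENNReal.ofReal (B ^ p) * ENNReal.ofReal t
        + ENNReal.ofReal (B ^ (p - 1)) * ∫⁻ s in Ioc 0 t, φ s := by
        simpa using lintegral_rpow_le_add_mul (μ := volume.restrict (Ioc 0 t)) hB hp hp₁ φ
    _ ≤ ENNReal.ofReal (B ^ p) * ENNReal.ofReal t
        + ENNReal.ofReal (B ^ (p - 1)) * (ENNReal.ofReal (1 + t) * ENNReal.ofReal (C * B)) := by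
        gcongr
    _ = ENNReal.ofReal (B ^ p * t + B ^ (p - 1) * ((1 + t) * (C * B))) := by
        rw [ENNReal.ofReal_add (p := B ^ p * t) (by positivity) (by positivity),
          ENNReal.ofReal_mul (p := B ^ p) (by positivity),
          ENNReal.ofReal_mul (p := B ^ (p - 1)) (by positivity),
          ENNReal.ofReal_mul (p := 1 + t) (by positivity)]
    _ ≤ ENNReal.ofReal ((1 + C) * (1 + t) * B ^ p) := by
        refine ENNReal.ofReal_le_ofReal ?_
        rw [show B ^ (p - 1) * ((1 + t) * (C * B)) = (1 + t) * C * (B ^ (p - 1) * B) by ring,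
          B_rpow]
        linarith

theorem IsHolderAdmissible.lintegral_originHolder_rpow_le {a a' c w w' w'' : ℝ → ℝ}
    {γ δ c₀ C₀ L B p t : ℝ} {f f' f'' : ℝ → ℝ → ℝ}
    (h : IsHolderAdmissible γ δ c₀ C₀ L a a' c w w' w'') (hγ : 0 ≤ γ) (hδ : 0 < δ) (hδ₁ : δ ≤ 1)
    (hc₀ : 0 < c₀) (hL₀ : 0 < L) (hL : L ≤ 1) (hp : 0 < p) (hp₁ : p ≤ 1)
    (hf : IsClassicalSolution a c f f' f'') (hB : ∀ t, 0 < t → ∀ r, 0 < r → |f t r| ≤ B)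
    (hf₀ : ∀ t, 0 < t → ContinuousWithinAt (f t) (Ioi 0) 0) (ht : 0 ≤ t) :
    ∫⁻ s in Ioc 0 t, originHolder γ (L / 2) (f s) ^ p
      ≤ ENNReal.ofReal ((1 + |slopeConst δ c₀ C₀ L|) * (1 + t) * B ^ p) := by
  have B_nonneg : 0 ≤ B := (abs_nonneg _).trans (hB 1 one_pos 1 one_pos)
  have larger (B' : ℝ) (hB' : B < B') : ∫⁻ s in Ioc 0 t, originHolder γ (L / 2) (f s) ^ p
      ≤ ENNReal.ofReal ((1 + |slopeConst δ c₀ C₀ L|) * (1 + t) * B' ^ p) := by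
    have B'_pos := B_nonneg.trans_lt hB'
    refine setLIntegral_rpow_le B'_pos hp.le hp₁ (abs_nonneg _) ht ?_
    refine (h.lintegral_originHolder_le hγ hδ hδ₁ hc₀ hL₀ hL B'_pos hf
      (fun t ht r hr => (hB t ht r hr).trans hB'.le) hf₀ ht).trans ?_
    gcongr
    exact le_abs_self _
  have limit := (Real.continuousAt_rpow_const B p (.inr hp.le)).tendsto.const_mul
    ((1 + |slopeConst δ c₀ C₀ L|) * (1 + t))
  refine ge_of_tendsto ((ENNReal.tendsto_ofReal limit).mono_left nhdsWithin_le_nhds)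
    (f := fun B' => ENNReal.ofReal ((1 + |slopeConst δ c₀ C₀ L|) * (1 + t) * B' ^ p))
    (x := 𝓝[>] B) ?_
  filter_upwards [self_mem_nhdsWithin] with B' hB' using larger B' hB'

end Interpolation

section Weight

/-- The weight `r⁻² (r ^ (2α) + κ)`; the diffusivity is comparable to `r ^ (2α) + κ` near `0`. -/
noncomputable def weight (α κ r : ℝ) : ℝ := r ^ (2 * α - 2) + κ * r ^ (-2 : ℝ)

/-- The derivative of `weight α κ`. -/
noncomputable def weightSlope (α κ r : ℝ) : ℝ :=
  (2 * α - 2) * r ^ (2 * α - 2 - 1) + κ * (-2 * r ^ (-2 - 1 : ℝ))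

/-- The second derivative of `weight α κ`. -/
noncomputable def weightCurvature (α κ r : ℝ) : ℝ :=
  (2 * α - 2) * ((2 * α - 2 - 1) * r ^ (2 * α - 2 - 1 - 1))
    + κ * (-2 * ((-2 - 1) * r ^ (-2 - 1 - 1 : ℝ)))

variable {α κ r : ℝ} (hr : 0 < r)
include hr

theorem hasDerivAt_weight : HasDerivAt (weight α κ) (weightSlope α κ r) r :=
  (Real.hasDerivAt_rpow_const (.inl hr.ne')).fun_add
    ((Real.hasDerivAt_rpow_const (.inl hr.ne')).const_mul κ)

theorem hasDerivAt_weightSlope : HasDerivAt (weightSlope α κ) (weightCurvature α κ r) r :=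
  ((Real.hasDerivAt_rpow_const (.inl hr.ne')).const_mul _).fun_add
    (((Real.hasDerivAt_rpow_const (.inl hr.ne')).const_mul _).const_mul κ)

theorem sq_mul_weight : r ^ 2 * weight α κ r = r ^ (2 * α) + κ := by
  rw [weight, Real.rpow_sub hr, Real.rpow_neg hr.le, Real.rpow_two]
  field_simp

theorem mul_weightSlope :
    r * weightSlope α κ r = (2 * α - 2) * r ^ (2 * α - 2) - 2 * (κ * r ^ (-2 : ℝ)) := by
  rw [weightSlope, Real.rpow_sub_one hr.ne', Real.rpow_sub_one hr.ne']
  field_simp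
  ring

theorem sq_mul_weightCurvature :
    r ^ 2 * weightCurvature α κ r
      = (2 * α - 2) * (2 * α - 3) * r ^ (2 * α - 2) + 6 * (κ * r ^ (-2 : ℝ)) := by
  rw [weightCurvature, Real.rpow_sub_one hr.ne', Real.rpow_sub_one hr.ne',
    Real.rpow_sub_one hr.ne', Real.rpow_sub_one hr.ne']
  field_simp
  ring

theorem weight_pos (hκ : 0 ≤ κ) : 0 < weight α κ r := by
  unfold weight
  positivity

theorem abs_mul_weightSlope_le (hα : 0 ≤ α) (hα₁ : α ≤ 1) (hκ : 0 ≤ κ) :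
    |r * weightSlope α κ r| ≤ 2 * weight α κ r := by
  have first := Real.rpow_nonneg hr.le (2 * α - 2)
  have second := mul_nonneg hκ (Real.rpow_nonneg hr.le (-2))
  rw [mul_weightSlope hr, weight, abs_le]
  constructor <;> nlinarith

theorem abs_sq_mul_weightCurvature_le (hα : 0 ≤ α) (hα₁ : α ≤ 1) (hκ : 0 ≤ κ) :
    |r ^ 2 * weightCurvature α κ r| ≤ 6 * weight α κ r := by
  have := Real.rpow_nonneg hr.le (2 * α - 2)
  have := mul_nonneg hκ (Real.rpow_nonneg hr.le (-2))
  have coefficient_nonneg : 0 ≤ (2 * α - 2) * (2 * α - 3) := by nlinarith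
  have coefficient_le : (2 * α - 2) * (2 * α - 3) ≤ 6 := by nlinarith
  rw [sq_mul_weightCurvature hr, abs_of_nonneg (by positivity), weight, mul_add]
  gcongr

theorem rpow_neg_le_rpow_mul_weight (δ : ℝ) (hκ : 0 ≤ κ) :
    r ^ (-(2 - 2 * α - δ)) ≤ r ^ δ * weight α κ r := by
  rw [show -(2 - 2 * α - δ) = δ + (2 * α - 2) by ring, Real.rpow_add hr]
  gcongr
  exact le_add_of_nonneg_right (by positivity)

end Weight

section Coefficients

/-- Bounds on `(0, L]` saying that `bL` and `bN` are of order `r ^ (2α)`, with the margin `c₁` in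
the inequality that makes the slope estimate with exponent `δ` dissipative in dimension `D + 1`. -/
structure HasPowerBounds (α δ D N c₁ L : ℝ) (bL bN : ℝ → ℝ) : Prop where
  le_diffusion : ∀ r ∈ Ioc 0 L, r ^ (2 * α) / 2 ≤ bL r
  diffusion_le : ∀ r ∈ Ioc 0 L, bL r ≤ 2 * r ^ (2 * α)
  abs_drift_le : ∀ r ∈ Ioc 0 L, |bN r| ≤ N * r ^ (2 * α)
  abs_mul_slope_le : ∀ r ∈ Ioc 0 L, |r * deriv bL r| ≤ 3 * r ^ (2 * α)
  dissipation : ∀ r ∈ Ioc 0 L,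
    (δ - 1) * bL r + r * deriv bL r - D * bN r ≤ -(c₁ * r ^ (2 * α))

theorem exists_hasPowerBounds {α β δ D c₁ : ℝ} {bL bN : ℝ → ℝ} (hα : |2 * α| < 3)
    (hbL : Tendsto (fun r => bL r / r ^ (2 * α)) (𝓝[>] 0) (𝓝 1))
    (hbN : Tendsto (fun r => bN r / r ^ (2 * α)) (𝓝[>] 0) (𝓝 β))
    (hbL' : Tendsto (fun r => deriv bL r / r ^ (2 * α - 1)) (𝓝[>] 0) (𝓝 (2 * α)))
    (hc₁ : c₁ < D * β + 1 - 2 * α - δ) :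
    ∃ L, 0 < L ∧ L ≤ 1 ∧ HasPowerBounds α δ D (|β| + 1) c₁ L bL bN := by
  have hbL'_mul : Tendsto (fun r => r * deriv bL r / r ^ (2 * α)) (𝓝[>] 0) (𝓝 (2 * α)) := by
    refine hbL'.congr' ?_
    filter_upwards [self_mem_nhdsWithin] with r (hr : 0 < r)
    rw [Real.rpow_sub_one hr.ne', div_div_eq_mul_div, mul_comm]
  have combination := ((hbL.const_mul (δ - 1)).add hbL'_mul).sub (hbN.const_mul D)
  have small := (hbL.eventually_const_le (by norm_num : (1 / 2 : ℝ) < 1)).and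
    ((hbL.eventually_le_const (by norm_num : (1 : ℝ) < 2)).and
    ((hbN.abs.eventually_le_const (lt_add_one |β|)).and
    ((hbL'_mul.abs.eventually_le_const hα).and
    (combination.eventually_le_const (by linarith : _ < -c₁)))))
  obtain ⟨ρ, hρ : 0 < ρ, bounds⟩ := mem_nhdsGT_iff_exists_Ioc_subset.1 small
  refine ⟨min ρ 1, by positivity, min_le_right ρ 1, ?_⟩
  have scaled {r : ℝ} (hr : r ∈ Ioc 0 (min ρ 1)) :
      0 < r ^ (2 * α) ∧ r ∈ Ioc 0 ρ :=
    ⟨Real.rpow_pos_of_pos hr.1 _, hr.1, hr.2.trans (min_le_left ρ 1)⟩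
  constructor <;> intro r hr <;> obtain ⟨power_pos, hr'⟩ := scaled hr <;>
    obtain ⟨lower, upper, drift, slope, margin⟩ := bounds hr'
  · rwa [le_div_iff₀ power_pos, one_div_mul_eq_div] at lower
  · rwa [div_le_iff₀ power_pos] at upper
  · rwa [abs_div, abs_of_pos power_pos, div_le_iff₀ power_pos] at drift
  · rwa [abs_div, abs_of_pos power_pos, div_le_iff₀ power_pos] at slope
  · rw [← neg_mul, ← div_le_iff₀ power_pos]
    exact le_of_eq_of_le (by ring) margin

/-- The coefficient of `∂ᵣ²` in the equation with degenerate part `bL` and molecular part `κ`. -/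
noncomputable def radialDiffusion (κ : ℝ) (bL : ℝ → ℝ) (r : ℝ) : ℝ := (1 - κ) * bL r + 2 * κ

/-- The coefficient of `∂ᵣ` in the equation with degenerate part `bN` and molecular part `κ`, in
dimension `D + 1`. -/
noncomputable def radialDrift (κ D : ℝ) (bN : ℝ → ℝ) (r : ℝ) : ℝ :=
  ((1 - κ) * bN r + 2 * κ) * (D / r)

theorem mul_radialDrift {r : ℝ} (hr : r ≠ 0) (κ D : ℝ) (bN : ℝ → ℝ) :
    r * radialDrift κ D bN r = D * ((1 - κ) * bN r + 2 * κ) := by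
  rw [radialDrift]
  field_simp

theorem continuousOn_radialDrift {bN : ℝ → ℝ} (hbN : ContinuousOn bN (Ioi 0)) (κ D : ℝ) :
    ContinuousOn (radialDrift κ D bN) (Ioi 0) :=
  ((hbN.const_mul _).add_const _).mul
    (continuousOn_const.div continuousOn_id fun _ hr => ne_of_gt hr)

theorem hasDerivAt_radialDiffusion {bL : ℝ → ℝ} {r : ℝ} (hbL : DifferentiableAt ℝ bL r) (κ : ℝ) :
    HasDerivAt (radialDiffusion κ bL) ((1 - κ) * deriv bL r) r :=
  (hbL.hasDerivAt.const_mul _).add_const _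

theorem two_mul_le_radialDiffusion {κ : ℝ} {bL : ℝ → ℝ} {r : ℝ} (hκ : κ ≤ 1) (hbL : 0 ≤ bL r) :
    2 * κ ≤ radialDiffusion κ bL r :=
  le_add_of_nonneg_left (mul_nonneg (sub_nonneg.2 hκ) hbL)

namespace HasPowerBounds

variable {α δ D N c₁ κ L : ℝ} {bL bN : ℝ → ℝ} (h : HasPowerBounds α δ D N c₁ L bL bN)
include h

section Pointwise

variable {r : ℝ} (hr : r ∈ Ioc 0 L)
include hr

theorem diffusion_nonneg : 0 ≤ bL r :=
  (div_nonneg (Real.rpow_nonneg hr.1.le _) two_pos.le).trans (h.le_diffusion r hr)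

theorem power_add_le_radialDiffusion (hκ₀ : 0 ≤ κ) (hκ : κ ≤ 1 / 2) :
    r ^ (2 * α) + κ ≤ 4 * radialDiffusion κ bL r := by
  have := h.le_diffusion r hr
  have := h.diffusion_nonneg hr
  rw [radialDiffusion]
  nlinarith

theorem radialDiffusion_le (hκ₀ : 0 ≤ κ) : radialDiffusion κ bL r ≤ 2 * (r ^ (2 * α) + κ) := by
  have := h.diffusion_le r hr
  have := mul_nonneg hκ₀ (h.diffusion_nonneg hr)
  rw [radialDiffusion]
  linarith

theorem abs_mul_radialSlope_le (hκ₀ : 0 ≤ κ) (hκ : κ ≤ 1) :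
    |r * ((1 - κ) * deriv bL r)| ≤ 3 * (r ^ (2 * α) + κ) := by
  rw [mul_left_comm, abs_mul, abs_of_nonneg (sub_nonneg.2 hκ)]
  calc (1 - κ) * |r * deriv bL r| ≤ 1 * |r * deriv bL r| := by gcongr; linarith
    _ ≤ 3 * (r ^ (2 * α) + κ) := by linarith [h.abs_mul_slope_le r hr]

theorem abs_mul_radialDrift_le (hD : 0 ≤ D) (hN : 0 ≤ N) (hκ₀ : 0 ≤ κ) (hκ : κ ≤ 1) :
    |r * radialDrift κ D bN r| ≤ D * (N + 2) * (r ^ (2 * α) + κ) := by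
  have power_nonneg := Real.rpow_nonneg hr.1.le (2 * α)
  have drift := h.abs_drift_le r hr
  rw [mul_radialDrift hr.1.ne', abs_mul, abs_of_nonneg hD, mul_assoc]
  gcongr
  calc |(1 - κ) * bN r + 2 * κ| ≤ (1 - κ) * |bN r| + 2 * κ := by
        refine (abs_add_le _ _).trans_eq ?_
        rw [abs_mul, abs_of_nonneg (sub_nonneg.2 hκ), abs_of_nonneg (by positivity : 0 ≤ 2 * κ)]
    _ ≤ 1 * (N * r ^ (2 * α)) + 2 * κ := by gcongr; linarith
    _ ≤ (N + 2) * (r ^ (2 * α) + κ) := by nlinarith [mul_nonneg hN hκ₀]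

theorem radial_dissipation (hδ₁ : δ ≤ 1) (hD : 1 ≤ D) (hc₁ : 0 ≤ c₁) (hκ₀ : 0 ≤ κ)
    (hκ : κ ≤ 1 / 2) :
    (δ - 1) * radialDiffusion κ bL r + r * ((1 - κ) * deriv bL r) - r * radialDrift κ D bN r
      ≤ -(min (c₁ / 2) 1 * (r ^ (2 * α) + κ)) := by
  have power_nonneg := Real.rpow_nonneg hr.1.le (2 * α)
  have degenerate := h.dissipation r hr
  have molecular : 2 * κ * (δ - 1 - D) ≤ 2 * κ * (-1) := by gcongr; linarith
  have min_le : min (c₁ / 2) 1 * (r ^ (2 * α) + κ) ≤ c₁ / 2 * r ^ (2 * α) + 1 * κ := by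
    rw [mul_add]
    gcongr
    exacts [min_le_left _ _, min_le_right _ _]
  calc (δ - 1) * radialDiffusion κ bL r + r * ((1 - κ) * deriv bL r) - r * radialDrift κ D bN r
      = (1 - κ) * ((δ - 1) * bL r + r * deriv bL r - D * bN r) + 2 * κ * (δ - 1 - D) := by
        rw [mul_radialDrift hr.1.ne', radialDiffusion]
        ring
    _ ≤ (1 - κ) * -(c₁ * r ^ (2 * α)) + 2 * κ * (-1) := by gcongr; linarith
    _ ≤ -(min (c₁ / 2) 1 * (r ^ (2 * α) + κ)) := by nlinarith [mul_nonneg hc₁ power_nonneg]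

theorem radialDiffusion_sub_mul_radialDrift_le (hD : 1 ≤ D) (hN : 0 ≤ N) (hκ₀ : 0 < κ)
    (hκ : κ ≤ 1) :
    radialDiffusion κ bL r - r * radialDrift κ D bN r
      ≤ (2 + D * N) / (2 * κ) * r ^ (2 * α) * radialDiffusion κ bL r := by
  have power_nonneg := Real.rpow_nonneg hr.1.le (2 * α)
  have degenerate : bL r - D * bN r ≤ (2 + D * N) * r ^ (2 * α) := by
    nlinarith [h.diffusion_le r hr, neg_le_of_abs_le (h.abs_drift_le r hr)]
  have diffusion_ge := two_mul_le_radialDiffusion hκ (h.diffusion_nonneg hr)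
  calc radialDiffusion κ bL r - r * radialDrift κ D bN r
      = (1 - κ) * (bL r - D * bN r) + 2 * κ * (1 - D) := by
        rw [mul_radialDrift hr.1.ne', radialDiffusion]
        ring
    _ ≤ (1 - κ) * ((2 + D * N) * r ^ (2 * α)) + 2 * κ * 0 := by gcongr; linarith
    _ ≤ 1 * ((2 + D * N) * r ^ (2 * α)) + 2 * κ * 0 := by gcongr; linarith
    _ = (2 + D * N) / (2 * κ) * r ^ (2 * α) * (2 * κ) := by field_simp; ring
    _ ≤ _ := by gcongr

end Pointwise

variable (hα : 0 < α) (hα₁ : α ≤ 1) (hδ₁ : δ ≤ 1) (hD : 1 ≤ D) (hN : 0 ≤ N) (hc₁ : 0 ≤ c₁)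
  (hκ₀ : 0 < κ) (hκ : κ ≤ 1 / 2)
  (hbL : ∀ r, 0 < r → DifferentiableAt ℝ bL r) (hbN : ContinuousOn bN (Ioi 0))
include hα hα₁ hδ₁ hD hN hc₁ hκ₀ hκ hbL hbN

theorem hasCoefficientBounds (hL : L ≤ 1) :
    HasCoefficientBounds δ (min (c₁ / 2) 1) (4 + D * (N + 2)) L
      (radialDiffusion κ bL) (fun r => (1 - κ) * deriv bL r) (radialDrift κ D bN)
      (weight α κ) (weightSlope α κ) (weightCurvature α κ) := by
  have const_nonneg : 0 ≤ D * (N + 2) := by positivity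
  have κ_le : κ ≤ 1 := by linarith
  have base_nonneg {r : ℝ} (hr : r ∈ Ioc 0 L) : 0 ≤ r ^ (2 * α) + κ := by
    have := hr.1
    positivity
  have diffusion_pos {r : ℝ} (hr : r ∈ Ioc 0 L) : 0 < radialDiffusion κ bL r :=
    (by positivity : 0 < 2 * κ).trans_le (two_mul_le_radialDiffusion κ_le (h.diffusion_nonneg hr))
  exact
  { weight_pos r hr := weight_pos hr.1 hκ₀.le
    hasDerivAt_weight r hr := hasDerivAt_weight hr.1
    hasDerivAt_weight_slope r hr := hasDerivAt_weightSlope hr.1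
    abs_mul_weight_slope_le r hr := abs_mul_weightSlope_le hr.1 hα.le hα₁ hκ₀.le
    abs_sq_mul_weight_curvature_le r hr := abs_sq_mul_weightCurvature_le hr.1 hα.le hα₁ hκ₀.le
    sq_mul_weight_le r hr := by
      have := Real.rpow_le_one hr.1.le (hr.2.trans hL) (by positivity : 0 ≤ 2 * α)
      rw [sq_mul_weight hr.1]
      linarith
    hasDerivAt r hr := hasDerivAt_radialDiffusion (hbL r hr.1) κ
    pos r hr := diffusion_pos hr
    continuousOn := (continuousOn_radialDrift hbN κ D).mono fun r hr => hr.1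
    weight_le r hr := by
      rw [sq_mul_weight hr.1]
      nlinarith [h.power_add_le_radialDiffusion hr hκ₀.le hκ, diffusion_pos hr]
    le_weight r hr := by
      rw [sq_mul_weight hr.1]
      nlinarith [h.radialDiffusion_le hr hκ₀.le, base_nonneg hr]
    abs_mul_slope_le r hr := by
      rw [sq_mul_weight hr.1]
      nlinarith [h.abs_mul_radialSlope_le hr hκ₀.le κ_le, base_nonneg hr]
    abs_mul_drift_le r hr := by
      rw [sq_mul_weight hr.1]
      nlinarith [h.abs_mul_radialDrift_le hr (by positivity) hN hκ₀.le κ_le, base_nonneg hr]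
    dissipation r hr := by
      rw [sq_mul_weight hr.1]
      exact h.radial_dissipation hr hδ₁ hD hc₁ hκ₀.le hκ }

theorem isHolderAdmissible (hL : L ≤ 1) (hbL₀ : ∀ r, 0 < r → 0 ≤ bL r) :
    IsHolderAdmissible (2 - 2 * α - δ) δ (min (c₁ / 2) 1) (4 + D * (N + 2)) L
      (radialDiffusion κ bL) (fun r => (1 - κ) * deriv bL r) (radialDrift κ D bN)
      (weight α κ) (weightSlope α κ) (weightCurvature α κ) where
  toHasCoefficientBounds := h.hasCoefficientBounds hα hα₁ hδ₁ hD hN hc₁ hκ₀ hκ hbL hbN hL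
  diffusion_continuousOn r hr :=
    (hasDerivAt_radialDiffusion (hbL r hr) κ).continuousAt.continuousWithinAt
  drift_continuousOn := continuousOn_radialDrift hbN κ D
  diffusion_pos r hr := (by positivity : 0 < 2 * κ).trans_le
    (two_mul_le_radialDiffusion (by linarith) (hbL₀ r hr))
  rpow_neg_le r hr := rpow_neg_le_rpow_mul_weight hr.1 δ hκ₀.le
  exists_le_diffusion := ⟨2 * κ, by positivity, fun r hr =>
    two_mul_le_radialDiffusion (by linarith) (h.diffusion_nonneg hr)⟩
  exists_sub_mul_drift_le := ⟨(2 + D * N) / (2 * κ), 2 * α, by positivity, by positivity,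
    fun r hr => h.radialDiffusion_sub_mul_radialDrift_le hr hD hN hκ₀ (by linarith)⟩

end HasPowerBounds
end Coefficients

end DegenerateParabolic

open DegenerateParabolic in
theorem degenerate_parabolic_regularity_general {D α β δ : ℝ} {bL bN : ℝ → ℝ} (hD : 1 ≤ D)
    (hα : 0 < α) (hδ : 0 < δ) (hδα : δ ≤ 2 - 2 * α) (hδ₁ : δ ≤ 1) (hδβ : δ < D * β + 1 - 2 * α)
    (hbL₀ : ∀ r, 0 < r → 0 ≤ bL r) (hbL : ∀ r, 0 < r → DifferentiableAt ℝ bL r)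
    (hbN : ContinuousOn bN (Ioi 0))
    (hbLlim : Tendsto (fun r => bL r / r ^ (2 * α)) (𝓝[>] 0) (𝓝 1))
    (hbNlim : Tendsto (fun r => bN r / r ^ (2 * α)) (𝓝[>] 0) (𝓝 β))
    (hbL'lim : Tendsto (fun r => deriv bL r / r ^ (2 * α - 1)) (𝓝[>] 0) (𝓝 (2 * α))) :
    ∃ l, 0 < l ∧ ∃ C, 0 < C ∧ ∀ p ∈ Ioc (0 : ℝ) 1, ∀ κ ∈ Ioc (0 : ℝ) (1 / 2),
      ∀ f f' f'' : ℝ → ℝ → ℝ, ∀ B : ℝ,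
        (∀ t, 0 < t → ∀ r, 0 < r → |f t r| ≤ B) →
        ContinuousOn (uncurry f) (Ioi 0 ×ˢ Ioi 0) →
        (∀ t, 0 < t → ContinuousWithinAt (f t) (Ioi 0) 0) →
        (∀ t, 0 < t → ∀ r, 0 < r → HasDerivAt (f t) (f' t r) r) →
        (∀ t, 0 < t → ∀ r, 0 < r → HasDerivAt (f' t) (f'' t r) r) →
        (∀ t, 0 < t → ∀ r, 0 < r → HasDerivAt (fun s => f s r)
          ((1 - κ) * bL r * f'' t r + (1 - κ) * (D / r) * bN r * f' t r
            + 2 * κ * (f'' t r + D / r * f' t r)) t) →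
        ∀ t, 0 ≤ t →
          ∫⁻ s in Ioc 0 t,
              (⨆ r ∈ Ioo 0 l, ENNReal.ofReal (|f s r - f s 0| / r ^ (2 - 2 * α - δ))) ^ p
            ≤ ENNReal.ofReal (C * (1 + t) * B ^ p) := by
  obtain ⟨c₁, hc₁, hc₁β⟩ := exists_between (by linarith : 0 < D * β + 1 - 2 * α - δ)
  obtain ⟨L, hL₀, hL, bounds⟩ := exists_hasPowerBounds
    (by rw [abs_lt]; constructor <;> linarith) hbLlim hbNlim hbL'lim hc₁β
  refine ⟨L / 2, by positivity, _, (by positivity : 0 < 1 + |slopeConst δ (min (c₁ / 2) 1)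
    (4 + D * (|β| + 1 + 2)) L|), fun p hp κ hκ f f' f'' B hB hf hf₀ hf' hf'' heq t ht => ?_⟩
  have admissible := bounds.isHolderAdmissible hα (by linarith) hδ₁ hD (by positivity) hc₁.le
    hκ.1 hκ.2 hbL hbN hL hbL₀
  refine admissible.lintegral_originHolder_rpow_le (by linarith) hδ hδ₁ (by positivity) hL₀ hL
    hp.1 hp.2 ⟨hf', hf'', fun t ht r hr => (heq t ht r hr).congr_deriv ?_, hf⟩ hB hf₀ ht
  rw [radialDiffusion, radialDrift]
  ring

/-- Uniform-in-diffusivity regularity estimate for radial solutions of the degenerate parabolic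
PDE satisfied by two-point self-correlation functions: under the structural assumptions on
`b_L, b_N` (behaving like `r^{2α}` resp. `β r^{2α}` at the origin, with
`β > (2α−1)/(d−1)`), for every `δ ∈ (0, δ_*)` and `ε̄ > 0` there are `ε ∈ (0,ε̄)`, `l > 0`
and `C > 0` such that every bounded solution `f` of
`∂_t f = (1−κ) b_L ∂_r² f + (1−κ) ((d−1)/r) b_N ∂_r f + 2κ(∂_r² f + ((d−1)/r) ∂_r f)`
with Neumann condition `∂_r f(t,0) = 0` satisfies
`∫₀^t (sup_{0<r<l} |f(s,r)−f(s,0)|/r^{2−2α−δ})^{1−ε} ds ≤ C (1+t) (sup|f|)^{1−ε}`. -/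
theorem degenerate_parabolic_regularity (d : ℕ) (hd : 2 ≤ d) (α β : ℝ)
    (hα : α ∈ Ioo (0:ℝ) 1) (hβ : (2*α - 1) / ((d:ℝ) - 1) < β)
    (bL bN : ℝ → ℝ)
    (hbLpos : ∀ r, 0 < r → 0 < bL r)
    (hbdd : ∃ K : ℝ, ∀ r, 0 < r → bL r ≤ K ∧ |bN r| ≤ K)
    (hbLdiff : ∀ r, 0 < r → DifferentiableAt ℝ bL r)
    (hbNdiff : ∀ r, 0 < r → DifferentiableAt ℝ bN r)
    (hbLlim : Tendsto (fun r : ℝ => bL r / r ^ (2*α)) (nhdsWithin 0 (Ioi 0)) (nhds 1))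
    (hbNlim : Tendsto (fun r : ℝ => bN r / r ^ (2*α)) (nhdsWithin 0 (Ioi 0)) (nhds β))
    (hbLdlim : Tendsto (fun r : ℝ => deriv bL r / r ^ (2*α - 1)) (nhdsWithin 0 (Ioi 0))
      (nhds (2*α)))
    (hbNdlim : Tendsto (fun r : ℝ => deriv bN r / r ^ (2*α - 1)) (nhdsWithin 0 (Ioi 0))
      (nhds (2*α*β)))
    (δ : ℝ) (hδ : δ ∈ Ioo (0:ℝ) (min (1 - α) (((d:ℝ) - 1) * β + 1 - 2*α)))
    (εbar : ℝ) (hεbar : 0 < εbar) :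
    ∃ ε ∈ Ioo (0:ℝ) εbar, ∃ l : ℝ, 0 < l ∧ ∃ C : ℝ, 0 < C ∧
      ∀ κ ∈ Ioo (0:ℝ) (1/2),
      ∀ f f' f'' : ℝ → ℝ → ℝ, ∀ B : ℝ,
        (∀ s, 0 < s → ∀ r, 0 ≤ r → |f s r| ≤ B) →
        ContinuousOn (fun p : ℝ × ℝ => f p.1 p.2) (Ioi 0 ×ˢ Ici 0) →
        (∀ t, 0 < t → ∀ r ∈ Ici (0:ℝ), HasDerivWithinAt (f t) (f' t r) (Ici 0) r) →
        (∀ t, 0 < t → ∀ r ∈ Ici (0:ℝ), HasDerivWithinAt (f' t) (f'' t r) (Ici 0) r) →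
        (∀ t, 0 < t → ContinuousOn (f'' t) (Ici 0)) →
        (∀ t, 0 < t → f' t 0 = 0) →
        (∀ t, 0 < t → ∀ r, 0 < r →
          HasDerivAt (fun τ => f τ r)
            ((1 - κ) * bL r * f'' t r + (1 - κ) * (((d:ℝ) - 1) / r) * bN r * f' t r
              + 2 * κ * (f'' t r + (((d:ℝ) - 1) / r) * f' t r)) t) →
        ∀ t, 0 < t →
          (∫⁻ s in Ioc (0:ℝ) t,
              (⨆ r ∈ Ioo (0:ℝ) l,
                  ENNReal.ofReal (|f s r - f s 0| / r ^ (2 - 2*α - δ))) ^ (1 - ε)) ≤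
            ENNReal.ofReal (C * (1 + t) * B ^ (1 - ε)) := by
  obtain ⟨δ_pos, δ_lt⟩ := hδ
  obtain ⟨δ_lt_left, δ_lt_right⟩ := lt_min_iff.1 δ_lt
  have two_le_d : (2 : ℝ) ≤ d := by exact_mod_cast hd
  obtain ⟨l, l_pos, C, C_pos, estimate⟩ := degenerate_parabolic_regularity_general
    (by linarith : 1 ≤ (d : ℝ) - 1) hα.1 δ_pos (by linarith [hα.2]) (by linarith [hα.1]) δ_lt_right
    (fun r hr => (hbLpos r hr).le) hbLdiff
    (fun r hr => (hbNdiff r hr).continuousAt.continuousWithinAt) hbLlim hbNlim hbLdlim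
  have ε_le := min_le_right (εbar / 2) (1 / 2)
  have ε_pos : 0 < min (εbar / 2) (1 / 2) := by positivity
  refine ⟨min (εbar / 2) (1 / 2), ⟨ε_pos, by linarith [min_le_left (εbar / 2) (1 / 2)]⟩,
    l, l_pos, C, C_pos, fun κ hκ f f' f'' B hB hf hf' hf'' _ _ heq t ht => ?_⟩
  exact estimate _ ⟨by linarith, by linarith⟩ κ ⟨hκ.1, hκ.2.le⟩ f f' f'' B
    (fun t ht r hr => hB t ht r hr.le) (hf.mono (prod_mono Subset.rfl Ioi_subset_Ici_self))
    (fun t ht => (hf' t ht 0 self_mem_Ici).continuousWithinAt.mono Ioi_subset_Ici_self)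
    (fun t ht r hr => (hf' t ht r hr.le).hasDerivAt (Ici_mem_nhds hr))
    (fun t ht r hr => (hf'' t ht r hr.le).hasDerivAt (Ici_mem_nhds hr)) heq t ht.le
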